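/- Fix k ∈ {2, 3, 5, 11, 17, 41} and let f(n) = (1/2)·#{(x,y) ∈ ℤ² : x² + xy + k·y² = n} for positive integers n and f(0) = 1. Then, as x → ∞, max_{n ≤ x} log f(f(n)) = (√(log x)/log₂ x)·( c/√2 + O(log₃ x / log₂ x) ), where c = (8·∑_{l=1}^∞ (log(1 + 1/l))²)^{1/2}. -/

import Mathlib

open Filter

/-- The normalized representation-counting function of the binary quadratic form
`x² + xy + k·y²`, with the convention `f(0) = 1`. -/
noncomputable def fForm (k n : ℕ) : ℕ :=
  if n = 0 then 1
  else Nat.card {p : ℤ × ℤ // p.1 ^ 2 + p.1 * p.2 + (k : ℤ) * p.2 ^ 2 = (n : ℤ)} / 2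

/-- The constant `c = (8·∑_{l=1}^∞ (log(1 + 1/l))²)^{1/2}`. -/
noncomputable def cBEFS : ℝ :=
  Real.sqrt (8 * ∑' l : ℕ, (Real.log (1 + 1 / ((l : ℝ) + 1))) ^ 2)



namespace Pf
open Complex

/-- interpolation bound -/
lemma cpow_sub_bound (s : ℂ) (hs : 0 < s.re) (a u : ℝ) (ha : 1 ≤ a) (hu : a ≤ u) (hu1 : u ≤ a + 1)
    (θ : ℝ) (h0 : 0 ≤ θ) (h1 : θ ≤ 1) :
    ‖(a : ℂ) ^ (-s) - (u : ℂ) ^ (-s)‖ ≤ 2 * ‖s‖ ^ θ * a ^ (-s.re - θ) := by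
  have ha0 : 0 < a := by linarith
  have hu0 : 0 < u := by linarith
  have hs0 : s ≠ 0 := by rintro rfl; simp at hs
  have hns : 0 < ‖s‖ := norm_pos_iff.mpr hs0
  -- first bound
  have b1 : ‖(a : ℂ) ^ (-s) - (u : ℂ) ^ (-s)‖ ≤ 2 * a ^ (-s.re) := by
    refine (norm_sub_le _ _).trans ?_
    rw [norm_cpow_eq_rpow_re_of_pos ha0, norm_cpow_eq_rpow_re_of_pos hu0]
    have : u ^ (-s).re ≤ a ^ (-s).re := by
      apply Real.rpow_le_rpow_of_nonpos ha0 hu; simp; linarith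
    simp only [neg_re] at *
    linarith
  have b2 : ‖(a : ℂ) ^ (-s) - (u : ℂ) ^ (-s)‖ ≤ ‖s‖ * a ^ (-s.re - 1) := by
    have hd : ∀ x ∈ Set.Icc a u, HasDerivWithinAt (fun x : ℝ => (x : ℂ) ^ (-s))
        ((-s) * (x : ℂ) ^ (-s - 1)) (Set.Icc a u) x := by
      intro x hx
      have hx0 : 0 < x := lt_of_lt_of_le ha0 hx.1
      exact (hasDerivAt_ofReal_cpow_const (x := x) hx0.ne' (r := -s)
        (neg_ne_zero.mpr hs0)).hasDerivWithinAt
    have hb : ∀ x ∈ Set.Icc a u, ‖(-s) * (x : ℂ) ^ (-s - 1)‖ ≤ ‖s‖ * a ^ (-s.re - 1) := by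
      intro x hx
      have hx0 : 0 < x := lt_of_lt_of_le ha0 hx.1
      rw [norm_mul, norm_neg, norm_cpow_eq_rpow_re_of_pos hx0]
      gcongr
      simp only [sub_re, neg_re, one_re]
      exact Real.rpow_le_rpow_of_nonpos ha0 hx.1 (by linarith)
    have := (convex_Icc a u).norm_image_sub_le_of_norm_hasDerivWithin_le hd hb
      (Set.right_mem_Icc.mpr hu) (Set.left_mem_Icc.mpr hu)
    refine this.trans ?_
    have h3 : ‖a - u‖ ≤ 1 := by rw [Real.norm_eq_abs, abs_le]; constructor <;> linarith
    have h4 : 0 ≤ ‖s‖ * a ^ (-s.re - 1) := by positivity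
    nlinarith
  set N := ‖(a : ℂ) ^ (-s) - (u : ℂ) ^ (-s)‖ with hN
  have hN0 : 0 ≤ N := norm_nonneg _
  rcases hN0.eq_or_lt with h | hpos
  · rw [← h]; positivity
  calc N = N ^ (1 - θ) * N ^ θ := by rw [← Real.rpow_add hpos]; simp
    _ ≤ (2 * a ^ (-s.re)) ^ (1 - θ) * (‖s‖ * a ^ (-s.re - 1)) ^ θ := by
        gcongr
    _ = 2 ^ (1 - θ) * ‖s‖ ^ θ * (a ^ (-s.re * (1 - θ)) * a ^ ((-s.re - 1) * θ)) := by
        rw [Real.mul_rpow (by norm_num) (by positivity), Real.mul_rpow (by positivity) (by positivity),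
          ← Real.rpow_mul ha0.le, ← Real.rpow_mul ha0.le]; ring
    _ = 2 ^ (1 - θ) * ‖s‖ ^ θ * a ^ (-s.re - θ) := by
        rw [← Real.rpow_add ha0]; ring_nf
    _ ≤ 2 * ‖s‖ ^ θ * a ^ (-s.re - θ) := by
        gcongr
        calc (2:ℝ) ^ (1 - θ) ≤ 2 ^ (1:ℝ) := Real.rpow_le_rpow_of_exponent_le (by norm_num) (by linarith)
          _ = 2 := by simp

/-- general: series with terms dominated on compacts. -/
lemma summable_shift (e : ℝ) (he : 1 < e) : Summable (fun n : ℕ => ((n + 1 : ℝ)) ^ (-e)) := by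
  have := (summable_nat_add_iff 1).mpr (Real.summable_nat_rpow.mpr (show -e < -1 by linarith))
  simpa using this

/-- locally uniform differentiability -/
lemma diff_series (g : ℕ → ℂ → ℂ) (U : Set ℂ) (hU : IsOpen U) (hre : ∀ s ∈ U, 0 < s.re)
    (hd : ∀ n, DifferentiableOn ℂ (g n) U) (K : ℝ) (hK : 0 ≤ K)
    (hb : ∀ n, ∀ s ∈ U, ‖g n s‖ ≤ K * ‖s‖ * ((n + 1 : ℝ)) ^ (-s.re - 1)) :
    DifferentiableOn ℂ (fun s => ∑' n, g n s) U := by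
  intro s hs
  have hσ := hre s hs
  set σ := s.re
  let V : Set ℂ := U ∩ ({z | σ / 2 < z.re} ∩ Metric.ball s 1)
  have hV : IsOpen V := hU.inter ((isOpen_lt continuous_const continuous_re).inter Metric.isOpen_ball)
  have hsV : s ∈ V := ⟨hs, by simp only [Set.mem_ofPred_eq]; show σ / 2 < σ; linarith, Metric.mem_ball_self one_pos⟩
  have key : DifferentiableOn ℂ (fun s => ∑' n, g n s) V := by
    apply differentiableOn_tsum_of_summable_norm
      (u := fun n : ℕ => K * (‖s‖ + 1) * ((n + 1 : ℝ)) ^ (-(σ / 2 + 1)))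
    · exact (summable_shift _ (by linarith)).mul_left _
    · intro n; exact (hd n).mono Set.inter_subset_left
    · exact hV
    · intro n w hw
      refine (hb n w hw.1).trans ?_
      have h1 : ‖w‖ ≤ ‖s‖ + 1 := by
        have := hw.2.2
        rw [Metric.mem_ball, dist_eq_norm] at this
        have := norm_sub_norm_le w s
        linarith
      have h2 : σ / 2 < w.re := hw.2.1
      have : ((n + 1 : ℝ)) ^ (-w.re - 1) ≤ ((n + 1 : ℝ)) ^ (-(σ / 2 + 1)) := by
        apply Real.rpow_le_rpow_of_exponent_le
        · have : (0:ℝ) ≤ n := n.cast_nonneg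
          linarith
        · linarith
      gcongr
  exact (key.differentiableAt (hV.mem_nhds hsV)).differentiableWithinAt

end Pf


namespace Pf
open Complex Filter

noncomputable def gz (n : ℕ) (s : ℂ) : ℂ :=
  ((n + 1 : ℝ) : ℂ) ^ (-s) - (((n + 1 + 1 : ℝ) : ℂ) ^ (-s + 1) - ((n + 1 : ℝ) : ℂ) ^ (-s + 1)) / (-s + 1)

lemma gz_bound (n : ℕ) (s : ℂ) (hs : 0 < s.re) (hs1 : s ≠ 1) (θ : ℝ) (h0 : 0 ≤ θ) (h1 : θ ≤ 1) :
    ‖gz n s‖ ≤ 2 * ‖s‖ ^ θ * (n + 1 : ℝ) ^ (-s.re - θ) := by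
  have hn : (0:ℝ) ≤ n := n.cast_nonneg
  set a : ℝ := n + 1 with ha
  have ha1 : 1 ≤ a := by linarith
  have h00 : (0:ℝ) ∉ Set.uIcc a (a + 1) := by
    rw [Set.uIcc_of_le (by linarith)]; intro h; linarith [h.1]
  have hI : gz n s = ∫ u in a..(a+1), ((a:ℂ) ^ (-s) - (u : ℂ) ^ (-s)) := by
    rw [intervalIntegral.integral_sub]
    · rw [integral_cpow]
      · simp [gz, ← ha]
      · right
        refine ⟨fun h => hs1 (neg_injective h), h00⟩
    · simp
    · apply intervalIntegral.intervalIntegrable_cpow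
      right; exact h00
  rw [hI]
  have := intervalIntegral.norm_integral_le_of_norm_le_const (a := a) (b := a + 1)
    (f := fun u : ℝ => ((a:ℂ) ^ (-s) - (u : ℂ) ^ (-s))) (C := 2 * ‖s‖ ^ θ * a ^ (-s.re - θ)) ?_
  · simpa using this
  · intro u hu
    rw [Set.uIoc_of_le (by linarith)] at hu
    exact cpow_sub_bound s hs a u ha1 hu.1.le hu.2 θ h0 h1

lemma gz_bound1 (n : ℕ) (s : ℂ) (hs : 0 < s.re) (hs1 : s ≠ 1) :
    ‖gz n s‖ ≤ 2 * ‖s‖ * (n + 1 : ℝ) ^ (-s.re - 1) := by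
  simpa using gz_bound n s hs hs1 1 zero_le_one le_rfl

lemma gz_summable (s : ℂ) (hs : 0 < s.re) (hs1 : s ≠ 1) : Summable (fun n => gz n s) := by
  apply Summable.of_norm_bounded (g := fun n : ℕ => 2 * ‖s‖ * (n + 1 : ℝ) ^ (-(s.re + 1)))
  · exact (summable_shift _ (by linarith)).mul_left _
  · intro n
    have := gz_bound1 n s hs hs1
    rwa [show -s.re - 1 = -(s.re + 1) by ring] at this

lemma tendsto_cpow_zero (s : ℂ) (hs : s.re < 0) :
    Tendsto (fun n : ℕ => ((n + 1 : ℝ) : ℂ) ^ s) atTop (nhds 0) := by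
  rw [tendsto_zero_iff_norm_tendsto_zero]
  have : (fun n : ℕ => ‖((n + 1 : ℝ) : ℂ) ^ s‖) = fun n : ℕ => (((n + 1 : ℕ) : ℝ)) ^ (-(-s.re)) := by
    ext n
    rw [norm_cpow_eq_rpow_re_of_pos (by positivity)]; simp
  rw [this]
  exact ((tendsto_rpow_neg_atTop (show 0 < -s.re by linarith)).comp tendsto_natCast_atTop_atTop).comp
    (tendsto_add_atTop_nat 1)

lemma zeta_eq_of_one_lt (s : ℂ) (hs : 1 < s.re) :
    riemannZeta s = 1 / (s - 1) + ∑' n, gz n s := by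
  have hs1 : s ≠ 1 := by rintro rfl; simp at hs
  have hA : HasSum (fun n : ℕ => ((n + 1 : ℝ) : ℂ) ^ (-s)) (riemannZeta s) := by
    rw [zeta_eq_tsum_one_div_nat_add_one_cpow hs]
    have h1 : Summable (fun n : ℕ => ((n + 1 : ℝ) : ℂ) ^ (-s)) := by
      apply Summable.of_norm_bounded (g := fun n : ℕ => ((n:ℝ) + 1) ^ (-s.re))
      · exact summable_shift _ hs
      · intro n
        rw [norm_cpow_eq_rpow_re_of_pos (by positivity)]; simp
    convert h1.hasSum using 1
    congr 1; ext n; rw [cpow_neg]; simp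
  have hB := (gz_summable s (by linarith) hs1).hasSum
  have hC := hA.sub hB
  have hlim := hC.tendsto_sum_nat
  have hlim2 : Tendsto (fun N : ℕ => ∑ i ∈ Finset.range N, (((i + 1 : ℝ) : ℂ) ^ (-s) - gz i s)) atTop
      (nhds ((0 - 1) / (-s + 1))) := by
    have : ∀ N : ℕ, ∑ i ∈ Finset.range N, (((i + 1 : ℝ) : ℂ) ^ (-s) - gz i s)
        = (((N + 1 : ℝ) : ℂ) ^ (-s + 1) - 1) / (-s + 1) := by
      intro N
      have h1 := Finset.sum_range_sub (fun n : ℕ => ((n + 1 : ℝ) : ℂ) ^ (-s + 1)) N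
      simp only [CharP.cast_eq_zero, zero_add, ofReal_one, one_cpow] at h1
      rw [← h1, Finset.sum_div]
      apply Finset.sum_congr rfl
      intro i _
      simp [gz]
    simp_rw [this]
    exact ((tendsto_cpow_zero (-s + 1) (by simp; linarith)).sub_const 1).div_const _
  have := tendsto_nhds_unique hlim hlim2
  have h3 : (0 - 1) / (-s + 1) = 1 / (s - 1) := by
    have : s - 1 ≠ 0 := sub_ne_zero.mpr hs1
    have h' : -s + 1 ≠ 0 := by intro h; apply this; linear_combination -h
    field_simp; ring
  rw [h3] at this
  linear_combination this

lemma zeta_eq_upper (s : ℂ) (hs : 0 < s.re) (hi : 0 < s.im) :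
    riemannZeta s = 1 / (s - 1) + ∑' n, gz n s := by
  let U : Set ℂ := {z | 0 < z.re} ∩ {z | 0 < z.im}
  have hU : IsOpen U := (isOpen_lt continuous_const continuous_re).inter
    (isOpen_lt continuous_const continuous_im)
  have hne : ∀ z ∈ U, z ≠ 1 := by
    rintro z hz rfl
    have : 0 < (1:ℂ).im := hz.2
    simp at this
  have hconv : Convex ℝ U := (convex_halfSpace_re_gt 0).inter (convex_halfSpace_im_gt 0)
  have d1 : DifferentiableOn ℂ riemannZeta U := fun z hz =>
    (differentiableAt_riemannZeta (hne z hz)).differentiableWithinAt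
  have d2 : DifferentiableOn ℂ (fun s => 1 / (s - 1) + ∑' n, gz n s) U := by
    apply DifferentiableOn.add
    · intro z hz
      have : z - 1 ≠ 0 := sub_ne_zero.mpr (hne z hz)
      apply DifferentiableAt.differentiableWithinAt
      fun_prop (disch := exact this)
    · apply diff_series gz U hU (fun z hz => hz.1) ?_ 2 (by norm_num)
      · intro n z hz; exact gz_bound1 n z hz.1 (hne z hz)
      · intro n z hz
        have h1 : -z + 1 ≠ 0 := by
          intro h; apply hne z hz; linear_combination -h
        have h2 : ((n + 1 : ℝ) : ℂ) ≠ 0 := by exact_mod_cast (by positivity : (n + 1 : ℝ) ≠ 0)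
        have h3 : ((n + 1 + 1 : ℝ) : ℂ) ≠ 0 := by exact_mod_cast (by positivity : (n + 1 + 1 : ℝ) ≠ 0)
        apply DifferentiableAt.differentiableWithinAt
        unfold gz
        apply DifferentiableAt.sub
        · exact (differentiableAt_id.neg).const_cpow (Or.inl h2)
        · refine DifferentiableAt.fun_div ?_ ?_ h1
          · exact ((differentiableAt_id.neg.add_const 1).const_cpow (Or.inl h3)).sub
              ((differentiableAt_id.neg.add_const 1).const_cpow (Or.inl h2))
          · fun_prop
  have a1 := d1.analyticOnNhd hU
  have a2 := d2.analyticOnNhd hU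
  have h2U : (2 + I : ℂ) ∈ U := ⟨by simp, by simp⟩
  refine a1.eqOn_of_preconnected_of_eventuallyEq a2 hconv.isPreconnected h2U ?_ ⟨hs, hi⟩
  have : {z : ℂ | 1 < z.re} ∈ nhds (2 + I : ℂ) :=
    (isOpen_lt continuous_const continuous_re).mem_nhds (by simp)
  filter_upwards [this] with z hz
  exact zeta_eq_of_one_lt z hz

noncomputable def KS : ℝ := ∑' n : ℕ, ((n:ℝ) + 1) ^ (-(41/40 : ℝ))

lemma tsum_bound (g : ℕ → ℂ) (s : ℂ) (hs : 39/40 ≤ s.re) (K : ℝ) (hK : 0 ≤ K)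
    (hg : ∀ n, ‖g n‖ ≤ K * ‖s‖ ^ (1/20 : ℝ) * (n + 1 : ℝ) ^ (-s.re - (1/20 : ℝ))) :
    ‖∑' n, g n‖ ≤ K * KS * ‖s‖ ^ (1/20 : ℝ) := by
  have hsum := summable_shift (41/40 : ℝ) (by norm_num)
  have := tsum_of_norm_bounded (f := g) (g := fun n : ℕ => K * ‖s‖ ^ (1/20 : ℝ) * ((n:ℝ) + 1) ^ (-(41/40 : ℝ)))
    (hsum.mul_left _).hasSum ?_
  · rw [tsum_mul_left] at this
    unfold KS; linarith
  · intro n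
    refine (hg n).trans ?_
    have : (0:ℝ) ≤ n := n.cast_nonneg
    gcongr
    · linarith
    · linarith

lemma KS_nonneg : 0 ≤ KS := tsum_nonneg fun n => by positivity

lemma norm_le_im (s : ℂ) (h0 : 0 ≤ s.re) (h3 : s.re ≤ 3) (hi : 1/2 ≤ |s.im|) :
    ‖s‖ ^ (1/20 : ℝ) ≤ 7 * |s.im| ^ (1/20 : ℝ) := by
  have h1 : ‖s‖ ≤ 7 * |s.im| := by
    have := norm_le_abs_re_add_abs_im s
    rw [abs_of_nonneg h0] at this
    linarith
  calc ‖s‖ ^ (1/20 : ℝ) ≤ (7 * |s.im|) ^ (1/20 : ℝ) := by gcongr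
    _ = 7 ^ (1/20 : ℝ) * |s.im| ^ (1/20 : ℝ) := Real.mul_rpow (by norm_num) (abs_nonneg _)
    _ ≤ 7 ^ (1 : ℝ) * |s.im| ^ (1/20 : ℝ) := by gcongr <;> norm_num
    _ = _ := by simp

lemma zeta_bound : ∃ C : ℝ, 0 < C ∧ ∀ s : ℂ, 39/40 ≤ s.re → s.re ≤ 3 → 1/2 ≤ |s.im| →
    ‖riemannZeta s‖ ≤ C * |s.im| ^ (1/20 : ℝ) := by
  have key : ∀ s : ℂ, 39/40 ≤ s.re → s.re ≤ 3 → 1/2 ≤ s.im →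
      ‖riemannZeta s‖ ≤ (4 + 2 * KS * 7) * |s.im| ^ (1/20 : ℝ) := by
    intro s h1 h3 hi
    have hs1 : s ≠ 1 := by rintro rfl; norm_num at hi
    rw [zeta_eq_upper s (by linarith) (by linarith)]
    have ha : |s.im| = s.im := abs_of_nonneg (by linarith)
    have hp : (1/2 : ℝ) ≤ |s.im| ^ (1/20 : ℝ) := by
      calc (1/2 : ℝ) = (1/2 : ℝ) ^ (1 : ℝ) := by simp
        _ ≤ (1/2 : ℝ) ^ (1/20 : ℝ) := by
          apply Real.rpow_le_rpow_of_exponent_ge <;> norm_num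
        _ ≤ _ := by rw [ha]; gcongr
    have b1 : ‖1 / (s - 1)‖ ≤ 2 := by
      rw [norm_div, norm_one, div_le_iff₀ (norm_pos_iff.mpr (sub_ne_zero.mpr hs1))]
      have := abs_im_le_norm (s - 1)
      simp at this
      rw [ha] at this; linarith
    have b2 := tsum_bound (fun n => gz n s) s h1 2 (by norm_num) (fun n =>
      gz_bound n s (by linarith) hs1 (1/20) (by norm_num) (by norm_num))
    have b3 := norm_le_im s (by linarith) h3 (by rw [ha]; exact hi)
    refine (norm_add_le _ _).trans ?_
    have := KS_nonneg
    nlinarith [mul_le_mul_of_nonneg_left b3 (show 0 ≤ 2 * KS by linarith)]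
  refine ⟨4 + 2 * KS * 7, by have := KS_nonneg; linarith, ?_⟩
  intro s h1 h3 hi
  rcases le_or_gt 0 s.im with h | h
  · rw [abs_of_nonneg h] at hi; exact key s h1 h3 hi
  · have := key ((starRingEnd ℂ) s) (by simpa using h1) (by simpa using h3)
      (by rw [abs_of_neg h] at hi; simpa using hi)
    rw [riemannZeta_conj] at this
    simpa using this

end Pf


namespace Pf
open Complex Filter

section
variable {q : ℕ} [NeZero q] (χ : DirichletCharacter ℂ q)

lemma char_sum_block (hχ : χ ≠ 1) : ∑ m ∈ Finset.range q, χ (m : ZMod q) = 0 := by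
  have h := MulChar.sum_eq_zero_of_ne_one hχ
  rw [← h]
  refine Finset.sum_bij (fun (m : ℕ) _ => (m : ZMod q)) (by simp) ?_ ?_ (by simp)
  · intro a ha b hb hab
    rw [Finset.mem_range] at ha hb
    have := congrArg ZMod.val hab
    rwa [ZMod.val_natCast_of_lt ha, ZMod.val_natCast_of_lt hb] at this
  · intro b _
    exact ⟨b.val, by simpa using ZMod.val_lt b, by simp⟩

lemma char_sum_bound0 (hχ : χ ≠ 1) (N : ℕ) : ‖∑ m ∈ Finset.range N, χ (m : ZMod q)‖ ≤ q := by
  induction N using Nat.strong_induction_on with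
  | _ N ih =>
    rcases le_or_gt q N with h | h
    · obtain ⟨M, rfl⟩ := Nat.exists_eq_add_of_le h
      rw [Finset.sum_range_add, char_sum_block χ hχ, zero_add]
      simp only [Nat.cast_add, CharP.cast_eq_zero, zero_add]
      exact ih M (by have := NeZero.pos q; omega)
    · refine (norm_sum_le _ _).trans ?_
      calc ∑ m ∈ Finset.range N, ‖χ (m : ZMod q)‖ ≤ ∑ m ∈ Finset.range N, (1:ℝ) :=
            Finset.sum_le_sum fun i _ => DirichletCharacter.norm_le_one χ _
        _ = N := by simp
        _ ≤ q := by exact_mod_cast h.le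

noncomputable def SX (N : ℕ) : ℂ := ∑ m ∈ Finset.range N, χ ((m + 1 : ℕ) : ZMod q)

lemma SX_bound (hχ : χ ≠ 1) (N : ℕ) : ‖SX χ N‖ ≤ q + 1 := by
  have h := Finset.sum_range_succ' (fun m : ℕ => χ (m : ZMod q)) N
  have h1 : SX χ N = ∑ m ∈ Finset.range (N + 1), χ (m : ZMod q) - χ ((0:ℕ) : ZMod q) := by
    rw [h]; simp [SX]
  rw [h1]
  refine (norm_sub_le _ _).trans ?_
  exact add_le_add (char_sum_bound0 χ hχ _) (DirichletCharacter.norm_le_one χ _)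

noncomputable def gl (n : ℕ) (s : ℂ) : ℂ :=
  SX χ (n + 1) * (((n + 1 : ℝ) : ℂ) ^ (-s) - ((n + 1 + 1 : ℝ) : ℂ) ^ (-s))

lemma gl_bound (hχ : χ ≠ 1) (n : ℕ) (s : ℂ) (hs : 0 < s.re) (θ : ℝ) (h0 : 0 ≤ θ) (h1 : θ ≤ 1) :
    ‖gl χ n s‖ ≤ (2 * (q + 1)) * ‖s‖ ^ θ * (n + 1 : ℝ) ^ (-s.re - θ) := by
  have hn : (0:ℝ) ≤ n := n.cast_nonneg
  unfold gl
  rw [norm_mul]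
  have := cpow_sub_bound s hs (n + 1) (n + 1 + 1) (by linarith) (by linarith) le_rfl θ h0 h1
  calc _ ≤ (q + 1 : ℝ) * (2 * ‖s‖ ^ θ * (n + 1 : ℝ) ^ (-s.re - θ)) := by
        gcongr
        exact SX_bound χ hχ _
    _ = _ := by ring

lemma gl_bound1 (hχ : χ ≠ 1) (n : ℕ) (s : ℂ) (hs : 0 < s.re) :
    ‖gl χ n s‖ ≤ (2 * (q + 1)) * ‖s‖ * (n + 1 : ℝ) ^ (-s.re - 1) := by
  simpa using gl_bound χ hχ n s hs 1 zero_le_one le_rfl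

lemma L_eq_of_one_lt (hχ : χ ≠ 1) (s : ℂ) (hs : 1 < s.re) :
    χ.LFunction s = ∑' n, gl χ n s := by
  have hA : HasSum (fun n : ℕ => χ ((n + 1 : ℕ) : ZMod q) * ((n + 1 : ℝ) : ℂ) ^ (-s)) (χ.LFunction s) := by
    rw [DirichletCharacter.LFunction_eq_LSeries χ hs]
    have h1 := (DirichletCharacter.LSeriesSummable_of_one_lt_re χ hs).hasSum
    have h2 := (hasSum_nat_add_iff' 1).mpr h1
    simp only [Finset.range_one, Finset.sum_singleton, LSeries.term_zero, sub_zero] at h2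
    unfold LSeries
    have h3 : (fun n : ℕ => χ ((n + 1 : ℕ) : ZMod q) * ((n + 1 : ℝ) : ℂ) ^ (-s)) =
        fun n : ℕ => LSeries.term (fun n => χ (n : ZMod q)) s (n + 1) := by
      funext n
      rw [LSeries.term_of_ne_zero (by omega), cpow_neg]
      push_cast; rfl
    rw [h3]; exact h2
  have hS : Summable (fun n => gl χ n s) := by
    apply Summable.of_norm_bounded (g := fun n : ℕ => (2 * (q + 1)) * ‖s‖ * (n + 1 : ℝ) ^ (-(s.re + 1)))
    · exact (summable_shift _ (by linarith)).mul_left _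
    · intro n
      have := gl_bound1 χ hχ n s (by linarith)
      rwa [show -s.re - 1 = -(s.re + 1) by ring] at this
  have hlim := hS.hasSum.tendsto_sum_nat
  have hlimA := hA.tendsto_sum_nat
  have hz : Tendsto (fun N : ℕ => SX χ N * ((N + 1 : ℝ) : ℂ) ^ (-s)) atTop (nhds 0) := by
    have h1 := tendsto_cpow_zero (-s) (by simp; linarith)
    rw [tendsto_zero_iff_norm_tendsto_zero] at h1 ⊢
    have h2 := h1.const_mul ((q : ℝ) + 1)
    rw [mul_zero] at h2
    refine squeeze_zero (fun _ => norm_nonneg _) (fun N => ?_) h2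
    rw [norm_mul]
    gcongr
    exact SX_bound χ hχ _
  have hid : ∀ N : ℕ, ∑ i ∈ Finset.range N, gl χ i s =
      ∑ i ∈ Finset.range N, χ ((i + 1 : ℕ) : ZMod q) * ((i + 1 : ℝ) : ℂ) ^ (-s)
        - SX χ N * ((N + 1 : ℝ) : ℂ) ^ (-s) := by
    intro N
    induction N with
    | zero => simp [SX]
    | succ N ih =>
      rw [Finset.sum_range_succ, ih, Finset.sum_range_succ]
      have : SX χ (N + 1) = SX χ N + χ ((N + 1 : ℕ) : ZMod q) := by
        simp [SX, Finset.sum_range_succ]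
      unfold gl
      rw [this]
      push_cast
      ring
  simp_rw [hid] at hlim
  have := tendsto_nhds_unique hlim (hlimA.sub hz)
  rw [this, sub_zero]

lemma L_eq (hχ : χ ≠ 1) (s : ℂ) (hs : 0 < s.re) : χ.LFunction s = ∑' n, gl χ n s := by
  let U : Set ℂ := {z | 0 < z.re}
  have hU : IsOpen U := isOpen_lt continuous_const continuous_re
  have hconv : Convex ℝ U := convex_halfSpace_re_gt 0
  have d1 : DifferentiableOn ℂ χ.LFunction U := (DirichletCharacter.differentiable_LFunction hχ).differentiableOn
  have d2 : DifferentiableOn ℂ (fun s => ∑' n, gl χ n s) U := by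
    apply diff_series (gl χ) U hU (fun z hz => hz) ?_ (2 * (q + 1)) (by positivity)
    · intro n z hz; exact gl_bound1 χ hχ n z hz
    · intro n z hz
      have h2 : ((n + 1 : ℝ) : ℂ) ≠ 0 := by exact_mod_cast (by positivity : (n + 1 : ℝ) ≠ 0)
      have h3 : ((n + 1 + 1 : ℝ) : ℂ) ≠ 0 := by exact_mod_cast (by positivity : (n + 1 + 1 : ℝ) ≠ 0)
      apply DifferentiableAt.differentiableWithinAt
      unfold gl
      exact (((differentiableAt_id.neg).const_cpow (Or.inl h2)).sub
        ((differentiableAt_id.neg).const_cpow (Or.inl h3))).const_mul _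
  have a1 := d1.analyticOnNhd hU
  have a2 := d2.analyticOnNhd hU
  have h2U : (2 : ℂ) ∈ U := by show (0:ℝ) < (2:ℂ).re; simp
  refine a1.eqOn_of_preconnected_of_eventuallyEq a2 hconv.isPreconnected h2U ?_ hs
  have : {z : ℂ | 1 < z.re} ∈ nhds (2 : ℂ) :=
    (isOpen_lt continuous_const continuous_re).mem_nhds (by simp)
  filter_upwards [this] with z hz
  exact L_eq_of_one_lt χ hχ z hz

lemma L_bound (hχ : χ ≠ 1) : ∃ C : ℝ, 0 < C ∧ ∀ s : ℂ, 39/40 ≤ s.re → s.re ≤ 3 → 1/2 ≤ |s.im| →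
    ‖χ.LFunction s‖ ≤ C * |s.im| ^ (1/20 : ℝ) := by
  refine ⟨(2 * (q + 1)) * KS * 7 + 1, by have := KS_nonneg; positivity, ?_⟩
  intro s h1 h3 hi
  rw [L_eq χ hχ s (by linarith)]
  have b2 := tsum_bound (fun n => gl χ n s) s h1 (2 * (q + 1)) (by positivity) (fun n =>
      gl_bound χ hχ n s (by linarith) (1/20) (by norm_num) (by norm_num))
  have b3 := norm_le_im s (by linarith) h3 hi
  have h0 : (0:ℝ) ≤ |s.im| ^ (1/20 : ℝ) := by positivity
  have := KS_nonneg
  have h4 : 0 ≤ (2 * ((q:ℝ) + 1)) * KS := by positivity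
  nlinarith [mul_le_mul_of_nonneg_left b3 h4]

end
end Pf


namespace Pf
open Complex Filter

lemma abs_logderiv (g : ℂ → ℂ) (hd : ∀ s, s ≠ 1 → DifferentiableAt ℂ g s)
    (C : ℝ) (hC0 : 0 < C)
    (hC : ∀ s : ℂ, 39/40 ≤ s.re → s.re ≤ 3 → 1/2 ≤ |s.im| → ‖g s‖ ≤ C * |s.im| ^ (1/20 : ℝ))
    (c : ℝ) (hc0 : 0 < c)
    (hc : ∀ s : ℂ, 1 < s.re → s.re ≤ 2 → 1 ≤ |s.im| →
      c ^ 4 * (s.re - 1) ^ 3 ≤ ‖g s‖ ^ 4 * |s.im| ^ (1/20 : ℝ)) :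
    ∃ K : ℝ, 0 < K ∧ ∀ s : ℂ, 1 < s.re → s.re ≤ 2 → 1 ≤ |s.im| →
      ‖deriv (fun z => deriv g z / g z) s‖ ≤ K * |s.im| ^ (1/2 : ℝ) ∧
      ‖deriv g s‖ ≤ K * |s.im| ^ (1/2 : ℝ) := by
  -- bound on spheres
  have hsph : ∀ s : ℂ, 1 ≤ s.re → s.re ≤ 2 → 1 ≤ |s.im| → ∀ z ∈ Metric.sphere s (1/40),
      ‖g z‖ ≤ 2 * C * |s.im| ^ (1/20 : ℝ) := by
    intro s h1 h2 h3 z hz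
    rw [mem_sphere_iff_norm] at hz
    have hr := abs_re_le_norm (z - s)
    have hi := abs_im_le_norm (z - s)
    rw [hz, sub_re, abs_le] at hr
    rw [hz, sub_im] at hi
    have hi1 : |z.im| ≤ |s.im| + 1/40 := by
      have := abs_sub_abs_le_abs_sub z.im s.im; linarith
    have hi2 : |s.im| ≤ |z.im| + 1/40 := by
      have := abs_sub_abs_le_abs_sub s.im z.im; rw [abs_sub_comm] at this; linarith
    refine (hC z (by linarith) (by linarith) (by linarith)).trans ?_
    have : |z.im| ^ (1/20 : ℝ) ≤ 2 * |s.im| ^ (1/20 : ℝ) := by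
      calc |z.im| ^ (1/20 : ℝ) ≤ (2 * |s.im|) ^ (1/20 : ℝ) := by gcongr; linarith
        _ = 2 ^ (1/20 : ℝ) * |s.im| ^ (1/20 : ℝ) := Real.mul_rpow (by norm_num) (abs_nonneg _)
        _ ≤ 2 ^ (1 : ℝ) * |s.im| ^ (1/20 : ℝ) := by gcongr <;> norm_num
        _ = _ := by simp
    nlinarith
  have hdc : ∀ s : ℂ, 1 ≤ |s.im| → DiffContOnCl ℂ g (Metric.ball s (1/40)) := by
    intro s h3
    apply DifferentiableOn.diffContOnCl
    rw [closure_ball s (by norm_num)]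
    intro z hz
    refine (hd z ?_).differentiableWithinAt
    rintro rfl
    rw [mem_closedBall_iff_norm] at hz
    have hi := (abs_im_le_norm (1 - s)).trans hz
    simp at hi
    linarith
  have hne1 : ∀ s : ℂ, 1 ≤ |s.im| → s ≠ 1 := by
    rintro s h rfl; norm_num at h
  have hg1 : ∀ s : ℂ, 1 ≤ s.re → s.re ≤ 2 → 1 ≤ |s.im| →
      ‖deriv g s‖ ≤ (80 * C) * |s.im| ^ (1/20 : ℝ) := by
    intro s h1 h2 h3
    have := norm_deriv_le_of_forall_mem_sphere_norm_le (by norm_num) (hdc s h3) (hsph s h1 h2 h3)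
    refine this.trans (le_of_eq ?_)
    ring
  have hg2 : ∀ s : ℂ, 1 ≤ s.re → s.re ≤ 2 → 1 ≤ |s.im| →
      ‖deriv (deriv g) s‖ ≤ (6400 * C) * |s.im| ^ (1/20 : ℝ) := by
    intro s h1 h2 h3
    have := norm_iteratedDeriv_le_of_forall_mem_sphere_norm_le 2 (by norm_num) (hdc s h3) (hsph s h1 h2 h3)
    rw [iteratedDeriv_succ, iteratedDeriv_one] at this
    refine this.trans (le_of_eq ?_)
    norm_num [Nat.factorial]
    ring
  set κ : ℝ := min 1 (c / (160 * C)) with hκ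
  have hκ0 : 0 < κ := lt_min one_pos (by positivity)
  have hκ1 : κ ≤ 1 := min_le_left _ _
  have hκ2 : 80 * C * κ ≤ c / 2 := by
    have : κ ≤ c / (160 * C) := min_le_right _ _
    rw [le_div_iff₀ (by positivity)] at this
    linarith
  -- lower bound
  have hlow : ∀ s : ℂ, 1 < s.re → s.re ≤ 2 → 1 ≤ |s.im| →
      c / 2 * κ ^ 3 ≤ ‖g s‖ * (|s.im| ^ (1/20 : ℝ)) ^ 4 := by
    intro s h1 h2 h3
    set τ : ℝ := |s.im| ^ (1/20 : ℝ) with hτ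
    have hτ1 : 1 ≤ τ := Real.one_le_rpow h3 (by norm_num)
    have hτ0 : 0 < τ := by linarith
    have hη : κ ^ 4 / τ ^ 5 ≤ 1 := by
      rw [div_le_one (by positivity)]
      exact (pow_le_one₀ hκ0.le hκ1).trans (one_le_pow₀ hτ1)
    have hη0 : 0 < κ ^ 4 / τ ^ 5 := by positivity
    -- for sigma-1 >= eta
    have big : ∀ w : ℂ, w.im = s.im → 1 + κ ^ 4 / τ ^ 5 ≤ w.re → w.re ≤ 2 →
        c * κ ^ 3 ≤ ‖g w‖ * τ ^ 4 := by
      intro w hw hw1 hw2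
      have := hc w (by linarith) hw2 (by rw [hw]; exact h3)
      rw [hw, ← hτ] at this
      have h4 : c ^ 4 * (κ ^ 4 / τ ^ 5) ^ 3 ≤ ‖g w‖ ^ 4 * τ := by
        refine le_trans ?_ this
        gcongr
        linarith
      have h5 : (c * κ ^ 3) ^ 4 ≤ (‖g w‖ * τ ^ 4) ^ 4 := by
        calc (c * κ ^ 3) ^ 4 = c ^ 4 * (κ ^ 4 / τ ^ 5) ^ 3 * τ ^ 15 := by
              field_simp
          _ ≤ ‖g w‖ ^ 4 * τ * τ ^ 15 := by gcongr
          _ = _ := by ring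
      exact le_of_pow_le_pow_left₀ (by norm_num) (by positivity) h5
    rcases le_or_gt (1 + κ ^ 4 / τ ^ 5) s.re with h | h
    · have := big s rfl h h2
      have : 0 < c * κ ^ 3 := by positivity
      linarith
    · set w : ℂ := ⟨1 + κ ^ 4 / τ ^ 5, s.im⟩ with hw
      have hb := big w rfl le_rfl (by show 1 + κ ^ 4 / τ ^ 5 ≤ 2; linarith)
      have hseg : ∀ z ∈ segment ℝ s w, 1 ≤ z.re ∧ z.re ≤ 2 ∧ z.im = s.im := by
        rintro z ⟨a, b, ha, hb, hab, rfl⟩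
        have hb' : b = 1 - a := by linarith
        subst hb'
        simp only [add_re, add_im, real_smul, mul_re, mul_im, ofReal_re, ofReal_im, zero_mul, sub_zero,
          add_zero, hw]
        refine ⟨by nlinarith, by nlinarith, by ring⟩
      have hmv := (convex_segment s w).norm_image_sub_le_of_norm_deriv_le
        (f := g) (C := (80 * C) * τ) (fun z hz => hd z (hne1 z (by rw [(hseg z hz).2.2]; exact h3)))
        (fun z hz => by
          have h := hseg z hz
          have := hg1 z h.1 h.2.1 (by rw [h.2.2]; exact h3)
          rwa [h.2.2] at this) (left_mem_segment ℝ s w) (right_mem_segment ℝ s w)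
      have hws : ‖w - s‖ ≤ κ ^ 4 / τ ^ 5 := by
        have : w - s = ((1 + κ ^ 4 / τ ^ 5 - s.re : ℝ) : ℂ) := by
          apply Complex.ext
          · rw [ofReal_re, sub_re]
          · rw [ofReal_im, sub_im]; simp [hw]
        rw [this, norm_real, Real.norm_eq_abs, abs_of_nonneg (by linarith)]
        linarith
      have h6 : ‖g w - g s‖ * τ ^ 4 ≤ c / 2 * κ ^ 3 := by
        calc ‖g w - g s‖ * τ ^ 4 ≤ (80 * C * τ * (κ ^ 4 / τ ^ 5)) * τ ^ 4 := by
              gcongr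
              exact hmv.trans (by gcongr)
          _ = (80 * C * κ) * κ ^ 3 := by field_simp
          _ ≤ _ := by gcongr
      have h7 : ‖g w‖ ≤ ‖g s‖ + ‖g w - g s‖ := by
        have := norm_sub_norm_le (g w) (g s); linarith
      have h8 : ‖g w‖ * τ ^ 4 ≤ (‖g s‖ + ‖g w - g s‖) * τ ^ 4 := by gcongr
      linarith
  set m := c / 2 * κ ^ 3 with hm
  have hm0 : 0 < m := by positivity
  refine ⟨6400 * C / m + (80 * C) ^ 2 / m ^ 2 + 80 * C, by positivity, ?_⟩
  intro s h1 h2 h3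
  have L := hlow s h1 h2 h3
  have G1 := hg1 s h1.le h2 h3
  have G2 := hg2 s h1.le h2 h3
  have hτh : |s.im| ^ (1/2 : ℝ) = (|s.im| ^ (1/20 : ℝ)) ^ 10 := by
    rw [← Real.rpow_natCast, ← Real.rpow_mul (abs_nonneg _)]; norm_num
  rw [hτh]
  set τ : ℝ := |s.im| ^ (1/20 : ℝ) with hτ
  have hτ1 : 1 ≤ τ := Real.one_le_rpow h3 (by norm_num)
  have hτ0 : 0 < τ := by linarith
  constructor
  swap
  · refine G1.trans ?_
    have e1 : τ ≤ τ ^ 10 := le_self_pow₀ hτ1 (by norm_num)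
    have e2 : 0 ≤ 6400 * C / m + (80 * C) ^ 2 / m ^ 2 := by positivity
    calc 80 * C * τ ≤ 80 * C * τ ^ 10 := by gcongr
      _ ≤ _ := by
        apply mul_le_mul_of_nonneg_right _ (by positivity)
        linarith
  have hgs : 0 < ‖g s‖ := by
    by_contra h
    have : ‖g s‖ = 0 := le_antisymm (not_lt.mp h) (norm_nonneg _)
    rw [this] at L; linarith
  have hgs0 : g s ≠ 0 := norm_pos_iff.mp hgs
  have hopen : IsOpen {z : ℂ | z ≠ 1} := isOpen_ne
  have hdd : DifferentiableAt ℂ (deriv g) s := by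
    have : DifferentiableOn ℂ g {z : ℂ | z ≠ 1} := fun z hz => (hd z hz).differentiableWithinAt
    exact (this.deriv hopen).differentiableAt (hopen.mem_nhds (hne1 s h3))
  rw [deriv_fun_div hdd (hd s (hne1 s h3)) hgs0]
  have e : (deriv (deriv g) s * g s - deriv g s * deriv g s) / g s ^ 2
      = deriv (deriv g) s / g s - (deriv g s / g s) ^ 2 := by field_simp
  rw [e]
  refine (norm_sub_le _ _).trans ?_
  rw [norm_div, norm_pow, norm_div]
  have hinv : 1 / ‖g s‖ ≤ τ ^ 4 / m := by
    rw [div_le_div_iff₀ hgs hm0]; linarith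
  have t1 : ‖deriv (deriv g) s‖ / ‖g s‖ ≤ 6400 * C / m * τ ^ 10 := by
    calc ‖deriv (deriv g) s‖ / ‖g s‖ = ‖deriv (deriv g) s‖ * (1 / ‖g s‖) := by ring
      _ ≤ (6400 * C * τ) * (τ ^ 4 / m) := by gcongr
      _ = 6400 * C / m * τ ^ 5 := by ring
      _ ≤ _ := by gcongr; norm_num
  have t2 : ‖deriv g s‖ / ‖g s‖ ≤ 80 * C / m * τ ^ 5 := by
    calc ‖deriv g s‖ / ‖g s‖ = ‖deriv g s‖ * (1 / ‖g s‖) := by ring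
      _ ≤ (80 * C * τ) * (τ ^ 4 / m) := by gcongr
      _ = 80 * C / m * τ ^ 5 := by ring
  have t3 : (‖deriv g s‖ / ‖g s‖) ^ 2 ≤ (80 * C / m * τ ^ 5) ^ 2 := by gcongr
  calc _ ≤ 6400 * C / m * τ ^ 10 + (80 * C / m * τ ^ 5) ^ 2 := add_le_add t1 t3
    _ = (6400 * C / m + (80 * C) ^ 2 / m ^ 2) * τ ^ 10 := by ring
    _ ≤ _ := by
      apply mul_le_mul_of_nonneg_right _ (by positivity)
      linarith

end Pf


namespace Pf
open Complex Filter

lemma zeta_near : ∃ B : ℝ, 0 < B ∧ ∀ x : ℝ, 0 < x → x ≤ 1 → ‖riemannZeta (1 + x)‖ * x ≤ B := by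
  have hc : ContinuousOn (fun x : ℝ => ‖riemannZeta₁ (1 + x)‖) (Set.Icc 0 1) := by
    apply Continuous.continuousOn
    exact (differentiable_riemannZeta₁.continuous.comp (by fun_prop)).norm
  obtain ⟨B, hB⟩ := isCompact_Icc.exists_bound_of_continuousOn hc
  refine ⟨|B| + 1, by positivity, fun x h0 h1 => ?_⟩
  have := hB x ⟨h0.le, h1⟩
  have hx : (1 + x : ℂ) ≠ 1 := by simp [h0.ne']
  rw [riemannZeta_eq_inv_sub_mul hx]
  simp only [norm_norm] at this
  have e : ‖(1 + (x:ℂ) - 1)‖ = x := by simp [abs_of_pos h0]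
  rw [norm_mul]
  try rw [norm_inv]
  try rw [norm_div, norm_one]
  rw [e]
  have : ‖riemannZeta₁ (1 + x)‖ ≤ |B| + 1 := by linarith [le_abs_self B]
  field_simp
  exact this

section
variable {q : ℕ} [NeZero q] (χ : DirichletCharacter ℂ q)

lemma triv_le (s : ℂ) (hs : 0 < s.re) (hs1 : s ≠ 1) :
    ‖DirichletCharacter.LFunctionTrivChar q s‖ ≤ 2 ^ q.primeFactors.card * ‖riemannZeta s‖ := by
  rw [DirichletCharacter.LFunctionTrivChar_eq_mul_riemannZeta hs1, norm_mul]
  gcongr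
  rw [norm_prod, ← Finset.prod_const]
  apply Finset.prod_le_prod (fun _ _ => norm_nonneg _)
  intro p hp
  have hp1 := (Nat.prime_of_mem_primeFactors hp).one_lt
  refine (norm_sub_le _ _).trans ?_
  have : ‖(p : ℂ) ^ (-s)‖ ≤ 1 := by
    rw [norm_natCast_cpow_of_pos (by omega)]
    apply Real.rpow_le_one_of_one_le_of_nonpos
    · exact_mod_cast hp1.le
    · simp; exact hs.le
  simp only [norm_one]; linarith

lemma L_low (hχ2 : χ ^ 2 = 1) : ∃ c : ℝ, 0 < c ∧ ∀ s : ℂ, 1 < s.re → s.re ≤ 2 → 1 ≤ |s.im| →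
      c ^ 4 * (s.re - 1) ^ 3 ≤ ‖χ.LFunction s‖ ^ 4 * |s.im| ^ (1/20 : ℝ) := by
  obtain ⟨B, hB0, hB⟩ := zeta_near
  obtain ⟨C, hC0, hC⟩ := zeta_bound
  set D : ℝ := 2 ^ q.primeFactors.card with hD
  have hD0 : 0 < D := by positivity
  set M : ℝ := (D * B) ^ 3 * (D * (C * 2)) with hM
  have hM0 : 0 < M := by positivity
  refine ⟨(1 / M) ^ (1/4 : ℝ), by positivity, ?_⟩
  intro s h1 h2 h3
  have e4 : ((1 / M) ^ (1/4 : ℝ)) ^ 4 = 1 / M := by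
    rw [← Real.rpow_natCast, ← Real.rpow_mul (by positivity)]; norm_num
  rw [e4]
  set x := s.re - 1 with hx
  have hx0 : 0 < x := by linarith
  have hs : s = 1 + x + I * s.im := by apply Complex.ext <;> simp [hx]
  have key := DirichletCharacter.norm_LFunction_product_ge_one χ hx0 s.im
  rw [← hs, hχ2, norm_mul, norm_mul, norm_pow, norm_pow] at key
  have k1 : ‖DirichletCharacter.LFunctionTrivChar q (1 + x)‖ * x ≤ D * B := by
    have := triv_le (q := q) (1 + x) (by simp; linarith) (by simp [hx0.ne'])
    calc _ ≤ (D * ‖riemannZeta (1 + x)‖) * x := by gcongr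
      _ = D * (‖riemannZeta (1 + x)‖ * x) := by ring
      _ ≤ _ := by gcongr; exact hB x hx0 (by linarith)
  have him : (1 + (x:ℂ) + 2 * I * s.im).im = 2 * s.im := by simp
  have hre : (1 + (x:ℂ) + 2 * I * s.im).re = 1 + x := by simp
  have k2 : ‖DirichletCharacter.LFunction (1 : DirichletCharacter ℂ q) (1 + x + 2 * I * s.im)‖
      ≤ D * (C * 2) * |s.im| ^ (1/20 : ℝ) := by
    have := triv_le (q := q) (1 + x + 2 * I * s.im) (by rw [hre]; linarith) (by
      intro h
      have := congrArg Complex.im h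
      rw [him] at this
      simp at this; rw [this] at h3; norm_num at h3)
    refine this.trans ?_
    have h5 := hC (1 + x + 2 * I * s.im) (by rw [hre]; linarith) (by rw [hre]; linarith)
      (by rw [him, abs_mul, abs_two]; linarith)
    rw [him, abs_mul, abs_two] at h5
    have h6 : (2 * |s.im|) ^ (1/20 : ℝ) ≤ 2 * |s.im| ^ (1/20 : ℝ) := by
      calc (2 * |s.im|) ^ (1/20 : ℝ)
          = 2 ^ (1/20 : ℝ) * |s.im| ^ (1/20 : ℝ) := Real.mul_rpow (by norm_num) (abs_nonneg _)
        _ ≤ 2 ^ (1 : ℝ) * |s.im| ^ (1/20 : ℝ) := by gcongr <;> norm_num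
        _ = _ := by simp
    calc _ ≤ D * (C * (2 * |s.im| ^ (1/20 : ℝ))) := by gcongr; exact h5.trans (by gcongr)
      _ = _ := by ring
  set τ := |s.im| ^ (1/20 : ℝ)
  set A := ‖DirichletCharacter.LFunctionTrivChar q (1 + x)‖
  set E := ‖DirichletCharacter.LFunction (1 : DirichletCharacter ℂ q) (1 + x + 2 * I * s.im)‖
  set G := ‖χ.LFunction s‖
  have hA : 0 ≤ A := norm_nonneg _
  have hE : 0 ≤ E := norm_nonneg _
  have hG : 0 ≤ G := norm_nonneg _
  rw [div_mul_eq_mul_div, one_mul, div_le_iff₀ hM0]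
  calc x ^ 3 = 1 * x ^ 3 := by ring
    _ ≤ (A ^ 3 * G ^ 4 * E) * x ^ 3 := by gcongr
    _ = (A * x) ^ 3 * G ^ 4 * E := by ring
    _ ≤ (D * B) ^ 3 * G ^ 4 * (D * (C * 2) * τ) := by gcongr
    _ = _ := by rw [hM]; ring

end

lemma compact_logderiv (g : ℂ → ℂ) (hd : Differentiable ℂ g) (h0 : ∀ s : ℂ, 1 ≤ s.re → g s ≠ 0) :
    ∃ K : ℝ, 0 < K ∧ ∀ s : ℂ, 1 ≤ s.re → s.re ≤ 2 → |s.im| ≤ 1 →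
      ‖deriv (fun z => deriv g z / g z) s‖ ≤ K := by
  have hcomp : IsCompact (Set.Icc (1:ℝ) 2 ×ℂ Set.Icc (-1:ℝ) 1) := isCompact_Icc.reProdIm isCompact_Icc
  let U : Set ℂ := {z | g z ≠ 0}
  have hU : IsOpen U := isOpen_ne_fun hd.continuous continuous_const
  have hD : DifferentiableOn ℂ (fun z => deriv g z / g z) U := by
    intro z hz
    exact ((hd.deriv z).fun_div (hd z) hz).differentiableWithinAt
  have hc := (hD.deriv hU).continuousOn
  obtain ⟨K, hK⟩ := hcomp.exists_bound_of_continuousOn (hc.mono (fun z hz => h0 z (by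
    rw [mem_reProdIm] at hz; exact hz.1.1)))
  refine ⟨|K| + 1, by positivity, fun s h1 h2 h3 => ?_⟩
  have := hK s (by rw [mem_reProdIm]; exact ⟨⟨h1, h2⟩, abs_le.mp h3⟩)
  linarith [le_abs_self K]

end Pf


namespace Pf
open Complex Filter

section
variable {q : ℕ} [NeZero q] (χ : DirichletCharacter ℂ q)

/-- the coefficient sequence -/
noncomputable def aC (n : ℕ) : ℂ :=
  LSeries.logMul (fun n => ((ArithmeticFunction.vonMangoldt n : ℝ) : ℂ)) n
  + LSeries.logMul ((fun n : ℕ => χ n) * fun n => ((ArithmeticFunction.vonMangoldt n : ℝ) : ℂ)) n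
  - LSeries.logMul 1 n

noncomputable def HH (s : ℂ) : ℂ :=
  deriv (fun z => deriv riemannZeta z / riemannZeta z) s
  + deriv (fun z => deriv χ.LFunction z / χ.LFunction z) s + deriv riemannZeta s

lemma absc_L : LSeries.abscissaOfAbsConv (fun n => ((ArithmeticFunction.vonMangoldt n : ℝ) : ℂ)) ≤ (1:ℝ) :=
  LSeries.abscissaOfAbsConv_le_of_forall_lt_LSeriesSummable fun y hy =>
    ArithmeticFunction.LSeriesSummable_vonMangoldt (by simpa using hy)

lemma absc_X : LSeries.abscissaOfAbsConv ((fun n : ℕ => χ n) * fun n => ((ArithmeticFunction.vonMangoldt n : ℝ) : ℂ)) ≤ (1:ℝ) :=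
  LSeries.abscissaOfAbsConv_le_of_forall_lt_LSeriesSummable fun y hy =>
    DirichletCharacter.LSeriesSummable_twist_vonMangoldt χ (by simpa using hy)

lemma aC_series (s : ℂ) (hs : 1 < s.re) : LSeriesSummable (aC χ) s ∧ LSeries (aC χ) s = HH χ s := by
  have l1 : LSeries.abscissaOfAbsConv (fun n => ((ArithmeticFunction.vonMangoldt n : ℝ) : ℂ)) < s.re :=
    absc_L.trans_lt (by exact_mod_cast hs)
  have l2 := (absc_X χ).trans_lt (b := ((1:ℝ):EReal)) (c := (s.re : EReal)) (by exact_mod_cast hs)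
  have l3 : LSeries.abscissaOfAbsConv 1 < s.re := by
    rw [LSeries.abscissaOfAbsConv_one]; exact_mod_cast hs
  have s1 := LSeriesSummable_logMul_of_lt_re l1
  have s2 := LSeriesSummable_logMul_of_lt_re l2
  have s3 := LSeriesSummable_logMul_of_lt_re l3
  have hn : {z : ℂ | 1 < z.re} ∈ nhds s :=
    (isOpen_lt continuous_const continuous_re).mem_nhds hs
  have e1 : deriv (fun z => deriv riemannZeta z / riemannZeta z) s
      = LSeries (LSeries.logMul (fun n => ((ArithmeticFunction.vonMangoldt n : ℝ) : ℂ))) s := by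
    have : (fun z => deriv riemannZeta z / riemannZeta z) =ᶠ[nhds s]
        fun z => - LSeries (fun n => ((ArithmeticFunction.vonMangoldt n : ℝ) : ℂ)) z := by
      filter_upwards [hn] with z hz
      rw [ArithmeticFunction.LSeries_vonMangoldt_eq_deriv_riemannZeta_div hz]; ring
    rw [this.deriv_eq, deriv.fun_neg, LSeries_deriv l1, neg_neg]
  have e2 : deriv (fun z => deriv χ.LFunction z / χ.LFunction z) s
      = LSeries (LSeries.logMul ((fun n : ℕ => χ n) * fun n => ((ArithmeticFunction.vonMangoldt n : ℝ) : ℂ))) s := by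
    have : (fun z => deriv χ.LFunction z / χ.LFunction z) =ᶠ[nhds s]
        fun z => - LSeries ((fun n : ℕ => χ n) * fun n => ((ArithmeticFunction.vonMangoldt n : ℝ) : ℂ)) z := by
      filter_upwards [hn] with z hz
      rw [DirichletCharacter.LSeries_twist_vonMangoldt_eq χ hz, 
        DirichletCharacter.deriv_LFunction_eq_deriv_LSeries χ hz, DirichletCharacter.LFunction_eq_LSeries χ hz]; ring
    rw [this.deriv_eq, deriv.fun_neg, LSeries_deriv l2, neg_neg]
  have e3 : deriv riemannZeta s = - LSeries (LSeries.logMul 1) s := by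
    have : riemannZeta =ᶠ[nhds s] LSeries 1 := by
      filter_upwards [hn] with z hz
      rw [LSeries_one_eq_riemannZeta hz]
    rw [this.deriv_eq, LSeries_deriv l3]
  have hfun : aC χ = LSeries.logMul (fun n => ((ArithmeticFunction.vonMangoldt n : ℝ) : ℂ))
    + LSeries.logMul ((fun n : ℕ => χ n) * fun n => ((ArithmeticFunction.vonMangoldt n : ℝ) : ℂ))
    - LSeries.logMul 1 := rfl
  rw [hfun]
  refine ⟨(s1.add s2).sub s3, ?_⟩
  rw [LSeries_sub (s1.add s2) s3, LSeries_add s1 s2, HH, e1, e2, e3]; ring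

lemma HH_bound (hχ : χ ≠ 1) (hχ2 : χ ^ 2 = 1) : ∃ K : ℝ, 0 < K ∧ ∀ s : ℂ, 1 < s.re → s.re ≤ 2 →
    ‖HH χ s‖ ≤ K * (1 + |s.im|) ^ (1/2 : ℝ) := by
  obtain ⟨C, hC0, hC⟩ := zeta_bound
  obtain ⟨c, hc0, hc⟩ := L_low (1 : DirichletCharacter ℂ 1) (by simp)
  rw [DirichletCharacter.LFunction_modOne_eq] at hc
  obtain ⟨K1, hK10, hK1⟩ := abs_logderiv riemannZeta (fun s hs => differentiableAt_riemannZeta hs) C hC0 hC c hc0 hc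
  obtain ⟨C', hC0', hC'⟩ := L_bound χ hχ
  obtain ⟨c', hc0', hc'⟩ := L_low χ hχ2
  obtain ⟨K2, hK20, hK2⟩ := abs_logderiv χ.LFunction
    (fun s hs => (DirichletCharacter.differentiable_LFunction hχ) s) C' hC0' hC' c' hc0' hc'
  obtain ⟨K3, hK30, hK3⟩ := compact_logderiv χ.LFunction (DirichletCharacter.differentiable_LFunction hχ)
    (fun s hs => DirichletCharacter.LFunction_ne_zero_of_one_le_re χ (Or.inl hχ) hs)
  have hz1 : ∀ s : ℂ, 1 ≤ s.re → riemannZeta₁ s ≠ 0 := by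
    intro s hs h0
    by_cases h : s = 1
    · rw [h, riemannZeta₁_one] at h0; norm_num at h0
    · have := riemannZeta_eq_inv_sub_mul h
      rw [h0, mul_zero] at this
      exact riemannZeta_ne_zero_of_one_le_re hs this
  obtain ⟨K4, hK40, hK4⟩ := compact_logderiv riemannZeta₁ differentiable_riemannZeta₁ hz1
  have hcomp : IsCompact (Set.Icc (1:ℝ) 2 ×ℂ Set.Icc (-1:ℝ) 1) := isCompact_Icc.reProdIm isCompact_Icc
  obtain ⟨K5, hK5⟩ := hcomp.exists_bound_of_continuousOn
    (differentiable_riemannZeta₀.deriv.continuous.continuousOn)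
  refine ⟨2 * K1 + K2 + K3 + K4 + |K5|, by positivity, fun s h1 h2 => ?_⟩
  have hb1 : (1:ℝ) ≤ (1 + |s.im|) ^ (1/2 : ℝ) := Real.one_le_rpow (by linarith [abs_nonneg s.im]) (by norm_num)
  rcases le_total 1 |s.im| with h3 | h3
  · obtain ⟨a1, a2⟩ := hK1 s h1 h2 h3
    obtain ⟨b1, -⟩ := hK2 s h1 h2 h3
    have : |s.im| ^ (1/2 : ℝ) ≤ (1 + |s.im|) ^ (1/2 : ℝ) := by gcongr; linarith
    calc ‖HH χ s‖ ≤ K1 * |s.im| ^ (1/2 : ℝ) + K2 * |s.im| ^ (1/2 : ℝ) + K1 * |s.im| ^ (1/2 : ℝ) := by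
          refine (norm_add_le _ _).trans (add_le_add ((norm_add_le _ _).trans (add_le_add a1 b1)) a2)
      _ = (2 * K1 + K2) * |s.im| ^ (1/2 : ℝ) := by ring
      _ ≤ (2 * K1 + K2) * (1 + |s.im|) ^ (1/2 : ℝ) := by gcongr
      _ ≤ _ := by
        apply mul_le_mul_of_nonneg_right _ (by positivity)
        linarith [abs_nonneg K5]
  · have hs1 : s ≠ 1 := by rintro rfl; simp at h1
    have b1 := hK3 s h1.le h2 h3
    have b2 := hK4 s h1.le h2 h3
    have b3 := hK5 s (by rw [mem_reProdIm]; exact ⟨⟨h1.le, h2⟩, abs_le.mp h3⟩)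
    have e1 : deriv (fun z => deriv riemannZeta z / riemannZeta z) s
        = deriv (fun z => deriv riemannZeta₁ z / riemannZeta₁ z) s + (s - 1)⁻¹ ^ 2 := by
      have : (fun z => deriv riemannZeta z / riemannZeta z) =ᶠ[nhds s]
          fun z => deriv riemannZeta₁ z / riemannZeta₁ z - (z - 1)⁻¹ := by
        have hn : {z : ℂ | 1 < z.re} ∈ nhds s :=
          (isOpen_lt continuous_const continuous_re).mem_nhds h1
        filter_upwards [hn] with z hz
        have hz1' : z ≠ 1 := by rintro rfl; simp at hz
        have hz0 : z - 1 ≠ 0 := sub_ne_zero.mpr hz1'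
        have hh : riemannZeta =ᶠ[nhds z] fun w => (w - 1)⁻¹ * riemannZeta₁ w := by
          filter_upwards [isOpen_ne.mem_nhds hz1'] with w hw
          exact riemannZeta_eq_inv_sub_mul hw
        have d1 : HasDerivAt (fun w : ℂ => (w - 1)⁻¹) (-1 / (z - 1) ^ 2) z :=
          ((hasDerivAt_id z).sub_const 1).inv hz0
        have d2 := d1.mul (differentiable_riemannZeta₁ z).hasDerivAt
        have := hz1 z hz.le
        rw [hh.deriv_eq, show deriv (fun w => (w - 1)⁻¹ * riemannZeta₁ w) z = _ from d2.deriv, riemannZeta_eq_inv_sub_mul hz1']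
        field_simp
        ring
      have hs0 : s - 1 ≠ 0 := sub_ne_zero.mpr hs1
      have d1 : HasDerivAt (fun w : ℂ => (w - 1)⁻¹) (-1 / (s - 1) ^ 2) s :=
          ((hasDerivAt_id s).sub_const 1).inv hs0
      have d3 : DifferentiableAt ℂ (fun z => deriv riemannZeta₁ z / riemannZeta₁ z) s :=
        (differentiable_riemannZeta₁.deriv s).fun_div (differentiable_riemannZeta₁ s) (hz1 s h1.le)
      rw [this.deriv_eq, (d3.hasDerivAt.fun_sub d1).deriv, neg_div, sub_neg_eq_add, one_div, inv_pow]
    have : HH χ s = deriv (fun z => deriv riemannZeta₁ z / riemannZeta₁ z) s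
      + deriv (fun z => deriv χ.LFunction z / χ.LFunction z) s + deriv riemannZeta₀ s := by
      rw [HH, e1, deriv_riemannZeta_eq_neg_inv_sub_sq_add hs1]; ring
    rw [this]
    have hle : ‖deriv (fun z => deriv riemannZeta₁ z / riemannZeta₁ z) s
      + deriv (fun z => deriv χ.LFunction z / χ.LFunction z) s + deriv riemannZeta₀ s‖ ≤ K4 + K3 + K5 :=
      (norm_add_le _ _).trans (add_le_add ((norm_add_le _ _).trans (add_le_add b2 b1)) b3)
    calc _ ≤ K4 + K3 + K5 := hle
      _ ≤ (2 * K1 + K2 + K3 + K4 + |K5|) * 1 := by linarith [le_abs_self K5]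
      _ ≤ _ := by gcongr

end
end Pf


namespace Pf
open Complex Filter MeasureTheory

noncomputable def kk (x : ℝ) : ℂ := ((max (1 - x) 0 : ℝ) : ℂ)

noncomputable def FF (s : ℂ) : ℂ := 1 / s - 1 / (s + 1)

lemma kk_mellin (s : ℂ) (hs : 0 < s.re) : HasMellin kk s (FF s) := by
  have h1 := hasMellin_one_Ioc hs
  have h2 := hasMellin_cpow_Ioc 1 (s := s) (by simp; linarith)
  have h := hasMellin_sub h1.1 h2.1
  rw [h1.2, h2.2] at h
  have e : ∀ t ∈ Set.Ioi (0:ℝ), (Set.indicator (Set.Ioc (0:ℝ) 1) (fun _ => 1 : ℝ → ℂ) t -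
      Set.indicator (Set.Ioc (0:ℝ) 1) (fun t => (t:ℂ) ^ (1:ℂ) : ℝ → ℂ) t) = kk t := by
    intro t ht
    have ht : 0 < t := ht
    by_cases h : t ≤ 1
    · have : t ∈ Set.Ioc (0:ℝ) 1 := ⟨ht, h⟩
      simp only [Set.indicator_of_mem this, cpow_one, kk]
      rw [max_eq_left (by linarith)]; push_cast; ring
    · have : t ∉ Set.Ioc (0:ℝ) 1 := fun h' => h h'.2
      simp only [Set.indicator_of_notMem this, kk]
      rw [max_eq_right (by linarith)]; simp
  constructor
  · have := h.1
    unfold MellinConvergent at this ⊢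
    refine this.congr_fun (fun t ht => ?_) measurableSet_Ioi
    simp only; rw [e t ht]
  · rw [FF, ← h.2]
    unfold mellin
    refine setIntegral_congr_fun measurableSet_Ioi (fun t ht => ?_)
    simp only; rw [e t ht]

lemma FF_norm (σ : ℝ) (hσ : 1 ≤ σ) (y : ℝ) : ‖FF (σ + y * I)‖ ≤ (1 + y ^ 2)⁻¹ := by
  have hs : (σ + y * I : ℂ) ≠ 0 := by
    intro h; have := congrArg re h; simp at this; linarith
  have hs1 : (σ + y * I + 1 : ℂ) ≠ 0 := by
    intro h; have := congrArg re h; simp at this; linarith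
  have : FF (σ + y * I) = ((σ + y * I) * (σ + y * I + 1))⁻¹ := by
    rw [FF]; field_simp; ring
  rw [this, norm_inv, norm_mul]
  have hr : 0 < 1 + y ^ 2 := by positivity
  gcongr
  have a1 : Real.sqrt (1 + y ^ 2) ≤ ‖(σ + y * I : ℂ)‖ := by
    rw [Complex.norm_def]
    apply Real.sqrt_le_sqrt
    simp [normSq_apply]; nlinarith
  have a2 : Real.sqrt (1 + y ^ 2) ≤ ‖(σ + y * I + 1 : ℂ)‖ := by
    rw [Complex.norm_def]
    apply Real.sqrt_le_sqrt
    simp [normSq_apply]; nlinarith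
  calc 1 + y ^ 2 = Real.sqrt (1 + y ^ 2) * Real.sqrt (1 + y ^ 2) := (Real.mul_self_sqrt hr.le).symm
    _ ≤ _ := by gcongr

lemma FF_cont (σ : ℝ) (hσ : 1 ≤ σ) : Continuous (fun y : ℝ => FF (σ + y * I)) := by
  unfold FF
  apply Continuous.sub
  · apply Continuous.div continuous_const (by fun_prop)
    intro y h; have := congrArg re h; simp at this; linarith
  · apply Continuous.div continuous_const (by fun_prop)
    intro y h; have := congrArg re h; simp at this; linarith

lemma FF_int (σ : ℝ) (hσ : 1 ≤ σ) : Integrable (fun y : ℝ => FF (σ + y * I)) := by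
  refine integrable_inv_one_add_sq.mono' (FF_cont σ hσ).aestronglyMeasurable ?_
  exact Eventually.of_forall (FF_norm σ hσ)

lemma kk_inv (σ : ℝ) (hσ : 1 ≤ σ) (x : ℝ) (hx : 0 < x) :
    ∫ y : ℝ, (x : ℂ) ^ (-(σ + y * I)) * FF (σ + y * I) = 2 * Real.pi * kk x := by
  have hm : ∀ y : ℝ, mellin kk (σ + y * I) = FF (σ + y * I) := fun y =>
    (kk_mellin _ (by simp; linarith)).2
  have := mellinInv_mellin_eq σ kk hx (kk_mellin σ (by simp; linarith)).1 (by
    unfold VerticalIntegrable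
    simp_rw [hm]
    exact FF_int σ hσ) (by
      apply Continuous.continuousAt; unfold kk; fun_prop)
  rw [← this, mellinInv]
  simp_rw [hm]
  have hpi : (Real.pi : ℂ) ≠ 0 := by exact_mod_cast Real.pi_ne_zero
  rw [real_smul]
  push_cast
  simp only [smul_eq_mul]
  rw [← mul_assoc, mul_one_div_cancel (mul_ne_zero two_ne_zero hpi), one_mul]

lemma wt_int : Integrable (fun y : ℝ => (1 + |y|) ^ (1/2 : ℝ) * (1 + y ^ 2)⁻¹) := by
  have h0 := (integrable_one_add_norm (E := ℝ) (μ := volume) (r := 3/2) (by simp; norm_num)).const_mul 2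
  refine h0.mono' (by
    apply Continuous.aestronglyMeasurable
    apply Continuous.mul
    · exact (by fun_prop : Continuous fun y : ℝ => 1 + |y|).rpow_const (fun _ => Or.inr (by norm_num))
    · exact (by fun_prop : Continuous fun y : ℝ => 1 + y^2).inv₀ (fun y => by positivity)) ?_
  refine Eventually.of_forall fun y => ?_
  have hp : 0 < 1 + |y| := by positivity
  rw [Real.norm_of_nonneg (by positivity), Real.norm_eq_abs]
  have e : (1 + |y|) ^ (1/2 : ℝ) = (1 + |y|) ^ (-(3/2) : ℝ) * (1 + |y|) ^ 2 := by
    rw [← Real.rpow_natCast, ← Real.rpow_add hp]; norm_num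
  rw [e]
  have h2 : (1 + |y|) ^ 2 * (1 + y ^ 2)⁻¹ ≤ 2 := by
    rw [← div_eq_mul_inv, div_le_iff₀ (by positivity)]
    nlinarith [sq_abs y, sq_nonneg (1 - |y|)]
  calc _ = (1 + |y|) ^ (-(3/2) : ℝ) * ((1 + |y|) ^ 2 * (1 + y ^ 2)⁻¹) := by ring
    _ ≤ (1 + |y|) ^ (-(3/2) : ℝ) * 2 := by gcongr
    _ = _ := by ring

lemma perron (a : ℕ → ℂ) (K : ℝ) (hK : 0 < K)
    (hs : ∀ s : ℂ, 1 < s.re → s.re ≤ 2 → LSeriesSummable a s ∧ ‖LSeries a s‖ ≤ K * (1 + |s.im|) ^ (1/2 : ℝ)) :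
    ∃ C : ℝ, 0 < C ∧ ∀ z : ℝ, Real.exp 1 ≤ z →
      ‖∑ n ∈ Finset.Icc 1 ⌊z⌋₊, a n * ((1 - n / z : ℝ) : ℂ)‖ ≤ C * z := by
  set J := ∫ y : ℝ, (1 + |y|) ^ (1/2 : ℝ) * (1 + y ^ 2)⁻¹ with hJ
  have hJ0 : 0 ≤ J := integral_nonneg fun y => by positivity
  refine ⟨K * Real.exp 1 * J + 1, by positivity, fun z hz => ?_⟩
  have hz1 : 1 < z := lt_of_lt_of_le (by rw [Real.one_lt_exp_iff]; norm_num) hz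
  have hz0 : 0 < z := by linarith
  have hlog : 1 ≤ Real.log z := by rw [Real.le_log_iff_exp_le hz0]; exact hz
  set σ := 1 + 1 / Real.log z with hσ
  have hl0 : 0 < 1 / Real.log z := by positivity
  have hσ1 : 1 < σ := by linarith
  have hσ2 : σ ≤ 2 := by
    have : 1 / Real.log z ≤ 1 := by rw [div_le_one (by linarith)]; exact hlog
    linarith
  have hzσ : z ^ σ = Real.exp 1 * z := by
    rw [hσ, Real.rpow_add hz0, Real.rpow_one, Real.rpow_def_of_pos hz0]
    rw [show Real.log z * (1 / Real.log z) = 1 by field_simp]; ring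
  have hzc : (z : ℂ) ≠ 0 := by exact_mod_cast hz0.ne'
  have hsum := (hs σ (by simpa using hσ1) (by simpa using hσ2)).1
  -- terms
  let F : ℕ → ℝ → ℂ := fun n y => LSeries.term a (σ + y * I) n * ((z : ℂ) ^ (σ + y * I : ℂ) * FF (σ + y * I))
  have hzn : ∀ y : ℝ, ‖(z : ℂ) ^ (σ + y * I : ℂ)‖ = z ^ σ := by
    intro y; rw [norm_cpow_eq_rpow_re_of_pos hz0]; simp
  have htn : ∀ n (y : ℝ), ‖LSeries.term a (σ + y * I) n‖ = ‖LSeries.term a σ n‖ := by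
    intro n y
    rw [LSeries.norm_term_eq, LSeries.norm_term_eq]; simp
  have hFn : ∀ n (y : ℝ), ‖F n y‖ ≤ ‖LSeries.term a σ n‖ * z ^ σ * (1 + y ^ 2)⁻¹ := by
    intro n y
    simp only [F]
    rw [norm_mul, norm_mul, htn, hzn, mul_assoc]
    gcongr
    exact FF_norm σ hσ1.le y
  have hFc : ∀ n, Continuous (F n) := by
    intro n
    simp only [F]
    apply Continuous.mul
    · unfold LSeries.term
      by_cases hn : n = 0
      · simp [hn, continuous_const]
      · simp only [hn, if_false]
        have hn' : (n : ℂ) ≠ 0 := by exact_mod_cast hn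
        apply Continuous.div continuous_const
        · exact Continuous.const_cpow (by fun_prop) (Or.inl hn')
        · intro y; simp [cpow_eq_zero_iff, hn']
    · exact (Continuous.const_cpow (by fun_prop) (Or.inl hzc)).mul (FF_cont σ hσ1.le)
  have hFi : ∀ n, Integrable (F n) := by
    intro n
    exact (integrable_inv_one_add_sq.const_mul _).mono' (hFc n).aestronglyMeasurable
      (Eventually.of_forall (hFn n))
  have hFs : Summable fun n => ∫ y, ‖F n y‖ := by
    have h1 : Summable fun n => ‖LSeries.term a σ n‖ * z ^ σ * ∫ y : ℝ, (1 + y ^ 2)⁻¹ :=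
      (hsum.norm.mul_right _).mul_right _
    refine Summable.of_nonneg_of_le (fun n => integral_nonneg fun y => norm_nonneg _) (fun n => ?_) h1
    rw [← integral_const_mul]
    exact integral_mono (hFi n).norm (integrable_inv_one_add_sq.const_mul _) (hFn n)
  have hHS := hasSum_integral_of_summable_integral_norm hFi hFs
  have hI : ∀ n, ∫ y, F n y = if n = 0 then 0 else a n * (2 * Real.pi * kk (n / z)) := by
    intro n
    by_cases hn : n = 0
    · simp [F, hn]
    · rw [if_neg hn, ← kk_inv σ hσ1.le (n / z) (by positivity), ← integral_const_mul]
      congr 1; funext y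
      simp only [F, LSeries.term, if_neg hn]
      have hn' : (n : ℂ) ≠ 0 := by exact_mod_cast hn
      have : ((n / z : ℝ) : ℂ) ^ (-(σ + y * I) : ℂ) = (z:ℂ) ^ (σ + y * I : ℂ) / (n:ℂ) ^ (σ + y * I : ℂ) := by
        rw [div_eq_mul_inv, ofReal_mul, mul_cpow_ofReal_nonneg (by positivity) (by positivity), ofReal_inv,
          inv_cpow _ _ (by rw [arg_ofReal_of_nonneg hz0.le]; exact Real.pi_pos.ne), cpow_neg, cpow_neg, inv_inv]
        push_cast; ring
      rw [this]; ring
  have hfin : ∑' n, ∫ y, F n y = 2 * Real.pi * ∑ n ∈ Finset.Icc 1 ⌊z⌋₊, a n * ((1 - n / z : ℝ) : ℂ) := by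
    rw [tsum_eq_sum (s := Finset.Icc 1 ⌊z⌋₊), Finset.mul_sum]
    · refine Finset.sum_congr rfl fun n hn => ?_
      rw [Finset.mem_Icc] at hn
      rw [hI, if_neg (by omega)]
      have : (n:ℝ) ≤ z := (Nat.le_floor_iff hz0.le).mp hn.2
      have h2 : (n:ℝ) / z ≤ 1 := by rw [div_le_one hz0]; exact this
      rw [kk, max_eq_left (by linarith)]; ring
    · intro n hn
      rw [hI]
      by_cases h : n = 0
      · simp [h]
      · rw [if_neg h]
        have : z < n := by
          rw [Finset.mem_Icc] at hn; push Not at hn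
          exact (Nat.floor_lt hz0.le).mp (hn (by omega))
        have h2 : 1 ≤ (n:ℝ) / z := by rw [le_div_iff₀ hz0]; linarith
        rw [kk, max_eq_right (by linarith)]; simp
  have hts : ∀ y : ℝ, ∑' n, F n y = LSeries a (σ + y * I) * ((z : ℂ) ^ (σ + y * I : ℂ) * FF (σ + y * I)) := by
    intro y
    simp only [F, LSeries]
    rw [tsum_mul_right]
  have hle : ‖∫ y, ∑' n, F n y‖ ≤ K * z ^ σ * J := by
    rw [hJ, ← integral_const_mul]
    refine norm_integral_le_of_norm_le (wt_int.const_mul _) (Eventually.of_forall fun y => ?_)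
    rw [hts, norm_mul, norm_mul, hzn]
    have h1 := (hs (σ + y * I) (by simpa using hσ1) (by simpa using hσ2)).2
    simp only [add_im, ofReal_im, mul_im, ofReal_re, I_im, mul_one, I_re, mul_zero, add_zero, zero_add] at h1
    calc _ ≤ (K * (1 + |y|) ^ (1/2 : ℝ)) * (z ^ σ * (1 + y ^ 2)⁻¹) := by
          gcongr; exact FF_norm σ hσ1.le y
      _ = _ := by ring
  rw [← hHS.tsum_eq, hfin, norm_mul, hzσ] at hle
  have hpi : ‖(2 * Real.pi : ℂ)‖ = 2 * Real.pi := by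
    rw [norm_mul, norm_real, Real.norm_of_nonneg Real.pi_pos.le]; simp
  rw [hpi] at hle
  set S := ‖∑ n ∈ Finset.Icc 1 ⌊z⌋₊, a n * ((1 - n / z : ℝ) : ℂ)‖
  have hS : 0 ≤ S := norm_nonneg _
  have : S ≤ 2 * Real.pi * S := by nlinarith [Real.pi_gt_three]
  nlinarith
end Pf


namespace Pf
open Complex Filter MeasureTheory

lemma log_sum (z : ℝ) (hz : Real.exp 1 ≤ z) :
    |∑ n ∈ Finset.Icc 1 ⌊z⌋₊, Real.log n * (1 - n / z) - z / 2 * Real.log z| ≤ 2 * z := by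
  have hz1 : 1 < z := lt_of_lt_of_le (by rw [Real.one_lt_exp_iff]; norm_num) hz
  have hz0 : 0 < z := by linarith
  have hlog : 1 ≤ Real.log z := by rw [Real.le_log_iff_exp_le hz0]; exact hz
  have hlz : Real.log z ≤ z := by have := Real.log_le_sub_one_of_pos hz0; linarith
  set N := ⌊z⌋₊ with hN
  have hNz : (N:ℝ) ≤ z := Nat.floor_le hz0.le
  have hzN : z < N + 1 := Nat.lt_floor_add_one z
  have hN1 : 1 ≤ N := Nat.le_floor (by simpa using hz1.le)
  have hN0 : (0:ℝ) < N := by exact_mod_cast hN1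
  have hs : ∀ N : ℕ, ∑ n ∈ Finset.Icc 1 N, (1 - (n:ℝ) / z) = N - N * (N + 1) / (2 * z) := by
    intro N
    induction N with
    | zero => simp
    | succ m ih => rw [Finset.sum_Icc_succ_top (by omega), ih]; push_cast; field_simp; ring
  have hfac : ∀ N : ℕ, ∑ n ∈ Finset.Icc 1 N, Real.log n = Real.log (N.factorial) := by
    intro N
    induction N with
    | zero => simp
    | succ m ih =>
      rw [Finset.sum_Icc_succ_top (by omega), ih, Nat.factorial_succ]; push_cast
      rw [Real.log_mul (by positivity) (by positivity)]; ring
  have hst : N * Real.log N - N ≤ Real.log (N.factorial) := by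
    have h := Real.pow_div_factorial_le_exp (x := (N:ℝ)) hN0.le N
    have h2 := Real.log_le_log (by positivity) h
    rw [Real.log_exp, Real.log_div (by positivity) (by positivity), Real.log_pow] at h2
    linarith
  have hlN : Real.log z - Real.log N ≤ z / N - 1 := by
    rw [← Real.log_div hz0.ne' hN0.ne']
    exact Real.log_le_sub_one_of_pos (by positivity)
  have hdef : ∑ n ∈ Finset.Icc 1 N, (Real.log z - Real.log n) ≤ z := by
    rw [Finset.sum_sub_distrib, hfac]; simp
    have : N * (Real.log z - Real.log N) ≤ N * (z / N - 1) := by gcongr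
    have e : N * (z / N - 1) = z - N := by field_simp
    nlinarith
  have hmem : ∀ n ∈ Finset.Icc 1 N, (0:ℝ) < n ∧ (n:ℝ) ≤ z := by
    intro n hn
    rw [Finset.mem_Icc] at hn
    exact ⟨by exact_mod_cast hn.1, le_trans (by exact_mod_cast hn.2) hNz⟩
  have hup : ∑ n ∈ Finset.Icc 1 N, Real.log n * (1 - n / z) ≤ ∑ n ∈ Finset.Icc 1 N, Real.log z * (1 - n / z) := by
    apply Finset.sum_le_sum
    intro n hn
    obtain ⟨h1, h2⟩ := hmem n hn
    have : (n:ℝ) / z ≤ 1 := by rw [div_le_one hz0]; exact h2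
    have h3 := Real.log_le_log h1 h2
    apply mul_le_mul_of_nonneg_right h3; linarith
  have hlo : ∑ n ∈ Finset.Icc 1 N, Real.log z * (1 - n / z) - ∑ n ∈ Finset.Icc 1 N, Real.log n * (1 - n / z)
      ≤ ∑ n ∈ Finset.Icc 1 N, (Real.log z - Real.log n) := by
    rw [← Finset.sum_sub_distrib]
    apply Finset.sum_le_sum
    intro n hn
    obtain ⟨h1, h2⟩ := hmem n hn
    have : (n:ℝ) / z ≤ 1 := by rw [div_le_one hz0]; exact h2
    have : 0 < (n:ℝ) / z := by positivity
    have h3 := Real.log_le_log h1 h2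
    nlinarith
  rw [← Finset.mul_sum, hs] at hup hlo
  have hv1 : (N:ℝ) - N * (N + 1) / (2 * z) ≤ z / 2 := by
    rw [sub_le_iff_le_add, ← sub_le_iff_le_add', le_div_iff₀ (by positivity)]
    nlinarith [sq_nonneg ((N:ℝ) - z)]
  have hv2 : (z - 1) / 2 ≤ (N:ℝ) - N * (N + 1) / (2 * z) := by
    rw [le_sub_comm, div_le_iff₀ (by positivity)]
    nlinarith
  rw [abs_le]
  constructor
  · nlinarith
  · nlinarith

section
variable {q : ℕ} [NeZero q] (χ : DirichletCharacter ℂ q)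

def Sp (p : ℕ) : Prop := p.Prime ∧ χ p = 1

open Classical in
noncomputable def eC (n : ℕ) : ℂ :=
  (ArithmeticFunction.vonMangoldt n : ℝ) * Real.log n * (1 + χ n) - (if Sp χ n then 2 * (Real.log n : ℂ) ^ 2 else 0)

lemma eC_bound (hχ2 : χ ^ 2 = 1) (n : ℕ) (hn : n ≠ 0) : ‖eC χ n‖ ≤ (if n ∣ q then Real.log q ^ 2 else 0) +
    (if n.Prime then 0 else 2 * ArithmeticFunction.vonMangoldt n * Real.log n) := by
  have hq : 0 < q := Nat.pos_of_ne_zero (NeZero.ne q)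
  have hln : 0 ≤ Real.log n := Real.log_natCast_nonneg n
  have hΛ : 0 ≤ ArithmeticFunction.vonMangoldt n := ArithmeticFunction.vonMangoldt_nonneg
  have hif : (0:ℝ) ≤ if n ∣ q then Real.log q ^ 2 else 0 := by split_ifs <;> positivity
  by_cases hp : n.Prime
  · rw [if_pos hp, add_zero, eC, ArithmeticFunction.vonMangoldt_apply_prime hp]
    by_cases hc : IsUnit (n : ZMod q)
    · have h2 : (χ n) ^ 2 = 1 := by
        have : (χ ^ 2) (n : ZMod q) = 1 := by rw [hχ2, MulChar.one_apply hc]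
        rwa [MulChar.pow_apply' _ (by norm_num)] at this
      rcases (by simpa using h2 : χ n = 1 ∨ χ n = -1) with h | h
      · rw [if_pos ⟨hp, h⟩, h]
        have : ((Real.log n : ℝ):ℂ) * (Real.log n : ℝ) * (1 + 1) - 2 * ((Real.log n : ℝ):ℂ) ^ 2 = 0 := by ring
        rw [this]; simpa using hif
      · rw [if_neg (by rintro ⟨-, h'⟩; rw [h] at h'; norm_num at h'), h]
        simpa using hif
    · have h0 : χ n = 0 := MulChar.map_nonunit _ hc
      have hd : n ∣ q := by
        rw [ZMod.isUnit_iff_coprime] at hc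
        exact (Nat.Prime.dvd_iff_not_coprime hp).mpr hc
      rw [if_neg (by rintro ⟨-, h'⟩; rw [h0] at h'; norm_num at h'), h0, if_pos hd, add_zero, mul_one, sub_zero,
        norm_mul, norm_real, Real.norm_of_nonneg hln]
      have := Real.log_le_log (by exact_mod_cast hp.pos) (show (n:ℝ) ≤ q by exact_mod_cast Nat.le_of_dvd hq hd)
      nlinarith
  · rw [if_neg hp, eC, if_neg (by rintro ⟨h, -⟩; exact hp h), sub_zero, norm_mul, norm_mul, norm_real, norm_real,
      Real.norm_of_nonneg hln, Real.norm_of_nonneg hΛ]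
    have : ‖1 + χ n‖ ≤ 2 := (norm_add_le _ _).trans (by
      have := DirichletCharacter.norm_le_one χ (n : ZMod q)
      simp only [norm_one]; linarith)
    have h3 : 0 ≤ ArithmeticFunction.vonMangoldt n * Real.log n := by positivity
    nlinarith

open Classical in
lemma W_asymp (hχ : χ ≠ 1) (hχ2 : χ ^ 2 = 1) : ∃ C : ℝ, 0 < C ∧ ∀ z : ℝ, Real.exp 1 ≤ z →
    |∑ p ∈ (Finset.Icc 1 ⌊z⌋₊).filter (Sp χ), Real.log p ^ 2 * (z - p) - z ^ 2 / 4 * Real.log z| ≤ C * z ^ 2 := by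
  obtain ⟨K, hK0, hK⟩ := HH_bound χ hχ hχ2
  obtain ⟨C, hC0, hC⟩ := perron (aC χ) K hK0 (fun s h1 h2 => by
    obtain ⟨a, b⟩ := aC_series χ s h1
    refine ⟨a, ?_⟩
    rw [b]; exact hK s h1 h2)
  refine ⟨C + q * Real.log q ^ 2 + 64 + 2, by positivity, fun z hz => ?_⟩
  have hz1 : 1 < z := lt_of_lt_of_le (by rw [Real.one_lt_exp_iff]; norm_num) hz
  have hz0 : 0 < z := by linarith
  have hmem : ∀ n ∈ Finset.Icc 1 ⌊z⌋₊, (0:ℝ) < n ∧ (n:ℝ) ≤ z := by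
    intro n hn
    rw [Finset.mem_Icc] at hn
    exact ⟨by exact_mod_cast hn.1, le_trans (by exact_mod_cast hn.2) (Nat.floor_le hz0.le)⟩
  have hlz0 : 0 < Real.log z := Real.log_pos hz1
  have h1 := hC z hz
  have h2 := log_sum z hz
  set A := ∑ p ∈ (Finset.Icc 1 ⌊z⌋₊).filter (Sp χ), Real.log p ^ 2 * (z - p) with hA
  set B := ∑ n ∈ Finset.Icc 1 ⌊z⌋₊, Real.log n * (1 - n / z) with hB
  have hdec : ∑ n ∈ Finset.Icc 1 ⌊z⌋₊, aC χ n * ((1 - n / z : ℝ) : ℂ)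
      = ((2 * A / z - B : ℝ) : ℂ) + ∑ n ∈ Finset.Icc 1 ⌊z⌋₊, eC χ n * ((1 - n / z : ℝ) : ℂ) := by
    rw [hA, hB, Finset.sum_filter, Finset.mul_sum, Finset.sum_div, ← Finset.sum_sub_distrib, ofReal_sum, ← Finset.sum_add_distrib]
    refine Finset.sum_congr rfl fun n hn => ?_
    have hzc : (z:ℂ) ≠ 0 := by exact_mod_cast hz0.ne'
    have hlg : Complex.log n = (Real.log n : ℝ) := by rw [ofReal_log (by positivity)]; simp
    simp only [aC, LSeries.logMul, eC, Pi.mul_apply, Pi.one_apply, hlg]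
    split_ifs <;> (push_cast; field_simp; ring)
  have he : ‖∑ n ∈ Finset.Icc 1 ⌊z⌋₊, eC χ n * ((1 - n / z : ℝ) : ℂ)‖ ≤ (q * Real.log q ^ 2 + 64) * z := by
    calc _ ≤ ∑ n ∈ Finset.Icc 1 ⌊z⌋₊, ‖eC χ n‖ := by
          refine norm_sum_le_of_le _ fun n hn => ?_
          obtain ⟨a, b⟩ := hmem n hn
          have : (n:ℝ) / z ≤ 1 := by rw [div_le_one hz0]; exact b
          have h' : 0 < (n:ℝ) / z := by positivity
          rw [norm_mul, norm_real, Real.norm_of_nonneg (by linarith)]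
          have := norm_nonneg (eC χ n)
          nlinarith
      _ ≤ ∑ n ∈ Finset.Icc 1 ⌊z⌋₊, ((if n ∣ q then Real.log q ^ 2 else 0) +
            (if n.Prime then 0 else 2 * ArithmeticFunction.vonMangoldt n * Real.log z)) := by
          refine Finset.sum_le_sum fun n hn => ?_
          obtain ⟨a, b⟩ := hmem n hn
          refine (eC_bound χ hχ2 n (by rintro rfl; simp at a)).trans ?_
          gcongr
          split_ifs
          · rfl
          · have : 0 ≤ ArithmeticFunction.vonMangoldt n := ArithmeticFunction.vonMangoldt_nonneg
            gcongr
      _ ≤ q * Real.log q ^ 2 + 64 * z := by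
          rw [Finset.sum_add_distrib]
          gcongr
          · rw [← Finset.sum_filter, Finset.sum_const, nsmul_eq_mul]
            gcongr
            calc _ ≤ (Finset.Icc 1 q).card := by
                  apply Finset.card_le_card
                  intro n hn
                  rw [Finset.mem_filter, Finset.mem_Icc] at hn
                  rw [Finset.mem_Icc]
                  exact ⟨hn.1.1, Nat.le_of_dvd (Nat.pos_of_ne_zero (NeZero.ne q)) hn.2⟩
              _ = q := by simp
          · have e1 : ∑ n ∈ Finset.Icc 1 ⌊z⌋₊, (if n.Prime then 0 else 2 * ArithmeticFunction.vonMangoldt n * Real.log z)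
                = 2 * Real.log z * (Chebyshev.psi z - Chebyshev.theta z) := by
              rw [Chebyshev.psi_sub_theta_eq_sum_not_prime, Finset.sum_filter, Finset.mul_sum]
              refine Finset.sum_congr (by ext; simp; omega) fun n hn => ?_
              split_ifs <;> simp_all <;> ring
            rw [e1]
            have h3 := Chebyshev.psi_sub_theta_le hz1.le
            have h4 : Real.log z ≤ 4 * z ^ (1/4:ℝ) := by
              have := Real.log_le_rpow_div hz0.le (show (0:ℝ) < 1/4 by norm_num)
              linarith
            have h5 : Real.log z ^ 2 ≤ 16 * Real.sqrt z := by
              calc Real.log z ^ 2 ≤ (4 * z ^ (1/4:ℝ)) ^ 2 := by gcongr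
                _ = 16 * Real.sqrt z := by
                  rw [mul_pow, ← Real.rpow_natCast (z ^ (1/4:ℝ)), ← Real.rpow_mul hz0.le, Real.sqrt_eq_rpow]; norm_num
            calc _ ≤ 2 * Real.log z * (2 * Real.sqrt z * Real.log z) := by gcongr
              _ = 4 * Real.sqrt z * Real.log z ^ 2 := by ring
              _ ≤ 4 * Real.sqrt z * (16 * Real.sqrt z) := by gcongr
              _ = 64 * (Real.sqrt z * Real.sqrt z) := by ring
              _ = 64 * z := by rw [Real.mul_self_sqrt hz0.le]
      _ ≤ _ := by
        have : 0 ≤ q * Real.log q ^ 2 := by positivity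
        nlinarith
  rw [hdec] at h1
  have h3 : |2 * A / z - B| ≤ C * z + (q * Real.log q ^ 2 + 64) * z := by
    rw [← Real.norm_eq_abs, ← norm_real]
    set E := ∑ n ∈ Finset.Icc 1 ⌊z⌋₊, eC χ n * ((1 - n / z : ℝ) : ℂ)
    calc _ = ‖(((2 * A / z - B : ℝ) : ℂ) + E) - E‖ := by rw [add_sub_cancel_right]
      _ ≤ _ := norm_sub_le _ _
      _ ≤ _ := by gcongr
  have h4 : |2 * A / z - z / 2 * Real.log z| ≤ (C + q * Real.log q ^ 2 + 64 + 2) * z := by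
    have := abs_sub_le (2 * A / z) B (z / 2 * Real.log z)
    linarith
  have e : A - z ^ 2 / 4 * Real.log z = (2 * A / z - z / 2 * Real.log z) * (z / 2) := by
    field_simp; ring
  rw [e, abs_mul, abs_of_pos (show 0 < z / 2 by positivity)]
  have hCC : 0 ≤ (C + q * Real.log q ^ 2 + 64 + 2) := by positivity
  calc _ ≤ (C + q * Real.log q ^ 2 + 64 + 2) * z * (z / 2) := by gcongr
    _ ≤ _ := by nlinarith [sq_nonneg z, mul_nonneg hCC (sq_nonneg z)]

end
end Pf


namespace Pf
open Filter

section
open Classical in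
noncomputable def Phi (P : ℕ → Prop) (z : ℝ) : ℝ := ∑ p ∈ (Finset.Icc 1 ⌊z⌋₊).filter P, (z - p)

lemma loglog_facts : ∃ u0 : ℝ, ∀ u : ℝ, u0 ≤ u → 1 ≤ Real.log u ∧ 8 * Real.log u ≤ u ∧ 1 ≤ u := by
  have h1 : ∀ᶠ u : ℝ in atTop, 1 ≤ Real.log u := Real.tendsto_log_atTop.eventually_ge_atTop 1
  have h2 : ∀ᶠ u : ℝ in atTop, 8 * Real.log u ≤ u := by
    have := Real.isLittleO_log_id_atTop.bound (show (0:ℝ) < 1/8 by norm_num)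
    filter_upwards [this, eventually_ge_atTop 1] with u hu h1
    simp only [id, Real.norm_eq_abs] at hu
    rw [abs_of_nonneg (by linarith : (0:ℝ) ≤ u)] at hu
    linarith [le_abs_self (Real.log u)]
  exact eventually_atTop.mp (h1.and (h2.and (eventually_ge_atTop 1)))

open Classical in
lemma phi_asymp (P : ℕ → Prop) (C : ℝ) (hC : 0 < C)
    (hW : ∀ z : ℝ, Real.exp 1 ≤ z →
    |∑ p ∈ (Finset.Icc 1 ⌊z⌋₊).filter P, Real.log p ^ 2 * (z - p) - z ^ 2 / 4 * Real.log z| ≤ C * z ^ 2) :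
    ∃ C' : ℝ, 0 < C' ∧ ∃ z0 : ℝ, ∀ z : ℝ, z0 ≤ z →
      |Phi P z - z ^ 2 / (4 * Real.log z)| ≤ C' * z ^ 2 * (Real.log (Real.log z) / Real.log z ^ 2) := by
  obtain ⟨u0, hu0⟩ := loglog_facts
  refine ⟨5 * C + 5, by positivity, max (Real.exp u0) (Real.exp 1), fun z hz => ?_⟩
  have hz1 : Real.exp 1 ≤ z := le_trans (le_max_right _ _) hz
  have hz0 : 0 < z := (Real.exp_pos 1).trans_le hz1
  have hu : u0 ≤ Real.log z := by
    rw [Real.le_log_iff_exp_le hz0]; exact le_trans (le_max_left _ _) hz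
  obtain ⟨f1, f2, f3⟩ := hu0 _ hu
  set u := Real.log z with hud
  set v := Real.log u with hvd
  have hu0' : 0 < u := by linarith
  have W := hW z hz1
  set F := (Finset.Icc 1 ⌊z⌋₊).filter P with hF
  have hmem : ∀ p ∈ F, (1:ℝ) ≤ p ∧ (p:ℝ) ≤ z := by
    intro p hp
    rw [hF, Finset.mem_filter, Finset.mem_Icc] at hp
    exact ⟨by exact_mod_cast hp.1.1, le_trans (by exact_mod_cast hp.1.2) (Nat.floor_le hz0.le)⟩
  set w := z / u ^ 2 with hw
  have hw0 : 0 < w := by positivity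
  have hlw : Real.log w = u - 2 * v := by
    rw [hw, Real.log_div hz0.ne' (by positivity), Real.log_pow]; push_cast; rfl
  rw [abs_le] at W
  have hlow : ∑ p ∈ F, Real.log p ^ 2 * (z - p) ≤ u ^ 2 * Phi P z := by
    rw [Phi, Finset.mul_sum]
    apply Finset.sum_le_sum
    intro p hp
    obtain ⟨a, b⟩ := hmem p hp
    have h1 : 0 ≤ Real.log p := Real.log_nonneg a
    have h2 : Real.log p ≤ u := Real.log_le_log (by linarith) b
    apply mul_le_mul_of_nonneg_right _ (by linarith)
    gcongr
  have hup : (u - 2 * v) ^ 2 * (Phi P z - w * z) ≤ ∑ p ∈ F, Real.log p ^ 2 * (z - p) := by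
    have hPhi : Phi P z - w * z ≤ ∑ p ∈ F.filter (fun p : ℕ => w < p), (z - p) := by
      rw [Phi, ← Finset.sum_filter_add_sum_filter_not F (fun p : ℕ => w < p)]
      have : ∑ p ∈ F.filter (fun p : ℕ => ¬ w < p), (z - p) ≤ w * z := by
        calc _ ≤ ∑ p ∈ F.filter (fun p : ℕ => ¬ w < p), z := by
              apply Finset.sum_le_sum
              intro p hp; have : (0:ℝ) ≤ p := by positivity
              linarith
          _ = ((F.filter (fun p : ℕ => ¬ w < p)).card : ℝ) * z := by rw [Finset.sum_const, nsmul_eq_mul]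
          _ ≤ ((Finset.Icc 1 ⌊w⌋₊).card : ℝ) * z := by
            gcongr
            intro p hp
            rw [Finset.mem_filter] at hp
            rw [Finset.mem_Icc]
            exact ⟨by exact_mod_cast (hmem p hp.1).1, Nat.le_floor (not_lt.mp hp.2)⟩
          _ ≤ w * z := by
            gcongr; simp; exact Nat.floor_le hw0.le
      linarith
    calc _ ≤ (u - 2 * v) ^ 2 * ∑ p ∈ F.filter (fun p : ℕ => w < p), (z - p) := by gcongr
      _ = ∑ p ∈ F.filter (fun p : ℕ => w < p), (u - 2 * v) ^ 2 * (z - p) := by rw [Finset.mul_sum]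
      _ ≤ ∑ p ∈ F.filter (fun p : ℕ => w < p), Real.log p ^ 2 * (z - p) := by
        apply Finset.sum_le_sum
        intro p hp
        rw [Finset.mem_filter] at hp
        obtain ⟨a, b⟩ := hmem p hp.1
        apply mul_le_mul_of_nonneg_right _ (by linarith)
        have : u - 2 * v ≤ Real.log p := by rw [← hlw]; exact Real.log_le_log hw0 hp.2.le
        have : 0 ≤ u - 2 * v := by linarith
        gcongr
      _ ≤ _ := by
        apply Finset.sum_le_sum_of_subset_of_nonneg (Finset.filter_subset _ _)
        intro p hp _
        obtain ⟨a, b⟩ := hmem p hp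
        have : 0 ≤ z - p := by linarith
        positivity
  set Φ := Phi P z
  set Q := ∑ p ∈ F, Real.log p ^ 2 * (z - p)
  have hzz : 0 < z ^ 2 := by positivity
  rw [abs_le]
  constructor
  · have : z ^ 2 / 4 * u - C * z ^ 2 ≤ u ^ 2 * Φ := by linarith [W.1]
    have h2 : (z ^ 2 / 4 * u - C * z ^ 2) / u ^ 2 ≤ Φ := by rw [div_le_iff₀ (by positivity)]; linarith
    have h3 : (z ^ 2 / 4 * u - C * z ^ 2) / u ^ 2 = z ^ 2 / (4 * u) - C * z ^ 2 * (1 / u ^ 2) := by field_simp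
    have h4 : C * z ^ 2 * (1 / u ^ 2) ≤ (5 * C + 5) * z ^ 2 * (v / u ^ 2) := by
      gcongr; linarith
    linarith
  · have hinv : 1 ≤ (1 + 16 * v / u) * ((u - 2 * v) ^ 2 / u ^ 2) := by
      set x := v / u with hx
      have hx0 : 0 ≤ x := by positivity
      have hx1 : 8 * x ≤ 1 := by rw [hx, ← mul_div_assoc, div_le_one hu0']; exact f2
      have : (1 + 16 * v / u) * ((u - 2 * v) ^ 2 / u ^ 2) = (1 + 16 * x) * (1 - 2 * x) ^ 2 := by
        rw [hx]; field_simp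
      rw [this]
      have k1 := mul_nonneg hx0 (mul_nonneg hx0 hx0)
      have k2 := mul_le_mul_of_nonneg_left hx1 hx0
      linarith
    have h1 : (u - 2 * v) ^ 2 * (Φ - w * z) ≤ z ^ 2 / 4 * u + C * z ^ 2 := by linarith [W.2]
    have h2 : Φ - w * z ≤ (1 + 16 * v / u) * ((z ^ 2 / 4 * u + C * z ^ 2) / u ^ 2) := by
      rcases le_total (Φ - w * z) 0 with h | h
      · exact h.trans (by positivity)
      · calc Φ - w * z = 1 * (Φ - w * z) := by ring
          _ ≤ ((1 + 16 * v / u) * ((u - 2 * v) ^ 2 / u ^ 2)) * (Φ - w * z) := by gcongr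
          _ = (1 + 16 * v / u) * (((u - 2 * v) ^ 2 * (Φ - w * z)) / u ^ 2) := by ring
          _ ≤ _ := by gcongr
    have h3 : w * z = z ^ 2 / u ^ 2 := by rw [hw]; ring
    have h4 : (1 + 16 * v / u) * ((z ^ 2 / 4 * u + C * z ^ 2) / u ^ 2)
        = z ^ 2 / (4 * u) + (z ^ 2 / u ^ 2) * (4 * v + C + 16 * C * (v / u)) := by field_simp; ring
    have h5 : 16 * C * (v / u) ≤ 2 * C := by
      have : v / u ≤ 1 / 8 := by rw [div_le_iff₀ hu0']; linarith
      linarith [mul_le_mul_of_nonneg_left this hC.le]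
    have h6 : (z ^ 2 / u ^ 2) * (4 * v + C + 16 * C * (v / u)) + z ^ 2 / u ^ 2 ≤ (5 * C + 5) * z ^ 2 * (v / u ^ 2) := by
      have : (5 * C + 5) * z ^ 2 * (v / u ^ 2) = (z ^ 2 / u ^ 2) * ((5 * C + 5) * v) := by ring
      rw [this]
      have : 0 < z ^ 2 / u ^ 2 := by positivity
      have h8 : 4 * v + C + 16 * C * (v / u) + 1 ≤ (5 * C + 5) * v := by
        have := le_mul_of_one_le_right hC.le (show 1 ≤ v by linarith)
        linarith
      linarith [mul_le_mul_of_nonneg_left h8 this.le]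
    linarith

end
end Pf


namespace Pf

def Nm (k : ℕ) (z : ℤ × ℤ) : ℤ := z.1 ^ 2 + z.1 * z.2 + (k : ℤ) * z.2 ^ 2
def md (k : ℕ) (z w : ℤ × ℤ) : ℤ × ℤ := (z.1 * w.1 - k * z.2 * w.2, z.1 * w.2 + z.2 * w.1 + z.2 * w.2)
def cj (z : ℤ × ℤ) : ℤ × ℤ := (z.1 + z.2, - z.2)
def RS (k : ℕ) (n : ℤ) : Set (ℤ × ℤ) := {z | Nm k z = n}
noncomputable def rr (k : ℕ) (n : ℤ) : ℕ := (RS k n).ncard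

lemma Nm_md (k : ℕ) (z w : ℤ × ℤ) : Nm k (md k z w) = Nm k z * Nm k w := by
  simp only [Nm, md]; ring
lemma Nm_cj (k : ℕ) (z : ℤ × ℤ) : Nm k (cj z) = Nm k z := by
  simp only [Nm, cj]; ring
lemma cj_cj (z : ℤ × ℤ) : cj (cj z) = z := by simp [cj]
lemma md_cj (k : ℕ) (z w : ℤ × ℤ) : md k z (md k (cj z) w) = (Nm k z * w.1, Nm k z * w.2) := by
  simp only [Nm, md, cj, Prod.mk.injEq]; constructor <;> ring
lemma md_cj' (k : ℕ) (z w : ℤ × ℤ) : md k (cj z) (md k z w) = (Nm k z * w.1, Nm k z * w.2) := by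
  simp only [Nm, md, cj, Prod.mk.injEq]; constructor <;> ring

lemma RS_finite (k : ℕ) (hk : 2 ≤ k) (n : ℤ) : (RS k n).Finite := by
  apply Set.Finite.subset (s := Set.Icc (-(4*k*n)) (4*k*n) ×ˢ Set.Icc (-(4*n)) (4*n))
    ((Set.finite_Icc _ _).prod (Set.finite_Icc _ _))
  rintro ⟨x, y⟩ h
  have hk' : (2:ℤ) ≤ k := by exact_mod_cast hk
  simp only [RS, Nm, Set.mem_setOf_eq] at h
  have h1 : y ^ 2 ≤ 4 * n := by nlinarith [sq_nonneg (2*x+y), mul_nonneg (by linarith : (0:ℤ) ≤ 4*k-2) (sq_nonneg y)]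
  have h2 : x ^ 2 ≤ 4 * k * n := by
    nlinarith [sq_nonneg (2*k*y+x), mul_nonneg (by linarith : (0:ℤ) ≤ 4*k-2) (sq_nonneg x)]
  have hx : |x| ≤ x ^ 2 := by
    rw [← sq_abs]; nlinarith [abs_nonneg x, mul_self_nonneg (|x|), Int.le_self_sq |x|]
  have hy : |y| ≤ y ^ 2 := by
    rw [← sq_abs]; nlinarith [abs_nonneg y, Int.le_self_sq |y|]
  rw [abs_le] at hx hy
  simp only [Set.mem_prod, Set.mem_Icc]
  refine ⟨⟨?_, ?_⟩, ⟨?_, ?_⟩⟩ <;> linarith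

lemma fForm_eq (k n : ℕ) (hn : n ≠ 0) : fForm k n = rr k n / 2 := by
  unfold fForm rr
  rw [if_neg hn]
  rfl

lemma rr_one (k : ℕ) (hk : 2 ≤ k) : rr k 1 = 2 := by
  have : RS k 1 = {((1:ℤ),(0:ℤ)), (-1,0)} := by
    ext ⟨x, y⟩
    have hk' : (2:ℤ) ≤ k := by exact_mod_cast hk
    simp only [RS, Nm, Set.mem_setOf_eq, Set.mem_insert_iff, Set.mem_singleton_iff, Prod.mk.injEq]
    constructor
    · intro h
      have h1 : y ^ 2 < 1 := by
        nlinarith [sq_nonneg (2*x+y), mul_nonneg (by linarith : (0:ℤ) ≤ 4*k-8) (sq_nonneg y)]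
      have hy : y = 0 := by nlinarith [sq_nonneg y, pow_eq_zero_iff (n := 2) (two_ne_zero) (a := y)]
      subst hy
      have : x ^ 2 = 1 := by linarith
      rcases (by simpa using this : x = 1 ∨ x = -1) with h | h
      all_goals simp [h]
    · rintro (⟨rfl, rfl⟩ | ⟨rfl, rfl⟩) <;> norm_num
  rw [rr, this, Set.ncard_pair (by simp)]

lemma md_inj (k : ℕ) (π : ℤ × ℤ) (h : Nm k π ≠ 0) : Function.Injective (md k π) := by
  intro z w hzw
  have := congrArg (md k (cj π)) hzw
  rw [md_cj', md_cj', Prod.mk.injEq] at this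
  ext
  · exact mul_left_cancel₀ h this.1
  · exact mul_left_cancel₀ h this.2

lemma key_dvd (k : ℕ) (p : ℕ) (hp : p.Prime) (π z : ℤ × ℤ) (hπ : Nm k π = p) (hz : (p:ℤ) ∣ Nm k z)
    (hd : (p:ℤ) ∣ π.1 * z.2 - π.2 * z.1) : ∃ w, z = md k π w := by
  have hpi : Prime (p:ℤ) := Nat.prime_iff_prime_int.mp hp
  have hp0 : (p:ℤ) ≠ 0 := hpi.ne_zero
  set t := md k (cj π) z with ht
  have ht2 : t.2 = π.1 * z.2 - π.2 * z.1 := by simp only [ht, md, cj]; ring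
  rw [← ht2] at hd
  have hN : (p:ℤ) ∣ Nm k t := by rw [ht, Nm_md]; exact hz.mul_left _
  have h1 : (p:ℤ) ∣ t.1 := by
    have : t.1 ^ 2 = Nm k t - t.2 * (t.1 + k * t.2) := by simp only [Nm]; ring
    exact hpi.dvd_of_dvd_pow (this ▸ dvd_sub hN (hd.mul_right _))
  obtain ⟨a, ha⟩ := h1
  obtain ⟨b, hb⟩ := hd
  refine ⟨(a, b), ?_⟩
  have h := md_cj k π z
  rw [← ht, hπ] at h
  have h' : md k π t = ((p:ℤ) * (md k π (a,b)).1, (p:ℤ) * (md k π (a,b)).2) := by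
    simp only [md, ha, hb, Prod.mk.injEq]; constructor <;> ring
  rw [h', Prod.mk.injEq] at h
  ext
  · exact (mul_left_cancel₀ hp0 h.1).symm
  · exact (mul_left_cancel₀ hp0 h.2).symm

lemma not_dvd_im (k p : ℕ) (hp : p.Prime) (π : ℤ × ℤ) (hπ : Nm k π = p) : ¬ (p:ℤ) ∣ π.2 := by
  have hpi : Prime (p:ℤ) := Nat.prime_iff_prime_int.mp hp
  rintro ⟨b, hb⟩
  have h1 : (p:ℤ) ∣ π.1 := by
    have : π.1 ^ 2 = p - π.2 * (π.1 + k * π.2) := by rw [← hπ]; simp only [Nm]; ring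
    exact hpi.dvd_of_dvd_pow (this ▸ dvd_sub dvd_rfl ((Dvd.intro _ hb.symm).mul_right _))
  obtain ⟨a, ha⟩ := h1
  have : (p:ℤ) * (p * Nm k (a,b)) = p * 1 := by
    rw [mul_one]; nth_rewrite 3 [← hπ]; simp only [Nm, ha, hb]; ring
  have := mul_left_cancel₀ hpi.ne_zero this
  exact hpi.not_dvd_one (Dvd.intro _ this)

lemma image_eq (k : ℕ) (p : ℤ) (hp : p ≠ 0) (π : ℤ × ℤ) (hπ : Nm k π = p) (n : ℤ) :
    md k π '' RS k n = {z | Nm k z = p * n ∧ ∃ w, z = md k π w} := by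
  ext z
  constructor
  · rintro ⟨w, hw, rfl⟩
    exact ⟨by rw [Nm_md, hπ]; rw [RS, Set.mem_setOf_eq] at hw; rw [hw], w, rfl⟩
  · rintro ⟨h, w, rfl⟩
    refine ⟨w, ?_, rfl⟩
    rw [Nm_md, hπ] at h
    exact mul_left_cancel₀ hp h

lemma scal_card (k : ℕ) (p : ℤ) (hp : p ≠ 0) (n : ℤ) :
    {z : ℤ × ℤ | Nm k z = p ^ 2 * n ∧ p ∣ z.1 ∧ p ∣ z.2}.ncard = rr k n := by
  have : {z : ℤ × ℤ | Nm k z = p ^ 2 * n ∧ p ∣ z.1 ∧ p ∣ z.2} = (fun w : ℤ × ℤ => (p * w.1, p * w.2)) '' RS k n := by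
    ext ⟨x, y⟩
    constructor
    · rintro ⟨h, ⟨a, ha⟩, ⟨b, hb⟩⟩
      simp only at ha hb
      subst ha hb
      refine ⟨(a, b), ?_, rfl⟩
      have : p ^ 2 * Nm k (a, b) = p ^ 2 * n := by rw [← h]; simp only [Nm]; ring
      exact mul_left_cancel₀ (pow_ne_zero 2 hp) this
    · rintro ⟨w, hw, h⟩
      rw [Prod.mk.injEq] at h
      obtain ⟨rfl, rfl⟩ := h
      refine ⟨?_, ⟨_, rfl⟩, ⟨_, rfl⟩⟩
      rw [RS, Set.mem_setOf_eq] at hw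
      rw [← hw]; simp only [Nm]; ring
  rw [this, Set.ncard_image_of_injective, rr]
  intro z w h
  simp only [Prod.mk.injEq] at h
  ext
  · exact mul_left_cancel₀ hp h.1
  · exact mul_left_cancel₀ hp h.2

lemma split_rec (k : ℕ) (hk : 2 ≤ k) (p : ℕ) (hp : p.Prime) (hpq : ¬ (p:ℤ) ∣ 4 * k - 1)
    (π : ℤ × ℤ) (hπ : Nm k π = p) (n : ℤ) :
    rr k (p * n) + {z : ℤ × ℤ | Nm k z = p * n ∧ (p:ℤ) ∣ z.1 ∧ (p:ℤ) ∣ z.2}.ncard = 2 * rr k n := by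
  have hpi : Prime (p:ℤ) := Nat.prime_iff_prime_int.mp hp
  have hp0 : (p:ℤ) ≠ 0 := hpi.ne_zero
  have hπ' : Nm k (cj π) = p := by rw [Nm_cj, hπ]
  have hb := not_dvd_im k p hp π hπ
  set s := md k π '' RS k n with hs
  set t := md k (cj π) '' RS k n with ht
  have hs' := image_eq k p hp0 π hπ n
  have ht' := image_eq k p hp0 (cj π) hπ' n
  have hfs : s.Finite := (RS_finite k hk n).image _
  have hft : t.Finite := (RS_finite k hk n).image _
  have c1 : s.ncard = rr k n := Set.ncard_image_of_injective _ (md_inj k π (by rw [hπ]; exact hp0))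
  have c2 : t.ncard = rr k n := Set.ncard_image_of_injective _ (md_inj k _ (by rw [hπ']; exact hp0))
  have hN := hπ
  simp only [Nm] at hN
  have hu : s ∪ t = RS k (p * n) := by
    rw [hs, ht, hs', ht']
    ext z
    simp only [Set.mem_union, Set.mem_setOf_eq, RS]
    constructor
    · rintro (h | h) <;> exact h.1
    · intro h
      have hdz : (p:ℤ) ∣ Nm k z := h ▸ dvd_mul_right _ _
      have hprod : (p:ℤ) ∣ (π.1 * z.2 - π.2 * z.1) * ((cj π).1 * z.2 - (cj π).2 * z.1) := by
        have : (π.1 * z.2 - π.2 * z.1) * ((cj π).1 * z.2 - (cj π).2 * z.1)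
          = p * z.2 ^ 2 - π.2 ^ 2 * Nm k z := by
          rw [← hN]; simp only [Nm, cj]; ring
        rw [this]
        exact dvd_sub (dvd_mul_right _ _) (hdz.mul_left _)
      rcases hpi.dvd_or_dvd hprod with h1 | h1
      · exact Or.inl ⟨h, key_dvd k p hp π z hπ hdz h1⟩
      · exact Or.inr ⟨h, key_dvd k p hp _ z hπ' hdz h1⟩
  have hi : s ∩ t = {z : ℤ × ℤ | Nm k z = p * n ∧ (p:ℤ) ∣ z.1 ∧ (p:ℤ) ∣ z.2} := by
    rw [hs, ht, hs', ht']
    ext z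
    simp only [Set.mem_inter_iff, Set.mem_setOf_eq]
    constructor
    · rintro ⟨⟨h, w, hw⟩, -, w', hw'⟩
      refine ⟨h, ?_⟩
      have e1 := md_cj' k π w
      have e2 := md_cj k π w'
      rw [← hw, hπ] at e1
      rw [← hw', hπ] at e2
      have d1 : (p:ℤ) ∣ π.1 * z.2 - π.2 * z.1 := by
        have := congrArg Prod.snd e1
        simp only [md, cj] at this
        refine ⟨w.2, ?_⟩; rw [← this]; ring
      have d2 : (p:ℤ) ∣ π.1 * z.2 + π.2 * z.1 + π.2 * z.2 := by
        have := congrArg Prod.snd e2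
        simp only [md] at this
        exact ⟨w'.2, this⟩
      have d3 : (p:ℤ) ∣ (2 * π.1 + π.2) * z.2 := by
        have := dvd_add d1 d2
        have e : (π.1 * z.2 - π.2 * z.1) + (π.1 * z.2 + π.2 * z.1 + π.2 * z.2) = (2 * π.1 + π.2) * z.2 := by ring
        rwa [e] at this
      have d4 : ¬ (p:ℤ) ∣ 2 * π.1 + π.2 := by
        intro hd
        have : (4 * (k:ℤ) - 1) * π.2 ^ 2 = 4 * p - (2 * π.1 + π.2) * (2 * π.1 + π.2) := by rw [← hN]; ring
        have hd2 : (p:ℤ) ∣ (4 * (k:ℤ) - 1) * π.2 ^ 2 := by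
          rw [this]; exact dvd_sub (dvd_mul_left _ _) (hd.mul_right _)
        rcases hpi.dvd_or_dvd hd2 with h1 | h1
        · exact hpq h1
        · exact hb (hpi.dvd_of_dvd_pow h1)
      have d5 := (hpi.dvd_or_dvd d3).resolve_left d4
      have d6 : (p:ℤ) ∣ π.2 * z.1 := by
        have := dvd_sub (d5.mul_left π.1) d1
        have e : π.1 * z.2 - (π.1 * z.2 - π.2 * z.1) = π.2 * z.1 := by ring
        rwa [e] at this
      exact ⟨(hpi.dvd_or_dvd d6).resolve_left hb, d5⟩
    · rintro ⟨h, hx, hy⟩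
      have hdz : (p:ℤ) ∣ Nm k z := h ▸ dvd_mul_right _ _
      exact ⟨⟨h, key_dvd k p hp π z hπ hdz (dvd_sub (hy.mul_left _) (hx.mul_left _))⟩,
        h, key_dvd k p hp _ z hπ' hdz (dvd_sub (hy.mul_left _) (hx.mul_left _))⟩
  have := Set.ncard_union_add_ncard_inter s t hfs hft
  rw [hu, hi, c1, c2] at this
  rw [rr, this]; ring

lemma split_pow (k : ℕ) (hk : 2 ≤ k) (p : ℕ) (hp : p.Prime) (hpq : ¬ (p:ℤ) ∣ 4 * k - 1)
    (π : ℤ × ℤ) (hπ : Nm k π = p) (m : ℤ) (hm : ¬ (p:ℤ) ∣ m) (a : ℕ) :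
    rr k (p ^ a * m) = (a + 1) * rr k m := by
  have hpi : Prime (p:ℤ) := Nat.prime_iff_prime_int.mp hp
  have hp0 : (p:ℤ) ≠ 0 := hpi.ne_zero
  suffices h : rr k (p ^ a * m) = (a + 1) * rr k m ∧ rr k (p ^ (a+1) * m) = (a + 2) * rr k m from h.1
  induction a with
  | zero =>
    refine ⟨by simp, ?_⟩
    have := split_rec k hk p hp hpq π hπ m
    have he : {z : ℤ × ℤ | Nm k z = p * m ∧ (p:ℤ) ∣ z.1 ∧ (p:ℤ) ∣ z.2} = ∅ := by
      ext ⟨x, y⟩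
      simp only [Set.mem_setOf_eq, Set.mem_empty_iff_false, iff_false]
      rintro ⟨h, ⟨a, rfl⟩, ⟨b, rfl⟩⟩
      apply hm
      have : (p:ℤ) * (p * Nm k (a, b)) = p * m := by rw [← h]; simp only [Nm]; ring
      exact ⟨_, (mul_left_cancel₀ hp0 this).symm⟩
    rw [he, Set.ncard_empty] at this
    simpa using this
  | succ b ih =>
    refine ⟨by rw [ih.2], ?_⟩
    have h1 := split_rec k hk p hp hpq π hπ (p ^ (b+1) * m)
    have h2 := scal_card k p hp0 (p ^ b * m)
    rw [show (p:ℤ) ^ 2 * (p ^ b * m) = p * (p ^ (b+1) * m) by ring] at h2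
    rw [h2, ih.1, ih.2] at h1
    rw [show (p:ℤ) ^ (b+1+1) * m = p * (p ^ (b+1) * m) by ring]
    have : ((b:ℕ) + 1 + 2) * rr k m + (b + 1) * rr k m = 2 * ((b + 2) * rr k m) := by ring
    omega

/-- every element of norm divisible by `p` is divisible by `p` -/
lemma inert_pow (k : ℕ) (p : ℕ) (hp : p.Prime)
    (hin : ∀ z : ℤ × ℤ, (p:ℤ) ∣ Nm k z → (p:ℤ) ∣ z.1 ∧ (p:ℤ) ∣ z.2) (m : ℤ) (hm : ¬ (p:ℤ) ∣ m) (a : ℕ) :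
    rr k (p ^ a * m) = 0 ∨ rr k (p ^ a * m) = rr k m := by
  have hpi : Prime (p:ℤ) := Nat.prime_iff_prime_int.mp hp
  have hp0 : (p:ℤ) ≠ 0 := hpi.ne_zero
  induction a using Nat.strong_induction_on with
  | _ a ih =>
    match a with
    | 0 => right; simp
    | 1 =>
      left
      have : RS k (p ^ 1 * m) = ∅ := by
        ext ⟨x, y⟩
        simp only [RS, Set.mem_setOf_eq, Set.mem_empty_iff_false, iff_false]
        intro h
        obtain ⟨⟨a, ha⟩, ⟨b, hb⟩⟩ := hin (x, y) ⟨m, by rw [h]; ring⟩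
        simp only at ha hb
        subst ha hb
        apply hm
        have : (p:ℤ) * (p * Nm k (a, b)) = p * m := by rw [pow_one] at h; rw [← h]; simp only [Nm]; ring
        exact ⟨_, (mul_left_cancel₀ hp0 this).symm⟩
      rw [rr, this, Set.ncard_empty]
    | b + 2 =>
      have h2 := scal_card k p hp0 (p ^ b * m)
      have : {z : ℤ × ℤ | Nm k z = p ^ 2 * (p ^ b * m) ∧ (p:ℤ) ∣ z.1 ∧ (p:ℤ) ∣ z.2} = RS k (p ^ (b+2) * m) := by
        ext z
        simp only [RS, Set.mem_setOf_eq]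
        rw [show (p:ℤ) ^ 2 * (p ^ b * m) = p ^ (b+2) * m by ring]
        constructor
        · exact fun h => h.1
        · exact fun h => ⟨h, hin z ⟨p ^ (b+1) * m, by rw [h]; ring⟩⟩
      rw [this] at h2
      have h3 : rr k (p ^ (b+2) * m) = rr k (p ^ b * m) := h2
      rw [h3]
      exact ih b (by omega)

lemma ram_pow (k : ℕ) (p : ℕ) (hp : p.Prime) (π : ℤ × ℤ) (hπ : Nm k π = p)
    (hin : ∀ z : ℤ × ℤ, (p:ℤ) ∣ Nm k z → ∃ w, z = md k π w) (m : ℤ) (a : ℕ) :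
    rr k (p ^ a * m) = rr k m := by
  have hpi : Prime (p:ℤ) := Nat.prime_iff_prime_int.mp hp
  have hp0 : (p:ℤ) ≠ 0 := hpi.ne_zero
  induction a with
  | zero => simp
  | succ b ih =>
    rw [← ih]
    have h1 := image_eq k p hp0 π hπ (p ^ b * m)
    have : {z | Nm k z = p * (p ^ b * m) ∧ ∃ w, z = md k π w} = RS k (p ^ (b+1) * m) := by
      ext z
      simp only [RS, Set.mem_setOf_eq]
      rw [show (p:ℤ) * (p ^ b * m) = p ^ (b+1) * m by ring]
      constructor
      · exact fun h => h.1
      · exact fun h => ⟨h, hin z ⟨p ^ b * m, by rw [h]; ring⟩⟩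
    rw [rr, ← this, ← h1, Set.ncard_image_of_injective _ (md_inj k π (by rw [hπ]; exact hp0)), rr]

end Pf


namespace Pf

def KKS : Set ℕ := {2, 3, 5, 11, 17, 41}

lemma md_comm (k : ℕ) (z w : ℤ × ℤ) : md k z w = md k w z := by
  simp only [md, Prod.mk.injEq]; constructor <;> ring

lemma KKS_two (k : ℕ) (hk : k ∈ KKS) : 2 ≤ k := by
  rcases hk with h | h | h | h | h | h <;> (try simp only [Set.mem_singleton_iff] at h) <;> omega

lemma small_check (k : ℕ) (hk : k ∈ KKS) (a c t : ℤ) (ha : 0 < a)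
    (h : t ^ 2 + t + k = a * c) (ht : |2 * t + 1| ≤ a) (hac : a ≤ c) : a = 1 := by
  rw [abs_le] at ht
  have h3 : 3 * a ^ 2 ≤ 4 * k - 1 := by nlinarith
  have hk41 : (k:ℤ) ≤ 41 := by
    have : k ≤ 41 := by
      rcases hk with h | h | h | h | h | h <;> (try simp only [Set.mem_singleton_iff] at h) <;> omega
    exact_mod_cast this
  have ha7 : a ≤ 7 := by nlinarith
  have ht1 : -4 ≤ t := by omega
  have ht2 : t ≤ 3 := by omega
  rcases hk with hk | hk | hk | hk | hk | hk <;> (try simp only [Set.mem_singleton_iff] at hk) <;>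
    subst hk <;> push_cast at h h3 <;>
    interval_cases a <;> interval_cases t <;> first | rfl | omega

lemma descent (k : ℕ) (hk : k ∈ KKS) (N : ℕ) : ∀ a c t : ℤ, a = N → 0 < a → 0 < c →
    t ^ 2 + t + k = a * c → ∃ α β, md k α β = (t, 1) ∧ Nm k α = a := by
  have hk2 := KKS_two k hk
  have hk' : (2:ℤ) ≤ k := by exact_mod_cast hk2
  induction N using Nat.strong_induction_on with
  | _ N ih =>
    intro a c t haN ha hc h
    -- shift
    obtain ⟨j, hj⟩ : ∃ j : ℤ, |2 * (t - j * a) + 1| ≤ a := by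
      refine ⟨(2 * t + 1 + a) / (2 * a), ?_⟩
      have h1 := Int.emod_add_mul_ediv (2 * t + 1 + a) (2 * a)
      have h2 := Int.emod_nonneg (2 * t + 1 + a) (by omega : 2 * a ≠ 0)
      have h3 := Int.emod_lt_of_pos (2 * t + 1 + a) (by omega : 0 < 2 * a)
      rw [abs_le]
      constructor <;> nlinarith
    set s := t - j * a with hs
    set d := c - j * (2 * t + 1) + j ^ 2 * a with hd
    have hsd : s ^ 2 + s + k = a * d := by
      rw [hs, hd]; linear_combination h
    have hd0 : 0 < d := by
      have : 0 < a * d := by rw [← hsd]; nlinarith [sq_nonneg (2 * s + 1)]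
      exact pos_of_mul_pos_right this ha.le |> fun h => h
    have key : ∃ α β, md k α β = (s, 1) ∧ Nm k α = a := by
      by_cases hda : d < a
      · obtain ⟨α, β, h1, h2⟩ := ih d.toNat (by omega) d a s (by omega) hd0 ha (by rw [hsd]; ring)
        refine ⟨β, α, by rw [md_comm, h1], ?_⟩
        have := Nm_md k α β
        rw [h1, h2] at this
        have h3 : Nm k (s, 1) = d * a := by simp only [Nm]; linear_combination hsd
        rw [h3] at this
        exact (mul_left_cancel₀ hd0.ne' this).symm
      · have := small_check k hk a d s ha hsd hj (not_lt.mp hda)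
        refine ⟨(1, 0), (s, 1), by simp [md], by simp [Nm, this]⟩
    obtain ⟨α, β, h1, h2⟩ := key
    refine ⟨α, (β.1 + j * (cj α).1, β.2 + j * (cj α).2), ?_, h2⟩
    simp only [md, Prod.mk.injEq] at h1
    simp only [Nm] at h2
    simp only [md, cj, Prod.mk.injEq]
    constructor
    · linear_combination h1.1 + j * h2 + hs
    · linear_combination h1.2

lemma split_elt (k : ℕ) (hk : k ∈ KKS) (p : ℕ) (hp : p.Prime) (t : ℤ) (ht : (p:ℤ) ∣ t ^ 2 + t + k) :
    ∃ π, Nm k π = p := by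
  obtain ⟨c, hc⟩ := ht
  have hk' : (2:ℤ) ≤ k := by exact_mod_cast KKS_two k hk
  have hp0 : (0:ℤ) < p := by exact_mod_cast hp.pos
  have hc0 : 0 < c := by
    have : 0 < (p:ℤ) * c := by rw [← hc]; nlinarith [sq_nonneg (2 * t + 1)]
    exact pos_of_mul_pos_right this hp0.le
  obtain ⟨α, β, _, h⟩ := descent k hk p p c t rfl hp0 hc0 hc
  exact ⟨α, h⟩

lemma inert_elt (k : ℕ) (p : ℕ) (hp : p.Prime) (ht : ¬ ∃ t : ℤ, (p:ℤ) ∣ t ^ 2 + t + k)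
    (z : ℤ × ℤ) (hz : (p:ℤ) ∣ Nm k z) : (p:ℤ) ∣ z.1 ∧ (p:ℤ) ∣ z.2 := by
  have hpi : Prime (p:ℤ) := Nat.prime_iff_prime_int.mp hp
  by_cases h2 : (p:ℤ) ∣ z.2
  · refine ⟨?_, h2⟩
    have : z.1 ^ 2 = Nm k z - z.2 * (z.1 + k * z.2) := by simp only [Nm]; ring
    exact hpi.dvd_of_dvd_pow (this ▸ dvd_sub hz (h2.mul_right _))
  · exfalso
    apply ht
    have hco : IsCoprime (p:ℤ) z.2 := (Prime.coprime_iff_not_dvd hpi).mpr h2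
    obtain ⟨a, b, hab⟩ := hco
    refine ⟨z.1 * b, ?_⟩
    -- b * z.2 = 1 - a p
    have : (z.1 * b) ^ 2 + z.1 * b + k = b ^ 2 * Nm k z + p * (a * (z.1 * b) + k * a * (1 + b * z.2)) := by
      have e : b * z.2 = 1 - a * p := by linear_combination hab
      simp only [Nm]
      linear_combination (-(z.1*b) - k - k * b * z.2) * e
    rw [this]
    exact dvd_add (hz.mul_left _) (dvd_mul_right _ _)

lemma ram_elt (k : ℕ) (hk : 1 ≤ k) (hp : (4 * k - 1).Prime) :
    Nm k (-1, 2) = ((4 * k - 1 : ℕ) : ℤ) ∧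
    ∀ z : ℤ × ℤ, ((4 * k - 1 : ℕ) : ℤ) ∣ Nm k z → ∃ w, z = md k (-1, 2) w := by
  have e : ((4 * k - 1 : ℕ) : ℤ) = 4 * k - 1 := by omega
  have h0 : Nm k (-1, 2) = ((4 * k - 1 : ℕ) : ℤ) := by rw [e]; simp only [Nm]; ring
  refine ⟨h0, fun z hz => ?_⟩
  have hpi : Prime (((4 * k - 1 : ℕ)) : ℤ) := Nat.prime_iff_prime_int.mp hp
  refine key_dvd k _ hp (-1, 2) z h0 hz ?_
  have : (2 * z.1 + z.2) ^ 2 = 4 * Nm k z - ((4 * k - 1 : ℕ) : ℤ) * z.2 ^ 2 := by rw [e]; simp only [Nm]; ring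
  have h1 := hpi.dvd_of_dvd_pow (this ▸ dvd_sub (hz.mul_left 4) (dvd_mul_right _ _))
  have e2 : ((-1 : ℤ), (2:ℤ)).1 * z.2 - ((-1 : ℤ), (2:ℤ)).2 * z.1 = -(2 * z.1 + z.2) := by simp only; ring
  rw [e2]; exact h1.neg_right

/-- The predicate: split prime. -/
def Spl (k p : ℕ) : Prop := p.Prime ∧ p ≠ 4 * k - 1 ∧ ∃ t : ℤ, (p:ℤ) ∣ t ^ 2 + t + k

lemma KKS_prime (k : ℕ) (hk : k ∈ KKS) : (4 * k - 1).Prime := by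
  rcases hk with h | h | h | h | h | h <;> (try simp only [Set.mem_singleton_iff] at h) <;> subst h <;> norm_num

lemma rr_step (k : ℕ) (hk : k ∈ KKS) (p : ℕ) (hp : p.Prime) (m : ℤ) (hm : ¬ (p:ℤ) ∣ m) (a : ℕ) :
    (Spl k p → rr k (p ^ a * m) = (a + 1) * rr k m) ∧
    (¬ Spl k p → rr k (p ^ a * m) = 0 ∨ rr k (p ^ a * m) = rr k m) := by
  have hk2 := KKS_two k hk
  have hq := KKS_prime k hk
  constructor
  · rintro ⟨-, hne, t, ht⟩
    obtain ⟨π, hπ⟩ := split_elt k hk p hp t ht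
    refine split_pow k hk2 p hp ?_ π hπ m hm a
    intro h
    have e : ((4 * k - 1 : ℕ) : ℤ) = 4 * k - 1 := by omega
    rw [← e] at h
    exact hne ((Nat.prime_dvd_prime_iff_eq hp hq).mp (by exact_mod_cast h))
  · intro h
    by_cases hpq : p = 4 * k - 1
    · right
      subst hpq
      obtain ⟨h1, h2⟩ := ram_elt k (by omega) hq
      exact ram_pow k _ hp (-1, 2) h1 h2 m a
    · apply inert_pow k p hp _ m hm a
      apply inert_elt k p hp
      intro ht
      exact h ⟨hp, hpq, ht⟩

open Classical in
lemma rr_prod (k : ℕ) (hk : k ∈ KKS) (n : ℕ) : n ≠ 0 →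
    (rr k n = 0 ∨ rr k n = 2 * ∏ p ∈ n.primeFactors.filter (Spl k), (n.factorization p + 1)) ∧
    ((∀ p ∈ n.primeFactors, Spl k p) → rr k n = 2 * ∏ p ∈ n.primeFactors, (n.factorization p + 1)) := by
  have hk2 := KKS_two k hk
  induction n using Nat.recOnPrimePow with
  | zero => intro h; exact absurd rfl h
  | one => intro _; simp [rr_one k hk2]
  | prime_pow_mul m p a hp hpm ha ih =>
    intro hn
    have hm : m ≠ 0 := by rintro rfl; simp at hn
    obtain ⟨ih1, ih2⟩ := ih hm
    have h := rr_step k hk p hp m (fun h => hpm (by exact_mod_cast h)) a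
    have e : (((p ^ a * m : ℕ)) : ℤ) = (p:ℤ) ^ a * m := by push_cast; rfl
    have hco : Nat.Coprime (p ^ a) m := Nat.Coprime.pow_left a ((Nat.Prime.coprime_iff_not_dvd hp).mpr hpm)
    have epf : (p ^ a * m).primeFactors = insert p m.primeFactors := by
      rw [hco.primeFactors_mul, Nat.primeFactors_prime_pow ha.ne' hp]; rfl
    have hpn : p ∉ m.primeFactors := fun h => hpm (Nat.dvd_of_mem_primeFactors h)
    have f1 : (p ^ a * m).factorization p = a := by
      rw [Nat.factorization_mul (pow_ne_zero _ hp.ne_zero) hm, hp.factorization_pow]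
      simp [Nat.factorization_eq_zero_of_not_dvd hpm]
    have f2 : ∀ r ∈ m.primeFactors, (p ^ a * m).factorization r = m.factorization r := by
      intro r hr
      rw [Nat.factorization_mul (pow_ne_zero _ hp.ne_zero) hm, hp.factorization_pow]
      have : p ≠ r := fun h => hpn (h ▸ hr)
      simp [this]
    rw [e, epf]
    have g1 : ∏ r ∈ m.primeFactors.filter (Spl k), ((p ^ a * m).factorization r + 1)
        = ∏ r ∈ m.primeFactors.filter (Spl k), (m.factorization r + 1) :=
      Finset.prod_congr rfl fun r hr => by rw [f2 r (Finset.mem_filter.mp hr).1]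
    have g2 : ∏ r ∈ m.primeFactors, ((p ^ a * m).factorization r + 1)
        = ∏ r ∈ m.primeFactors, (m.factorization r + 1) :=
      Finset.prod_congr rfl fun r hr => by rw [f2 r hr]
    rw [Finset.prod_insert hpn, f1, g2]
    by_cases hs : Spl k p
    · rw [Finset.filter_insert, if_pos hs, Finset.prod_insert (by simp [hpn]), f1, g1, h.1 hs]
      refine ⟨?_, fun hall => ?_⟩
      · rcases ih1 with h0 | h0
        · left; rw [h0, mul_zero]
        · right; rw [h0]; ring
      · rw [ih2 (fun r hr => hall r (Finset.mem_insert_of_mem hr))]; ring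
    · rw [Finset.filter_insert, if_neg hs, g1]
      refine ⟨?_, fun hall => absurd (hall p (Finset.mem_insert_self _ _)) hs⟩
      rcases h.2 hs with h0 | h0
      · exact Or.inl h0
      · rw [h0]; exact ih1

open Classical in
lemma fForm_prod (k : ℕ) (hk : k ∈ KKS) (n : ℕ) (hn : n ≠ 0) :
    fForm k n = 0 ∨ fForm k n = ∏ p ∈ n.primeFactors.filter (Spl k), (n.factorization p + 1) := by
  rw [fForm_eq k n hn]
  rcases (rr_prod k hk n hn).1 with h | h
  · left; rw [h]
  · right; rw [h]; omega

lemma fForm_prod_split (k : ℕ) (hk : k ∈ KKS) (n : ℕ) (hn : n ≠ 0) (h : ∀ p ∈ n.primeFactors, Spl k p) :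
    fForm k n = ∏ p ∈ n.primeFactors, (n.factorization p + 1) := by
  rw [fForm_eq k n hn, (rr_prod k hk n hn).2 h]; omega

lemma Spl_odd_iff (k : ℕ) (p : ℕ) [Fact p.Prime] (hp2 : p ≠ 2) :
    (∃ t : ℤ, (p:ℤ) ∣ t ^ 2 + t + k) ↔ IsSquare (((-(4 * k - 1) : ℤ)) : ZMod p) := by
  have hp : p.Prime := Fact.out
  have h2 : (2 : ZMod p) ≠ 0 := by
    intro h
    have : ((2:ℕ) : ZMod p) = 0 := by exact_mod_cast h
    rw [ZMod.natCast_eq_zero_iff] at this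
    exact hp2 ((Nat.prime_dvd_prime_iff_eq hp Nat.prime_two).mp this)
  constructor
  · rintro ⟨t, ht⟩
    rw [← ZMod.intCast_zmod_eq_zero_iff_dvd] at ht
    push_cast at ht
    refine ⟨2 * t + 1, ?_⟩
    push_cast
    linear_combination -4 * ht
  · rintro ⟨s, hs⟩
    obtain ⟨t, ht⟩ := ZMod.intCast_surjective ((s - 1) / 2)
    refine ⟨t, ?_⟩
    rw [← ZMod.intCast_zmod_eq_zero_iff_dvd]
    push_cast
    rw [ht]
    push_cast at hs
    field_simp
    linear_combination -hs

lemma Spl_iff_char (k : ℕ) (hk : k ∈ KKS) [Fact (4 * k - 1).Prime] (p : ℕ) (hp : p.Prime) :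
    Spl k p ↔ quadraticChar (ZMod (4 * k - 1)) (p : ZMod (4 * k - 1)) = 1 := by
  have hk2 := KKS_two k hk
  have hq : (4 * k - 1).Prime := Fact.out
  haveI : Fact p.Prime := ⟨hp⟩
  by_cases hpq : p = 4 * k - 1
  · subst hpq
    simp [Spl]
  have hne : (p : ZMod (4 * k - 1)) ≠ 0 := by
    rw [Ne, ZMod.natCast_eq_zero_iff]
    intro h
    exact hpq ((Nat.prime_dvd_prime_iff_eq hq hp).mp h).symm
  have e1 : Spl k p ↔ ∃ t : ℤ, (p:ℤ) ∣ t ^ 2 + t + k := by simp [Spl, hp, hpq]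
  rw [e1]
  by_cases hp2 : p = 2
  · subst hp2
    rw [quadraticChar_one_iff_isSquare hne]
    have := ZMod.exists_sq_eq_two_iff (p := 4 * k - 1) (by omega)
    push_cast
    rw [this]
    have e2 : (∃ t : ℤ, (2:ℤ) ∣ t ^ 2 + t + k) ↔ 2 ∣ k := by
      constructor
      · rintro ⟨t, ht⟩
        have : (2:ℤ) ∣ t ^ 2 + t := by
          have := Int.even_mul_succ_self t
          rw [show t ^ 2 + t = t * (t+1) by ring]; exact this.two_dvd
        have := (dvd_add_right this).mp ht
        exact_mod_cast this
      · intro h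
        exact ⟨0, by simpa using (by exact_mod_cast h : (2:ℤ) ∣ k)⟩
    rw [e2]
    rcases hk with h | h | h | h | h | h <;> (try simp only [Set.mem_singleton_iff] at h) <;> subst h <;> norm_num
  · rw [Spl_odd_iff k p hp2]
    have e : ((4 * k - 1 : ℕ) : ℤ) = 4 * k - 1 := by omega
    have hneg : ((-(4 * k - 1) : ℤ)) = (-1) * ((4 * k - 1 : ℕ) : ℤ) := by rw [e]; ring
    have hqp : ((((4 * k - 1 : ℕ) : ℤ)) : ZMod p) ≠ 0 := by
      rw [Ne, ZMod.intCast_zmod_eq_zero_iff_dvd]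
      intro h
      exact hpq ((Nat.prime_dvd_prime_iff_eq hp hq).mp (by exact_mod_cast h))
    rw [← legendreSym.eq_one_iff p (by rw [hneg]; push_cast; simpa using hqp), hneg, legendreSym.mul,
      legendreSym.at_neg_one hp2]
    have e3 : quadraticChar (ZMod (4 * k - 1)) (p : ZMod (4 * k - 1)) = legendreSym (4 * k - 1) p := by
      simp [legendreSym]
    rw [e3]
    rcases hp.eq_two_or_odd with h | h
    · exact absurd h hp2
    rcases (by omega : p % 4 = 1 ∨ p % 4 = 3) with h4 | h4
    · rw [ZMod.χ₄_nat_one_mod_four h4, one_mul, legendreSym.quadratic_reciprocity_one_mod_four h4 (by omega)]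
    · rw [ZMod.χ₄_nat_three_mod_four h4, legendreSym.quadratic_reciprocity_three_mod_four h4 (by omega)]
      simp

lemma Phi_congr (P Q : ℕ → Prop) (h : ∀ p, P p ↔ Q p) : Phi P = Phi Q := by
  have : P = Q := funext fun p => propext (h p)
  rw [this]

/-- Summary of the analytic input. -/
lemma phi_main (k : ℕ) (hk : k ∈ KKS) : ∃ C > 0, ∃ z0 : ℝ, ∀ z ≥ z0,
    |Phi (Spl k) z - z ^ 2 / (4 * Real.log z)| ≤ C * z ^ 2 * (Real.log (Real.log z) / Real.log z ^ 2) := by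
  haveI : Fact (4 * k - 1).Prime := ⟨KKS_prime k hk⟩
  haveI : NeZero (4 * k - 1) := ⟨(KKS_prime k hk).ne_zero⟩
  have hk2 := KKS_two k hk
  set χ : DirichletCharacter ℂ (4 * k - 1) := (quadraticChar (ZMod (4 * k - 1))).ringHomComp (Int.castRingHom ℂ) with hχ
  have hinj : Function.Injective (Int.castRingHom ℂ) := Int.cast_injective
  have h1 : χ ≠ 1 := by
    rw [hχ, Ne, MulChar.ringHomComp_eq_one_iff hinj]
    apply quadraticChar_ne_one
    rw [ZMod.ringChar_zmod_n]; omega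
  have h2 : χ ^ 2 = 1 := ((quadraticChar_isQuadratic (ZMod (4 * k - 1))).comp _).sq_eq_one
  have hS : ∀ p, Spl k p ↔ Sp χ p := by
    intro p
    by_cases hp : p.Prime
    · rw [Spl_iff_char k hk p hp, Sp, hχ]
      simp only [hp, true_and, MulChar.ringHomComp_apply]
      constructor
      · intro h; rw [h]; simp
      · intro h; apply hinj; rw [h]; simp
    · simp [Spl, Sp, hp]
  obtain ⟨C, hC, hW⟩ := W_asymp χ h1 h2
  rw [Phi_congr _ _ hS]
  exact phi_asymp (Sp χ) C hC hW

end Pf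


namespace Pf
open Real

noncomputable def LL (l : ℕ) : ℝ := Real.log (1 + 1 / ((l : ℝ) + 1))
noncomputable def SS : ℝ := ∑' l : ℕ, (LL l) ^ 2

lemma LL_pos (l : ℕ) : 0 < LL l := Real.log_pos (by
  have : (0:ℝ) < 1 / ((l:ℝ)+1) := by positivity
  linarith)

lemma LL_le (l : ℕ) : LL l ≤ 1 / ((l:ℝ)+1) := by
  have := Real.log_le_sub_one_of_pos (show (0:ℝ) < 1 + 1 / ((l:ℝ)+1) by positivity)
  unfold LL; linarith

lemma LL_le_one (l : ℕ) : LL l ≤ 1 := by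
  refine (LL_le l).trans ?_
  rw [div_le_one (by positivity)]
  have : (0:ℝ) ≤ l := by positivity
  linarith

lemma LL_eq (l : ℕ) : LL l = Real.log ((l:ℝ) + 2) - Real.log ((l:ℝ)+1) := by
  rw [← Real.log_div (by positivity) (by positivity), LL]
  congr 1; field_simp; ring

lemma LL_ge (l : ℕ) : 1 / ((l:ℝ)+2) ≤ LL l := by
  have := Real.log_le_sub_one_of_pos (show (0:ℝ) < ((l:ℝ)+1)/((l:ℝ)+2) by positivity)
  rw [Real.log_div (by positivity) (by positivity)] at this
  rw [LL_eq]
  have e : ((l:ℝ)+1)/((l:ℝ)+2) = 1 - 1 / ((l:ℝ)+2) := by field_simp; ring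
  linarith

lemma LL_anti : Antitone LL := by
  intro a b h
  unfold LL
  apply Real.log_le_log (by positivity)
  have : (a:ℝ) ≤ b := by exact_mod_cast h
  gcongr

lemma sum_LL (b : ℕ) : ∑ l ∈ Finset.range b, LL l = Real.log (1 + b) := by
  induction b with
  | zero => simp
  | succ n ih =>
    rw [Finset.sum_range_succ, ih, LL_eq]
    push_cast
    rw [show (1:ℝ) + n = n + 1 by ring, show (1:ℝ) + (n + 1) = n + 2 by ring]; ring

lemma LL_sq_le (l : ℕ) : LL l ^ 2 ≤ 1 / ((l:ℝ)+1) ^ 2 := by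
  have := pow_le_pow_left₀ (LL_pos l).le (LL_le l) 2
  rwa [div_pow, one_pow] at this

lemma LL_summable : Summable (fun l => LL l ^ 2) := by
  refine Summable.of_nonneg_of_le (fun l => sq_nonneg _) LL_sq_le ?_
  have := (summable_nat_add_iff 1).mpr (Real.summable_one_div_nat_pow.mpr (one_lt_two))
  simpa using this

lemma LL_tail (N M : ℕ) (hN : 1 ≤ N) : ∑ l ∈ Finset.Ico N M, LL l ^ 2 ≤ 1 / (N:ℝ) := by
  rcases le_or_gt M N with h | h
  · rw [Finset.Ico_eq_empty (by omega)]; simp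
  have hN' : (0:ℝ) < N := by exact_mod_cast hN
  suffices ∀ M, N ≤ M → ∑ l ∈ Finset.Ico N M, LL l ^ 2 ≤ 1 / (N:ℝ) - 1 / M by
    have h1 := this M h.le
    have : (0:ℝ) ≤ 1 / M := by positivity
    linarith
  intro M hM
  induction M, hM using Nat.le_induction with
  | base => simp
  | succ m hm ih =>
    rw [Finset.sum_Ico_succ_top hm]
    have hm' : (0:ℝ) < m := lt_of_lt_of_le hN' (by exact_mod_cast hm)
    have := LL_sq_le m
    have e : 1 / ((m:ℝ)+1)^2 ≤ 1 / (m:ℝ) - 1 / ((m:ℝ)+1) := by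
      rw [div_sub_div _ _ hm'.ne' (by positivity), div_le_div_iff₀ (by positivity) (by positivity)]
      nlinarith
    push_cast
    linarith

lemma SS_ge (N : ℕ) : ∑ l ∈ Finset.range N, LL l ^ 2 ≤ SS :=
  LL_summable.sum_le_tsum _ (fun _ _ => sq_nonneg _)

lemma SS_pos : 0 < SS := by
  have := SS_ge 1
  simp at this
  have h := LL_pos 0
  nlinarith

lemma SS_le (N : ℕ) (hN : 1 ≤ N) : SS ≤ ∑ l ∈ Finset.range N, LL l ^ 2 + 1 / (N:ℝ) := by
  apply Real.tsum_le_of_sum_range_le (fun _ => sq_nonneg _)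
  intro M
  rcases le_or_gt M N with h | h
  · have : ∑ l ∈ Finset.range M, LL l ^ 2 ≤ ∑ l ∈ Finset.range N, LL l ^ 2 :=
      Finset.sum_le_sum_of_subset_of_nonneg (Finset.range_mono h) (fun _ _ _ => sq_nonneg _)
    have h2 : (0:ℝ) ≤ 1 / N := by positivity
    linarith
  · rw [← Finset.sum_range_add_sum_Ico _ h.le]
    have := LL_tail N M hN
    linarith

lemma Phi_nonneg (P : ℕ → Prop) (z : ℝ) : 0 ≤ Phi P z := by
  unfold Phi
  apply Finset.sum_nonneg
  intro p hp
  simp only [Finset.mem_filter, Finset.mem_Icc] at hp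
  have : (p:ℝ) ≤ z := (Nat.le_floor_iff' (by omega)).mp hp.1.2
  linarith

open Classical in
lemma Phi_le_sq (P : ℕ → Prop) (z : ℝ) (hz : 0 ≤ z) : Phi P z ≤ z ^ 2 := by
  unfold Phi
  calc _ ≤ ∑ p ∈ (Finset.Icc 1 ⌊z⌋₊), z := by
        refine (Finset.sum_le_sum_of_subset_of_nonneg (Finset.filter_subset _ _) ?_).trans
          (Finset.sum_le_sum fun p hp => ?_)
        · intro p hp _
          simp only [Finset.mem_Icc] at hp
          have : (p:ℝ) ≤ z := (Nat.le_floor_iff' (by omega)).mp hp.2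
          linarith
        · have : (0:ℝ) ≤ p := by positivity
          linarith
    _ = ⌊z⌋₊ * z := by simp
    _ ≤ z ^ 2 := by nlinarith [Nat.floor_le hz]

lemma Phi_zero (P : ℕ → Prop) (hP : ∀ p, P p → 2 ≤ p) (z : ℝ) (hz : z < 2) : Phi P z = 0 := by
  unfold Phi
  apply Finset.sum_eq_zero
  intro p hp
  simp only [Finset.mem_filter, Finset.mem_Icc] at hp
  have : (p:ℝ) ≤ z := (Nat.le_floor_iff' (by omega)).mp hp.1.2
  have h2 : (2:ℝ) ≤ p := by exact_mod_cast hP p hp.2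
  linarith

def PhiAs (P : ℕ → Prop) : Prop := ∃ C > 0, ∃ z0 : ℝ, ∀ z ≥ z0,
    |Phi P z - z ^ 2 / (4 * Real.log z)| ≤ C * z ^ 2 * (Real.log (Real.log z) / Real.log z ^ 2)

/-- eventually facts -/
lemma ev_facts (K : ℝ) : ∀ᶠ u : ℝ in Filter.atTop, K ≤ u ∧ K ≤ Real.log u ∧ K * Real.log u ≤ u ∧
    K * u ^ 9 ≤ Real.exp u := by
  have h1 := Filter.eventually_ge_atTop (α := ℝ) K
  have h2 := Real.tendsto_log_atTop.eventually_ge_atTop K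
  have h3 := (Real.isLittleO_log_id_atTop.def (c := 1 / (|K|+1)) (by positivity))
  have h4 := (Real.tendsto_exp_div_pow_atTop 9).eventually_ge_atTop K
  filter_upwards [h1, h2, h3, h4, Filter.eventually_ge_atTop (1:ℝ)] with u a b c d e
  refine ⟨a, b, ?_, ?_⟩
  · simp only [id, Real.norm_eq_abs] at c
    rw [abs_of_nonneg (Real.log_nonneg e), abs_of_nonneg (by linarith : (0:ℝ) ≤ u)] at c
    have hl := Real.log_nonneg e
    have : (|K| + 1) * Real.log u ≤ u := by
      rw [one_div_mul_eq_div, le_div_iff₀ (by positivity)] at c; linarith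
    nlinarith [le_abs_self K]
  · rwa [le_div_iff₀ (by positivity)] at d

lemma window (P : ℕ → Prop) (hΦ : PhiAs P) : ∃ C > 0, ∀ᶠ u : ℝ in Filter.atTop, ∀ z : ℝ,
    Real.exp u / u ^ 3 ≤ z → z ≤ Real.exp u * u ^ 5 →
    |Phi P z - z ^ 2 / (4 * u)| ≤ C * z ^ 2 * (Real.log u / u ^ 2) := by
  obtain ⟨C, hC, z0, h⟩ := hΦ
  refine ⟨C * 8 + 5, by linarith, ?_⟩
  filter_upwards [ev_facts (|z0| + 10)] with u ⟨h1, h2, h3, h4⟩ z hz1 hz2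
  have hu : 10 ≤ u := by linarith [abs_nonneg z0]
  have hl : 10 ≤ Real.log u := by linarith [abs_nonneg z0]
  have hul : 10 * Real.log u ≤ u := by nlinarith [abs_nonneg z0]
  have hu0 : 0 < u := by linarith
  have hzpos : 0 < z := lt_of_lt_of_le (by positivity) hz1
  have hzz : z0 ≤ z := by
    refine le_trans ?_ hz1
    rw [le_div_iff₀ (by positivity)]
    have : u ^ 3 ≤ u ^ 9 := pow_le_pow_right₀ (by linarith) (by norm_num)
    have h5 : z0 ≤ |z0| + 10 := by linarith [le_abs_self z0]
    have : z0 * u ^ 3 ≤ (|z0| + 10) * u ^ 9 := by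
      apply mul_le_mul h5 this (by positivity) (by positivity)
    linarith
  have l1 : u - 3 * Real.log u ≤ Real.log z := by
    have := Real.log_le_log (by positivity) hz1
    rw [Real.log_div (by positivity) (by positivity), Real.log_exp, Real.log_pow] at this
    exact_mod_cast this
  have l2 : Real.log z ≤ u + 5 * Real.log u := by
    have := Real.log_le_log hzpos hz2
    rw [Real.log_mul (by positivity) (by positivity), Real.log_exp, Real.log_pow] at this
    exact_mod_cast this
  set w := Real.log z with hw
  set g := Real.log u with hg
  have hw2 : u / 2 ≤ w := by linarith
  have hw3 : w ≤ 2 * u := by linarith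
  have hwpos : 0 < w := by linarith
  have hlw : Real.log w ≤ 2 * g := by
    have := Real.log_le_log hwpos hw3
    rw [Real.log_mul (by norm_num) hu0.ne', ← hg] at this
    have := Real.log_two_lt_d9
    linarith
  have key := h z hzz
  have e1 : |z ^ 2 / (4 * w) - z ^ 2 / (4 * u)| ≤ 5 * z ^ 2 * (g / u ^ 2) := by
    rw [show z ^ 2 / (4 * w) - z ^ 2 / (4 * u) = z ^ 2 * ((u - w) / (4 * w * u)) by field_simp,
      abs_mul, abs_of_nonneg (sq_nonneg z), show 5 * z ^ 2 * (g / u ^ 2) = z ^ 2 * (5 * (g / u ^ 2)) by ring]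
    apply mul_le_mul_of_nonneg_left _ (sq_nonneg z)
    rw [abs_div, abs_of_pos (show 0 < 4 * w * u by positivity), mul_div_assoc', div_le_div_iff₀ (by positivity) (by positivity)]
    have hab : |u - w| ≤ 5 * g := by rw [abs_le]; constructor <;> linarith
    calc |u - w| * u ^ 2 ≤ 5 * g * u ^ 2 := by gcongr
      _ ≤ 5 * g * (4 * w * u) := by
        apply mul_le_mul_of_nonneg_left _ (by positivity)
        nlinarith
  have e2 : C * z ^ 2 * (Real.log w / w ^ 2) ≤ C * 8 * z ^ 2 * (g / u ^ 2) := by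
    have : Real.log w / w ^ 2 ≤ 8 * (g / u ^ 2) := by
      rw [mul_div_assoc', div_le_div_iff₀ (by positivity) (by positivity)]
      have : u ^ 2 ≤ 4 * w ^ 2 := by nlinarith
      calc Real.log w * u ^ 2 ≤ 2 * g * u ^ 2 := by gcongr
        _ ≤ 2 * g * (4 * w ^ 2) := by gcongr
        _ = _ := by ring
    calc _ ≤ C * z ^ 2 * (8 * (g / u ^ 2)) := by gcongr
      _ = _ := by ring
  calc |Phi P z - z ^ 2 / (4 * u)| ≤ |Phi P z - z ^ 2 / (4 * w)| + |z ^ 2 / (4 * w) - z ^ 2 / (4 * u)| := abs_sub_le _ _ _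
    _ ≤ C * 8 * z ^ 2 * (g / u ^ 2) + 5 * z ^ 2 * (g / u ^ 2) := by linarith
    _ = _ := by ring

end Pf


namespace Pf
open Real

lemma sum_fact_le (B : Finset ℕ) (N : ℕ) : N ≠ 0 →
    ∑ q ∈ B, (N.factorization q : ℝ) * ((q:ℝ) - 1) ≤ (N:ℝ) - 1 := by
  induction N using Nat.recOnMul with
  | zero => intro h; exact absurd rfl h
  | one => intro _; simp
  | prime p hp =>
    intro _
    have h1 : (1:ℝ) ≤ p := by exact_mod_cast hp.one_lt.le
    rw [hp.factorization]
    simp only [Finsupp.single_apply]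
    by_cases h : p ∈ B
    · rw [Finset.sum_eq_single p]
      · simp
      · intro b _ hb; simp [hb.symm]
      · intro h'; exact absurd h h'
    · rw [Finset.sum_eq_zero]
      · linarith
      · intro b hb
        have : p ≠ b := fun e => h (e ▸ hb)
        simp [this]
  | mul a b iha ihb =>
    intro hab
    have ha : a ≠ 0 := by rintro rfl; simp at hab
    have hb : b ≠ 0 := by rintro rfl; simp at hab
    rw [Nat.factorization_mul ha hb]
    have h1 := iha ha
    have h2 := ihb hb
    have ha' : (1:ℝ) ≤ a := by exact_mod_cast Nat.one_le_iff_ne_zero.mpr ha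
    have hb' : (1:ℝ) ≤ b := by exact_mod_cast Nat.one_le_iff_ne_zero.mpr hb
    simp only [Finsupp.add_apply]
    push_cast
    simp only [add_mul, Finset.sum_add_distrib]
    nlinarith

lemma sum_fact_le' (B : Finset ℕ) (N : ℕ) (hN : N ≠ 0) :
    ∑ q ∈ B, (N.factorization q : ℝ) * Real.log 2 ≤ Real.log N := by
  rw [Real.log_nat_eq_sum_factorization N, Finsupp.sum]
  have h0 := Real.log_pos (one_lt_two (α := ℝ))
  calc _ ≤ ∑ q ∈ B ∪ N.factorization.support, (N.factorization q : ℝ) * Real.log 2 :=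
        Finset.sum_le_sum_of_subset_of_nonneg Finset.subset_union_left (fun _ _ _ => by positivity)
    _ = ∑ q ∈ N.factorization.support, (N.factorization q : ℝ) * Real.log 2 := by
        symm
        apply Finset.sum_subset Finset.subset_union_right
        intro x _ hx
        rw [Finsupp.notMem_support_iff] at hx
        simp [hx]
    _ ≤ _ := by
        apply Finset.sum_le_sum
        intro p hp
        have hp' : p.Prime := Nat.prime_of_mem_primeFactors (by simpa using hp)
        have : (2:ℝ) ≤ p := by exact_mod_cast hp'.two_le
        gcongr

lemma hinge_le (P : ℕ → Prop) (hP : ∀ p, P p → 2 ≤ p) (B : Finset ℕ) (hB : ∀ q ∈ B, P q) (z : ℝ) :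
    ∑ q ∈ B, max (z - q) 0 ≤ Phi P z := by
  classical
  unfold Phi
  calc _ = ∑ q ∈ B.filter (fun q : ℕ => (q:ℝ) ≤ z), max (z - q) 0 := by
        symm
        apply Finset.sum_subset (Finset.filter_subset _ _)
        intro q hq hq'
        simp only [Finset.mem_filter, not_and, not_le] at hq'
        apply max_eq_right
        linarith [hq' hq]
    _ = ∑ q ∈ B.filter (fun q : ℕ => (q:ℝ) ≤ z), (z - q) := by
        apply Finset.sum_congr rfl
        intro q hq
        simp only [Finset.mem_filter] at hq
        apply max_eq_left; linarith [hq.2]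
    _ ≤ _ := by
        apply Finset.sum_le_sum_of_subset_of_nonneg
        · intro q hq
          simp only [Finset.mem_filter, Finset.mem_Icc] at hq ⊢
          have := hP q (hB q hq.1)
          exact ⟨⟨by omega, (Nat.le_floor_iff' (by omega)).mpr hq.2⟩, hB q hq.1⟩
        · intro q hq _
          simp only [Finset.mem_filter, Finset.mem_Icc] at hq
          have : (q:ℝ) ≤ z := (Nat.le_floor_iff' (by omega)).mp hq.1.2
          linarith

lemma max_scale (μ : ℝ) (hμ : 0 < μ) (a q : ℝ) : max (a - μ * (q - 1)) 0 = μ * max (a / μ + 1 - q) 0 := by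
  rw [mul_max_of_nonneg _ _ hμ.le, mul_zero]
  congr 1; field_simp; ring

lemma dual (P : ℕ → Prop) (hP : ∀ p, P p → 2 ≤ p) (B : Finset ℕ) (hB : ∀ q ∈ B, P q) (b : ℕ → ℕ)
    (μ : ℝ) (hμ : 0 < μ) : ∃ M : ℕ, ∑ q ∈ B, Real.log (1 + b q) ≤
      μ * ∑ q ∈ B, (b q : ℝ) * ((q:ℝ) - 1) + ∑ l ∈ Finset.range M, μ * Phi P (LL l / μ + 1) := by
  refine ⟨B.sup b, ?_⟩
  have h1 : ∀ q ∈ B, Real.log (1 + b q) ≤ μ * ((b q : ℝ) * ((q:ℝ) - 1))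
      + ∑ l ∈ Finset.range (B.sup b), max (LL l - μ * ((q:ℝ) - 1)) 0 := by
    intro q hq
    rw [← sum_LL]
    calc _ ≤ ∑ l ∈ Finset.range (b q), (μ * ((q:ℝ)-1) + max (LL l - μ * ((q:ℝ) - 1)) 0) := by
          apply Finset.sum_le_sum; intro l _
          linarith [le_max_left (LL l - μ * ((q:ℝ) - 1)) 0]
      _ = μ * ((b q : ℝ) * ((q:ℝ) - 1)) + ∑ l ∈ Finset.range (b q), max (LL l - μ * ((q:ℝ) - 1)) 0 := by
          rw [Finset.sum_add_distrib]; simp; ring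
      _ ≤ _ := by
          gcongr
          exact Finset.le_sup hq
  refine (Finset.sum_le_sum h1).trans ?_
  rw [Finset.sum_add_distrib, ← Finset.mul_sum, Finset.sum_comm]
  gcongr with l _
  simp only [max_scale μ hμ]
  rw [← Finset.mul_sum]
  exact mul_le_mul_of_nonneg_left (hinge_le P hP B hB _) hμ.le

lemma upper_comb (k : ℕ) (hk : k ∈ KKS) (n : ℕ) (hn0 : n ≠ 0) (y R : ℝ) (hy : 1 ≤ y) (hR : 1 ≤ R)
    (hn : Real.log n ≤ y ^ 2) : ∃ (B : Finset ℕ) (b : ℕ → ℕ), (∀ q ∈ B, Spl k q) ∧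
      (∑ q ∈ B, (b q : ℝ) * ((q:ℝ) - 1)) * Real.log R ≤ y ^ 2 ∧
      Real.log (fForm k (fForm k n)) ≤ R * Real.log (4 * y ^ 2) / Real.log 2 + ∑ q ∈ B, Real.log (1 + b q) := by
  classical
  have hl2 := Real.log_pos (one_lt_two (α := ℝ))
  have hl2' := Real.log_two_gt_d9
  have hlogy : 0 ≤ Real.log (4 * y ^ 2) := Real.log_nonneg (by nlinarith)
  have triv : Real.log (fForm k (fForm k n)) ≤ 0 → ∃ (B : Finset ℕ) (b : ℕ → ℕ), (∀ q ∈ B, Spl k q) ∧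
      (∑ q ∈ B, (b q : ℝ) * ((q:ℝ) - 1)) * Real.log R ≤ y ^ 2 ∧
      Real.log (fForm k (fForm k n)) ≤ R * Real.log (4 * y ^ 2) / Real.log 2 + ∑ q ∈ B, Real.log (1 + b q) := by
    intro h
    refine ⟨∅, fun _ => 0, by simp, by simp; positivity, h.trans ?_⟩
    simp; positivity
  rcases fForm_prod k hk n hn0 with h0 | hm
  · apply triv; rw [h0]; simp [fForm]
  set m := fForm k n with hmdef
  set A := n.primeFactors.filter (Spl k) with hA
  have hm0 : m ≠ 0 := by rw [hm]; exact Finset.prod_ne_zero_iff.mpr (fun _ _ => by omega)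
  rcases fForm_prod k hk m hm0 with h0 | hf
  · apply triv; rw [h0]; simp
  set B := m.primeFactors.filter (Spl k) with hB
  have hAp : ∀ p ∈ A, p.Prime := fun p hp => Nat.prime_of_mem_primeFactors (Finset.mem_filter.mp hp).1
  set A1 := A.filter (fun p : ℕ => (p:ℝ) ≤ R) with hA1
  set A2 := A.filter (fun p : ℕ => ¬ (p:ℝ) ≤ R) with hA2
  set e : ℕ → ℕ → ℕ := fun p q => (n.factorization p + 1).factorization q with he
  have hb : ∀ q, m.factorization q = ∑ p ∈ A1, e p q + ∑ p ∈ A2, e p q := by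
    intro q
    rw [hA1, hA2, Finset.sum_filter_add_sum_filter_not, hm, Nat.factorization_prod (fun _ _ => by omega)]
    simp [Finsupp.finset_sum_apply, he]
  -- total log
  have hsum : ∑ p ∈ A, (n.factorization p : ℝ) * Real.log p ≤ y ^ 2 := by
    refine le_trans ?_ hn
    rw [Real.log_nat_eq_sum_factorization n, Finsupp.sum]
    apply Finset.sum_le_sum_of_subset_of_nonneg
    · rw [Nat.support_factorization]; exact Finset.filter_subset _ _
    · intro p _ _; positivity
  have hterm : ∀ p ∈ A, (n.factorization p : ℝ) * Real.log p ≤ y ^ 2 := fun p hp =>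
    (Finset.single_le_sum (f := fun p : ℕ => (n.factorization p : ℝ) * Real.log p)
      (fun _ _ => by positivity) hp).trans hsum
  have hap : ∀ p ∈ A, (n.factorization p : ℝ) + 1 ≤ 4 * y ^ 2 := by
    intro p hp
    have h2 : (2:ℝ) ≤ p := by exact_mod_cast (hAp p hp).two_le
    have h3 := Real.log_le_log (by norm_num) h2
    have h4 := hterm p hp
    have h5 : (0:ℝ) ≤ n.factorization p := by positivity
    nlinarith
  have c1 : ∑ q ∈ B, ((∑ p ∈ A1, e p q : ℕ) : ℝ) ≤ R * Real.log (4 * y ^ 2) / Real.log 2 := by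
    rw [le_div_iff₀ hl2]
    push_cast
    rw [Finset.sum_comm, Finset.sum_mul]
    calc _ ≤ ∑ p ∈ A1, Real.log (4 * y ^ 2) := by
          apply Finset.sum_le_sum
          intro p hp
          rw [Finset.sum_mul]
          refine (sum_fact_le' B (n.factorization p + 1) (by omega)).trans ?_
          push_cast
          exact Real.log_le_log (by positivity) (hap p (Finset.mem_filter.mp hp).1)
      _ = A1.card * Real.log (4 * y ^ 2) := by simp
      _ ≤ _ := by
          gcongr
          have : A1 ⊆ Finset.Icc 1 ⌊R⌋₊ := by
            intro p hp
            obtain ⟨h1, h2⟩ := Finset.mem_filter.mp hp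
            have := (hAp p h1).one_lt
            exact Finset.mem_Icc.mpr ⟨by omega, (Nat.le_floor_iff' (by omega)).mpr h2⟩
          have h3 := Finset.card_le_card this
          rw [Nat.card_Icc] at h3
          have h4 : (A1.card : ℝ) ≤ ⌊R⌋₊ := by exact_mod_cast (by omega : A1.card ≤ ⌊R⌋₊)
          exact h4.trans (Nat.floor_le (by linarith))
  refine ⟨B, fun q => ∑ p ∈ A2, e p q, fun q hq => (Finset.mem_filter.mp hq).2, ?_, ?_⟩
  · push_cast
    simp only [Finset.sum_mul]
    rw [Finset.sum_comm]
    refine le_trans (Finset.sum_le_sum (f := _) (g := fun p : ℕ => (n.factorization p : ℝ) * Real.log p) ?_)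
      ((Finset.sum_le_sum_of_subset_of_nonneg (Finset.filter_subset _ _) (fun _ _ _ => by positivity)).trans hsum)
    intro p hp
    rw [← Finset.sum_mul]
    have h1 := sum_fact_le B (n.factorization p + 1) (by omega)
    push_cast at h1
    have h3 := Real.log_le_log (by linarith) (not_le.mp (Finset.mem_filter.mp hp).2).le
    have h4 : 0 ≤ Real.log R := Real.log_nonneg hR
    calc _ ≤ (n.factorization p : ℝ) * Real.log R := by
          apply mul_le_mul_of_nonneg_right _ h4
          linarith
      _ ≤ _ := by gcongr
  · rw [hf]
    push_cast
    rw [Real.log_prod (fun q _ => by positivity)]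
    refine le_trans ?_ (add_le_add_left c1 _)
    rw [← Finset.sum_add_distrib]
    apply Finset.sum_le_sum
    intro q _
    rw [hb q]
    push_cast
    set s := ∑ p ∈ A1, (e p q : ℝ)
    set t := ∑ p ∈ A2, (e p q : ℝ)
    have hs : 0 ≤ s := Finset.sum_nonneg fun _ _ => by positivity
    have ht : 0 ≤ t := Finset.sum_nonneg fun _ _ => by positivity
    calc Real.log (s + t + 1) ≤ Real.log ((1 + s) * (1 + t)) :=
          Real.log_le_log (by positivity) (by nlinarith)
      _ = Real.log (1 + s) + Real.log (1 + t) := Real.log_mul (by positivity) (by positivity)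
      _ ≤ s + Real.log (1 + t) := by
          have := Real.log_le_sub_one_of_pos (show 0 < 1 + s by positivity)
          linarith

end Pf


namespace Pf
open Real

lemma Spl_two (k p : ℕ) (h : Spl k p) : 2 ≤ p := h.1.two_le

lemma inv_bd (u g : ℝ) (hu : 0 < u) (hg : 0 ≤ g) (h : 6 * g ≤ u) : 1 / (u - 3 * g) ≤ 1 / u + 6 * (g / u ^ 2) := by
  rw [show 1 / u + 6 * (g / u ^ 2) = (u + 6 * g) / u ^ 2 by field_simp, div_le_div_iff₀ (by linarith) (by positivity)]
  nlinarith

set_option maxHeartbeats 1000000 in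
lemma upper_sum (P : ℕ → Prop) (hP : ∀ p, P p → 2 ≤ p) (hΦ : PhiAs P) : ∃ C > 0, ∀ᶠ u : ℝ in Filter.atTop,
    ∀ M : ℕ, ∑ l ∈ Finset.range M, (√SS / (2 * exp u)) * Phi P (LL l / (√SS / (2 * exp u)) + 1) ≤
      √SS * exp u / (2 * u) + C * (exp u * (log u / u ^ 2)) := by
  obtain ⟨C, hC, hw⟩ := window P hΦ
  set s := √SS with hs
  have hs0 : 0 < s := Real.sqrt_pos.mpr SS_pos
  have hss : s ^ 2 = SS := Real.sq_sqrt SS_pos.le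
  refine ⟨2 * C * s + 8 / s + 6, by positivity, ?_⟩
  filter_upwards [hw, ev_facts (10 + s + 2 / s + C)] with u hwu ⟨h1, h2, h3, h4⟩ M
  have hi : 0 < 2 / s := by positivity
  set K := 10 + s + 2 / s + C with hK
  have hu : 10 ≤ u := by linarith
  have hu0 : 0 < u := by linarith
  set g := log u with hg
  have hg1 : 1 ≤ g := by linarith
  have hu2 : 10 * u ≤ u ^ 2 := by rw [pow_two]; exact mul_le_mul_of_nonneg_right hu hu0.le
  have hgu : g ≤ u := le_trans (le_mul_of_one_le_left (by linarith) (by linarith)) h3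
  set y := exp u with hy
  have hy0 : 0 < y := exp_pos u
  set μ := s / (2 * y) with hμ
  have hμ0 : 0 < μ := by positivity
  have hu9 : u ≤ u ^ 9 := by
    calc u = u ^ 1 := (pow_one u).symm
      _ ≤ u ^ 9 := pow_le_pow_right₀ (by linarith) (by norm_num)
  have hyK : K * u ≤ y := le_trans (by gcongr) h4
  have hyK' : K ≤ y := le_trans (le_mul_of_one_le_right (by linarith) (by linarith)) hyK
  have hμ1 : μ ≤ 1 := by rw [hμ, div_le_one (by positivity)]; linarith
  have hSμ : SS / μ = 2 * s * y := by rw [hμ, ← hss]; field_simp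
  set N := ⌈u ^ 2⌉₊ with hN
  have hN1 : u ^ 2 ≤ N := Nat.le_ceil _
  have hN2 : (N:ℝ) ≤ u ^ 2 + 1 := (Nat.ceil_lt_add_one (by positivity)).le
  have hNpos : 1 ≤ N := by
    have : (0:ℝ) < N := lt_of_lt_of_le (by positivity) hN1
    exact_mod_cast this
  set D := 1 / (4 * u) + C * (g / u ^ 2) with hD
  have hD0 : 0 ≤ D := by positivity
  have hD1 : D ≤ 1 := by
    have e1 : g / u ^ 2 ≤ 1 / u := by
      rw [div_le_div_iff₀ (by positivity) hu0, one_mul, pow_two]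
      exact mul_le_mul_of_nonneg_right hgu hu0.le
    have e2 : D ≤ (1 + C) / u := by
      calc D ≤ 1 / u + C * (1 / u) := by
            apply add_le_add
            · exact one_div_le_one_div_of_le hu0 (by linarith)
            · gcongr
        _ = _ := by ring
    refine e2.trans ?_
    rw [div_le_one hu0]; linarith
  have hnn : ∀ l, 0 ≤ μ * Phi P (LL l / μ + 1) := fun l => mul_nonneg hμ0.le (Phi_nonneg P _)
  have hM : ∑ l ∈ Finset.range M, μ * Phi P (LL l / μ + 1) ≤
      ∑ l ∈ Finset.range N, μ * Phi P (LL l / μ + 1) + ∑ l ∈ Finset.Ico N M, μ * Phi P (LL l / μ + 1) := by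
    rcases le_or_gt M N with h | h
    · rw [Finset.Ico_eq_empty (by omega), Finset.sum_empty, add_zero]
      exact Finset.sum_le_sum_of_subset_of_nonneg (Finset.range_mono h) (fun l _ _ => hnn l)
    · rw [Finset.sum_range_add_sum_Ico _ h.le]
  have hT : ∑ l ∈ Finset.Ico N M, μ * Phi P (LL l / μ + 1) ≤ 8 / s * (y * (g / u ^ 2)) := by
    calc _ ≤ ∑ l ∈ Finset.Ico N M, 4 / μ * LL l ^ 2 := by
          apply Finset.sum_le_sum
          intro l _
          rcases lt_or_ge (LL l / μ + 1) 2 with h | h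
          · rw [Phi_zero P hP _ h, mul_zero]; positivity
          · have hp := LL_pos l
            have h5 := Phi_le_sq P (LL l / μ + 1) (by positivity)
            have h6 : (LL l / μ + 1) ^ 2 ≤ (2 * (LL l / μ)) ^ 2 := by
              apply pow_le_pow_left₀ (by positivity); linarith
            calc μ * Phi P (LL l / μ + 1) ≤ μ * (2 * (LL l / μ)) ^ 2 := by gcongr; exact h5.trans h6
              _ = _ := by field_simp; ring
      _ = 4 / μ * ∑ l ∈ Finset.Ico N M, LL l ^ 2 := by rw [Finset.mul_sum]
      _ ≤ 4 / μ * (1 / N) := by gcongr; exact LL_tail N M hNpos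
      _ ≤ 4 / μ * (1 / u ^ 2) := by gcongr
      _ = 8 / s * (y * (1 / u ^ 2)) := by rw [hμ]; field_simp; ring
      _ ≤ _ := by gcongr
  have hMain : ∑ l ∈ Finset.range N, μ * Phi P (LL l / μ + 1) ≤ D * (2 * s * y) + 6 * u ^ 2 := by
    calc _ ≤ ∑ l ∈ Finset.range N, D * (LL l ^ 2 / μ + 3) := by
          apply Finset.sum_le_sum
          intro l hl
          have hl' : (l:ℝ) + 1 ≤ N := by exact_mod_cast Finset.mem_range.mp hl
          have hp := LL_pos l
          have hL1 := LL_le_one l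
          have hL2 : 1 / (2 * u ^ 2) ≤ LL l := by
            refine le_trans ?_ (LL_ge l)
            apply one_div_le_one_div_of_le (by positivity); linarith
          set z := LL l / μ + 1 with hz
          have z1 : y / u ^ 3 ≤ z := by
            have : y / u ^ 3 ≤ LL l / μ := by
              calc y / u ^ 3 ≤ y / (s * u ^ 2) := by
                    apply div_le_div_of_nonneg_left hy0.le (by positivity)
                    have : s ≤ u := by linarith
                    rw [show u ^ 3 = u * u ^ 2 by ring]
                    exact mul_le_mul_of_nonneg_right this (sq_nonneg u)
                _ = (1 / (2 * u ^ 2)) / μ := by rw [hμ]; field_simp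
                _ ≤ _ := by gcongr
            linarith
          have z2 : z ≤ y * u ^ 5 := by
            have e1 : LL l / μ ≤ 2 / s * y := by
              calc LL l / μ ≤ 1 / μ := by gcongr
                _ = _ := by rw [hμ]; field_simp
            have e2 : u ≤ u ^ 5 := by
              calc u = u ^ 1 := (pow_one u).symm
                _ ≤ u ^ 5 := pow_le_pow_right₀ (by linarith) (by norm_num)
            have e4 : (2 / s + 1) * y ≤ u * y := mul_le_mul_of_nonneg_right (by linarith) hy0.le
            have e3 : z ≤ y * u := by linarith
            exact e3.trans (by gcongr)
          have h5 := (abs_le.mp (hwu z z1 z2)).2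
          have h6 : Phi P z ≤ D * z ^ 2 := by
            have : D * z ^ 2 = z ^ 2 / (4 * u) + C * z ^ 2 * (g / u ^ 2) := by rw [hD]; ring
            linarith
          calc μ * Phi P z ≤ μ * (D * z ^ 2) := by gcongr
            _ = D * (LL l ^ 2 / μ + 2 * LL l + μ) := by rw [hz]; field_simp; ring
            _ ≤ _ := mul_le_mul_of_nonneg_left (by linarith) hD0
      _ = D * ((∑ l ∈ Finset.range N, LL l ^ 2) / μ + 3 * N) := by
          rw [← Finset.mul_sum, Finset.sum_add_distrib, Finset.sum_div]; simp; ring_nf; simp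
      _ ≤ D * (SS / μ + 3 * N) := by gcongr; exact SS_ge N
      _ = D * (2 * s * y) + D * (3 * N) := by rw [hSμ]; ring
      _ ≤ D * (2 * s * y) + 1 * (3 * N) := by gcongr
      _ ≤ _ := by linarith
  have h6u : 6 * u ^ 2 ≤ 6 * (y * (g / u ^ 2)) := by
    have : u ^ 2 * u ^ 2 ≤ y * g := by
      calc u ^ 2 * u ^ 2 = 1 * u ^ 4 := by ring
        _ ≤ K * u ^ 9 := by
            apply mul_le_mul (by linarith) (pow_le_pow_right₀ (by linarith) (by norm_num)) (by positivity) (by linarith)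
        _ ≤ y * 1 := by linarith
        _ ≤ y * g := by gcongr
    rw [mul_div_assoc']
    gcongr
    rwa [le_div_iff₀ (by positivity)]
  have e : D * (2 * s * y) = s * y / (2 * u) + 2 * C * s * (y * (g / u ^ 2)) := by rw [hD]; field_simp; ring
  calc _ ≤ _ := hM
    _ ≤ (s * y / (2 * u) + 2 * C * s * (y * (g / u ^ 2)) + 6 * (y * (g / u ^ 2))) + 8 / s * (y * (g / u ^ 2)) := by linarith
    _ = _ := by ring

lemma upper_main (k : ℕ) (hk : k ∈ KKS) : ∃ C > 0, ∀ᶠ u : ℝ in Filter.atTop, ∀ n : ℕ, n ≠ 0 →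
    log n ≤ exp u ^ 2 → log (fForm k (fForm k n)) ≤ √SS * exp u / u + C * (exp u * (log u / u ^ 2)) := by
  obtain ⟨C, hC, hw⟩ := upper_sum (Spl k) (Spl_two k) (phi_main k hk)
  set s := √SS with hs
  have hs0 : 0 < s := Real.sqrt_pos.mpr SS_pos
  refine ⟨C + 6 + 3 * s, by positivity, ?_⟩
  filter_upwards [hw, ev_facts 10] with u hwu ⟨hu, h2, h3, h4⟩ n hn0 hn
  have hu0 : 0 < u := by linarith
  set g := log u with hg
  set y := exp u with hy
  have hy0 : 0 < y := exp_pos u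
  have hg1 : 1 ≤ g := by linarith
  have hu1 : 1 ≤ u := by linarith
  have hu39 : u ^ 3 ≤ u ^ 9 := pow_le_pow_right₀ hu1 (by norm_num)
  have hu3 : 0 < u ^ 3 := by positivity
  have hu3' : 1 ≤ u ^ 3 := one_le_pow₀ hu1
  have hR : 1 ≤ y / u ^ 3 := by rw [le_div_iff₀ hu3]; linarith
  obtain ⟨B, b, hB, hcost, hval⟩ := upper_comb k hk n hn0 y (y / u ^ 3) (by linarith) hR hn
  have hlR : log (y / u ^ 3) = u - 3 * g := by
    rw [Real.log_div hy0.ne' hu3.ne', hy, Real.log_exp, Real.log_pow, ← hg]; norm_num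
  rw [hlR] at hcost
  obtain ⟨M, hM⟩ := dual (Spl k) (Spl_two k) B hB b (s / (2 * y)) (by positivity)
  have t1 : y / u ^ 3 * log (4 * y ^ 2) / log 2 ≤ 6 * (y * (g / u ^ 2)) := by
    have e1 : log (4 * y ^ 2) ≤ 4 * u := by
      rw [Real.log_mul (by norm_num) (by positivity), Real.log_pow, hy, Real.log_exp]
      have : log 4 ≤ 3 := by
        have := Real.log_le_sub_one_of_pos (show (0:ℝ) < 4 by norm_num); linarith
      push_cast; linarith
    have hl2' := Real.log_two_gt_d9
    have hl2 : 0 < log 2 := by linarith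
    rw [div_le_iff₀ hl2]
    calc y / u ^ 3 * log (4 * y ^ 2) ≤ y / u ^ 3 * (4 * u) := by gcongr
      _ = 4 * (y * (1 / u ^ 2)) := by field_simp
      _ ≤ 4 * (y * (g / u ^ 2)) := by gcongr
      _ ≤ _ := by
        have : 0 < y * (g / u ^ 2) := by positivity
        have := mul_le_mul_of_nonneg_left (show 2 / 3 ≤ log 2 by linarith) this.le
        linarith
  have t2 : s / (2 * y) * ∑ q ∈ B, (b q : ℝ) * ((q:ℝ) - 1) ≤ s * y / (2 * u) + 3 * s * (y * (g / u ^ 2)) := by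
    have hd : 0 < u - 3 * g := by linarith
    rw [← le_div_iff₀ hd] at hcost
    calc _ ≤ s / (2 * y) * (y ^ 2 / (u - 3 * g)) := by gcongr
      _ = s * y / 2 * (1 / (u - 3 * g)) := by field_simp
      _ ≤ s * y / 2 * (1 / u + 6 * (g / u ^ 2)) := by gcongr; exact inv_bd u g hu0 (by linarith) (by linarith)
      _ = _ := by field_simp; ring
  have t3 := hwu M
  calc _ ≤ _ := hval
    _ ≤ 6 * (y * (g / u ^ 2)) + ((s * y / (2 * u) + 3 * s * (y * (g / u ^ 2))) +
        (s * y / (2 * u) + C * (y * (g / u ^ 2)))) := by linarith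
    _ = _ := by field_simp; ring

end Pf


namespace Pf
open Real

lemma knap {ι : Type*} [DecidableEq ι] (v w : ι → ℝ) (W : ℝ) (n : ℕ) : ∀ P : Finset ι, P.card = n →
    (∀ a ∈ P, 0 < w a ∧ w a ≤ W ∧ 0 ≤ v a) → ∀ T : ℝ, 0 ≤ T →
    ∃ A ⊆ P, ∑ a ∈ A, w a ≤ T ∧ ∃ μ : ℝ, 0 ≤ μ ∧ (μ = 0 ∨ ∃ b ∈ P, μ * w b = v b) ∧
      ∑ a ∈ P, max (v a - μ * w a) 0 + μ * (T - W) ≤ ∑ a ∈ A, v a := by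
  induction n with
  | zero =>
    intro P hP _ T hT
    rw [Finset.card_eq_zero] at hP
    subst hP
    exact ⟨∅, le_rfl, by simpa using hT, 0, le_rfl, Or.inl rfl, by simp⟩
  | succ n ih =>
    intro P hP h T hT
    have hne : P.Nonempty := Finset.card_pos.mp (by omega)
    obtain ⟨a, ha, hmax⟩ := Finset.exists_max_image P (fun a => v a / w a) hne
    obtain ⟨hwa, hwW, hva⟩ := h a ha
    rcases lt_or_ge T (w a) with hlt | hge
    · refine ⟨∅, by simp, by simpa using hT, v a / w a, by positivity, Or.inr ⟨a, ha, by field_simp⟩, ?_⟩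
      rw [Finset.sum_eq_zero, Finset.sum_empty, zero_add]
      · apply mul_nonpos_of_nonneg_of_nonpos (by positivity); linarith
      · intro b hb
        have h1 := hmax b hb
        have hwb := (h b hb).1
        apply max_eq_right
        rw [div_le_iff₀ hwb] at h1
        linarith
    · have hcard : (P.erase a).card = n := by rw [Finset.card_erase_of_mem ha]; omega
      obtain ⟨A, hA, hwA, μ, hμ, hμb, hv⟩ := ih (P.erase a) hcard
        (fun b hb => h b (Finset.mem_of_mem_erase hb)) (T - w a) (by linarith)
      have haA : a ∉ A := fun h => Finset.notMem_erase a P (hA h)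
      have hr : μ * w a ≤ v a := by
        rcases hμb with h0 | ⟨b, hb, hb'⟩
        · rw [h0]; simpa using hva
        · have hbP := Finset.mem_of_mem_erase hb
          have h1 := hmax b hbP
          have hwb := (h b hbP).1
          have : μ = v b / w b := by field_simp; exact hb'
          rw [← this, le_div_iff₀ hwa] at h1
          exact h1
      refine ⟨insert a A, ?_, ?_, μ, hμ, ?_, ?_⟩
      · exact Finset.insert_subset ha (hA.trans (Finset.erase_subset _ _))
      · rw [Finset.sum_insert haA]; linarith
      · rcases hμb with h0 | ⟨b, hb, hb'⟩
        · exact Or.inl h0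
        · exact Or.inr ⟨b, Finset.mem_of_mem_erase hb, hb'⟩
      · rw [Finset.sum_insert haA, ← Finset.add_sum_erase P _ ha, max_eq_left (by linarith)]
        linarith

open Classical in
lemma hinge_ge (P : ℕ → Prop) (z Z : ℝ) (hZ : z ≤ Z) :
    Phi P z ≤ ∑ q ∈ (Finset.Icc 1 ⌊Z⌋₊).filter P, max (z - q) 0 := by
  unfold Phi
  calc _ ≤ ∑ q ∈ (Finset.Icc 1 ⌊z⌋₊).filter P, max (z - q) 0 := Finset.sum_le_sum fun q _ => le_max_left _ _
    _ ≤ _ := by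
      apply Finset.sum_le_sum_of_subset_of_nonneg
      · apply Finset.filter_subset_filter
        apply Finset.Icc_subset_Icc le_rfl
        exact Nat.floor_le_floor hZ
      · intro _ _ _; exact le_max_right _ _

open Classical in
noncomputable def QQ (P : ℕ → Prop) (Z : ℝ) : Finset ℕ := (Finset.Icc 1 ⌊Z⌋₊).filter P
noncomputable def PP (P : ℕ → Prop) (N : ℕ) (Z : ℝ) : Finset (ℕ × ℕ) := Finset.range N ×ˢ QQ P Z
noncomputable def hh (P : ℕ → Prop) (N : ℕ) (Z μ : ℝ) : ℝ :=
  ∑ a ∈ PP P N Z, max (LL a.1 - μ * ((a.2:ℝ) - 1)) 0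

lemma hh_anti (P : ℕ → Prop) (hP : ∀ p, P p → 2 ≤ p) (N : ℕ) (Z μ η : ℝ) (h : μ ≤ η) : hh P N Z η ≤ hh P N Z μ := by
  unfold hh
  apply Finset.sum_le_sum
  intro a ha
  simp only [PP, QQ, Finset.mem_product, Finset.mem_filter] at ha
  have : (2:ℝ) ≤ a.2 := by exact_mod_cast hP _ ha.2.2
  apply max_le_max _ le_rfl
  nlinarith

lemma hh_ge (P : ℕ → Prop) (N : ℕ) (Z μ : ℝ) (hμ : 0 < μ) (hZ : 1 / μ + 1 ≤ Z) :
    ∑ l ∈ Finset.range N, μ * Phi P (LL l / μ + 1) ≤ hh P N Z μ := by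
  unfold hh PP
  rw [Finset.sum_product]
  apply Finset.sum_le_sum
  intro l _
  simp only [max_scale μ hμ]
  rw [← Finset.mul_sum]
  apply mul_le_mul_of_nonneg_left _ hμ.le
  apply hinge_ge
  refine le_trans ?_ hZ
  have := LL_le_one l
  gcongr

set_option maxHeartbeats 1000000 in
lemma hh_low (P : ℕ → Prop) (hΦ : PhiAs P) : ∃ C > 0, ∀ᶠ u : ℝ in Filter.atTop, ∀ μ : ℝ,
    √SS / (8 * exp u) ≤ μ → μ ≤ 2 * √SS / exp u →
    SS / (4 * u * μ) - C * (exp u * (log u / u ^ 2)) ≤ hh P ⌈u ^ 2⌉₊ ((8 / √SS + 1) * exp u) μ := by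
  obtain ⟨C, hC, hw⟩ := window P hΦ
  set s := √SS with hs
  have hs0 : 0 < s := Real.sqrt_pos.mpr SS_pos
  have hS := SS_pos
  refine ⟨8 * (C * SS + 1) / s, by positivity, ?_⟩
  filter_upwards [hw, ev_facts (10 + 4 * s + 8 / s + 4 * C)] with u hwu ⟨h1, h2, h3, h4⟩ μ hμ1 hμ2
  have hi : 0 < 8 / s := by positivity
  set K := 10 + 4 * s + 8 / s + 4 * C with hK
  have hu : 10 ≤ u := by linarith
  have hu0 : 0 < u := by linarith
  set g := log u with hg
  have hg1 : 1 ≤ g := by linarith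
  have hu2 : 10 * u ≤ u ^ 2 := by rw [pow_two]; exact mul_le_mul_of_nonneg_right hu hu0.le
  have hgu : 4 * C * g ≤ u := le_trans (mul_le_mul_of_nonneg_right (by linarith) (by linarith)) h3
  set y := exp u with hy
  have hy0 : 0 < y := exp_pos u
  have hy1 : 1 ≤ y := by
    have : u ≤ exp u := by linarith [Real.add_one_le_exp u]
    linarith
  have hμ0 : 0 < μ := lt_of_lt_of_le (by positivity) hμ1
  have hinv : 1 / μ ≤ 8 / s * y := by
    calc 1 / μ ≤ 1 / (s / (8 * y)) := one_div_le_one_div_of_le (by positivity) hμ1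
      _ = _ := by field_simp
  have hinv2 : y / (2 * s) ≤ 1 / μ := by
    calc y / (2 * s) = 1 / (2 * s / y) := by field_simp
      _ ≤ 1 / μ := one_div_le_one_div_of_le hμ0 hμ2
  have hZ : 1 / μ + 1 ≤ (8 / s + 1) * y := by linarith
  refine le_trans ?_ (hh_ge P ⌈u ^ 2⌉₊ _ μ hμ0 hZ)
  set N := ⌈u ^ 2⌉₊ with hN
  have hN1 : u ^ 2 ≤ N := Nat.le_ceil _
  have hN2 : (N:ℝ) ≤ u ^ 2 + 1 := (Nat.ceil_lt_add_one (by positivity)).le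
  have hNpos : 1 ≤ N := by
    have : (0:ℝ) < N := lt_of_lt_of_le (by positivity) hN1
    exact_mod_cast this
  set E := 1 / (4 * u) - C * (g / u ^ 2) with hE
  have hE0 : 0 ≤ E := by
    have : C * (g / u ^ 2) ≤ 1 / (4 * u) := by
      rw [mul_div_assoc', div_le_div_iff₀ (by positivity) (by positivity)]
      rw [one_mul, show C * g * (4 * u) = 4 * C * g * u by ring, pow_two]
      exact mul_le_mul_of_nonneg_right hgu hu0.le
    linarith
  have hE1 : E ≤ 1 := by
    have e1 : 0 ≤ C * (g / u ^ 2) := by positivity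
    have e2 : 1 / (4 * u) ≤ 1 := by rw [div_le_one (by positivity)]; linarith
    linarith
  have hterm : ∀ l ∈ Finset.range N, E / μ * LL l ^ 2 ≤ μ * Phi P (LL l / μ + 1) := by
    intro l hl
    have hl' : (l:ℝ) + 1 ≤ N := by exact_mod_cast Finset.mem_range.mp hl
    have hp := LL_pos l
    have hL1 := LL_le_one l
    have hL2 : 1 / (2 * u ^ 2) ≤ LL l := by
      refine le_trans ?_ (LL_ge l)
      apply one_div_le_one_div_of_le (by positivity); linarith
    set z := LL l / μ + 1 with hz
    have z1 : y / u ^ 3 ≤ z := by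
      have : y / u ^ 3 ≤ LL l / μ := by
        calc y / u ^ 3 ≤ y / (4 * s * u ^ 2) := by
              apply div_le_div_of_nonneg_left hy0.le (by positivity)
              have : 4 * s ≤ u := by linarith
              rw [show u ^ 3 = u * u ^ 2 by ring]
              exact mul_le_mul_of_nonneg_right this (sq_nonneg u)
          _ = (1 / (2 * u ^ 2)) * (y / (2 * s)) := by field_simp; ring
          _ ≤ LL l * (1 / μ) := by gcongr
          _ = _ := by ring
      linarith
    have z2 : z ≤ y * u ^ 5 := by
      have e1 : LL l / μ ≤ 8 / s * y := by
        calc LL l / μ ≤ 1 / μ := by gcongr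
          _ ≤ _ := hinv
      have e2 : u ≤ u ^ 5 := by
        calc u = u ^ 1 := (pow_one u).symm
          _ ≤ u ^ 5 := pow_le_pow_right₀ (by linarith) (by norm_num)
      have e4 : (8 / s + 1) * y ≤ u * y := mul_le_mul_of_nonneg_right (by linarith) hy0.le
      have e3 : z ≤ y * u := by linarith
      exact e3.trans (by gcongr)
    have h5 := (abs_le.mp (hwu z z1 z2)).1
    have h6 : E * z ^ 2 ≤ Phi P z := by
      have : E * z ^ 2 = z ^ 2 / (4 * u) - C * z ^ 2 * (g / u ^ 2) := by rw [hE]; ring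
      linarith
    calc E / μ * LL l ^ 2 = μ * (E * (LL l / μ) ^ 2) := by field_simp
      _ ≤ μ * (E * z ^ 2) := by
        have : LL l / μ ≤ z := by linarith
        gcongr
      _ ≤ _ := by gcongr
  refine le_trans ?_ (Finset.sum_le_sum hterm)
  rw [← Finset.mul_sum]
  have hs2 : SS - 1 / u ^ 2 ≤ ∑ l ∈ Finset.range N, LL l ^ 2 := by
    have e1 := SS_le N hNpos
    have e2 : 1 / (N:ℝ) ≤ 1 / u ^ 2 := one_div_le_one_div_of_le (by positivity) hN1
    linarith
  have key : SS / (4 * u) - (C * SS + 1) * (g / u ^ 2) ≤ E * ∑ l ∈ Finset.range N, LL l ^ 2 := by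
    calc _ ≤ SS / (4 * u) - C * SS * (g / u ^ 2) - 1 * (1 / u ^ 2) := by
          have : 1 / u ^ 2 ≤ g / u ^ 2 := by gcongr
          linarith
      _ ≤ SS / (4 * u) - C * SS * (g / u ^ 2) - E * (1 / u ^ 2) := by gcongr
      _ = E * (SS - 1 / u ^ 2) := by rw [hE]; ring
      _ ≤ _ := by gcongr
  calc SS / (4 * u * μ) - 8 * (C * SS + 1) / s * (y * (g / u ^ 2))
      = SS / (4 * u * μ) - (8 / s * y) * ((C * SS + 1) * (g / u ^ 2)) := by ring
    _ ≤ SS / (4 * u * μ) - (1 / μ) * ((C * SS + 1) * (g / u ^ 2)) := by gcongr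
    _ = (1 / μ) * (SS / (4 * u) - (C * SS + 1) * (g / u ^ 2)) := by field_simp
    _ ≤ (1 / μ) * (E * ∑ l ∈ Finset.range N, LL l ^ 2) := by gcongr
    _ = _ := by ring

set_option maxHeartbeats 1000000 in
lemma lower_val (P : ℕ → Prop) (hP : ∀ p, P p → 2 ≤ p) (hΦ : PhiAs P) : ∃ C > 0, ∀ᶠ u : ℝ in Filter.atTop,
    ∃ A ⊆ PP P ⌈u ^ 2⌉₊ ((8 / √SS + 1) * exp u),
      ∑ a ∈ A, ((a.2 : ℝ) - 1) ≤ exp u ^ 2 / (u + 5 * log u) ∧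
      √SS * exp u / u - C * (exp u * (log u / u ^ 2)) ≤ ∑ a ∈ A, LL a.1 := by
  obtain ⟨C, hC, hw⟩ := hh_low P hΦ
  set s := √SS with hs
  have hs0 : 0 < s := Real.sqrt_pos.mpr SS_pos
  have hss : s ^ 2 = SS := Real.sq_sqrt SS_pos.le
  set κ := 8 / s + 1 with hκ
  have hκ0 : 0 < κ := by positivity
  refine ⟨C + 10 * s + 2 * s * κ, by positivity, ?_⟩
  filter_upwards [hw, ev_facts (10 + 6 * κ)] with u hwu ⟨h1, h2, h3, h4⟩
  have hu : 10 ≤ u := by linarith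
  have hu0 : 0 < u := by linarith
  set g := log u with hg
  have hg1 : 1 ≤ g := by linarith
  have hgu : 10 * g ≤ u := le_trans (mul_le_mul_of_nonneg_right (by linarith) (by linarith)) h3
  set y := exp u with hy
  have hy0 : 0 < y := exp_pos u
  have hu9 : u ≤ u ^ 9 := by
    calc u = u ^ 1 := (pow_one u).symm
      _ ≤ u ^ 9 := pow_le_pow_right₀ (by linarith) (by norm_num)
  have hyu : 6 * κ * u ≤ y := by
    calc 6 * κ * u ≤ (10 + 6 * κ) * u ^ 9 := by gcongr; linarith
      _ ≤ y := h4
  have hyu2 : u ^ 2 ≤ y := by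
    calc u ^ 2 = 1 * u ^ 2 := by ring
      _ ≤ (10 + 6 * κ) * u ^ 9 := by
        apply mul_le_mul (by linarith) (pow_le_pow_right₀ (by linarith) (by norm_num)) (by positivity) (by linarith)
      _ ≤ y := h4
  have hY1 : 1 ≤ y * (g / u ^ 2) := by
    rw [mul_div_assoc', le_div_iff₀ (by positivity), one_mul]
    exact hyu2.trans (le_mul_of_one_le_right hy0.le hg1)
  set T := y ^ 2 / (u + 5 * g) with hT
  have hT0 : 0 ≤ T := by positivity
  obtain ⟨A, hA, hwA, μ, hμ0, -, hv⟩ := knap (fun a : ℕ × ℕ => LL a.1) (fun a => (a.2:ℝ) - 1) (κ * y) _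
    (PP P ⌈u ^ 2⌉₊ (κ * y)) rfl (by
      intro a ha
      simp only [PP, QQ, Finset.mem_product, Finset.mem_filter, Finset.mem_Icc] at ha
      have h2 : (2:ℝ) ≤ a.2 := by exact_mod_cast hP _ ha.2.2
      have h3 : (a.2:ℝ) ≤ κ * y := (Nat.le_floor_iff' (by omega)).mp ha.2.1.2
      exact ⟨by linarith, by linarith, (LL_pos _).le⟩) T hT0
  refine ⟨A, hA, hwA, le_trans ?_ hv⟩
  change _ ≤ hh P ⌈u ^ 2⌉₊ (κ * y) μ + μ * (T - κ * y)
  have hhn : 0 ≤ hh P ⌈u ^ 2⌉₊ (κ * y) μ := Finset.sum_nonneg fun _ _ => le_max_right _ _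
  have hTW : y ^ 2 / (2 * u) ≤ T - κ * y := by
    have e1 : y ^ 2 / (3 / 2 * u) ≤ T := by
      apply div_le_div_of_nonneg_left (by positivity) (by positivity); linarith
    have e2 : κ * y ≤ y ^ 2 / (6 * u) := by
      rw [le_div_iff₀ (by positivity), show κ * y * (6 * u) = 6 * κ * u * y by ring, pow_two]
      exact mul_le_mul_of_nonneg_right hyu hy0.le
    have e3 : y ^ 2 / (3 / 2 * u) = y ^ 2 / (2 * u) + y ^ 2 / (6 * u) := by field_simp; ring
    linarith
  have hTW0 : 0 ≤ T - κ * y := le_trans (by positivity) hTW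
  have hYY : 0 ≤ y * (g / u ^ 2) := by linarith
  have hpos : 0 ≤ (10 * s + 2 * s * κ) * (y * (g / u ^ 2)) := by positivity
  have hCpos : 0 ≤ C * (y * (g / u ^ 2)) := by positivity
  rcases le_total μ (s / (8 * y)) with hc | hc
  · have h5 := hh_anti P hP ⌈u ^ 2⌉₊ (κ * y) μ _ hc
    have h6 := hwu (s / (8 * y)) le_rfl (by
      rw [div_le_div_iff₀ (by positivity) hy0]; linarith [mul_pos hs0 hy0])
    have e : SS / (4 * u * (s / (8 * y))) = 2 * (s * y / u) := by rw [← hss]; field_simp; ring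
    rw [e] at h6
    have h7 : 0 ≤ μ * (T - κ * y) := by positivity
    have h8 : 0 ≤ s * y / u := by positivity
    linarith
  rcases le_total μ (2 * s / y) with hd | hd
  · have h6 := hwu μ hc hd
    have hμ : 0 < μ := lt_of_lt_of_le (by positivity) hc
    have am : s * y / u ≤ SS / (4 * u * μ) + μ * (y ^ 2 / u) := by
      have : SS / (4 * u * μ) + μ * (y ^ 2 / u) - s * y / u = (s - 2 * μ * y) ^ 2 / (4 * u * μ) := by
        rw [← hss]; field_simp; ring
      have h9 : 0 ≤ (s - 2 * μ * y) ^ 2 / (4 * u * μ) := by positivity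
      linarith
    have hT1 : y ^ 2 / u - 5 * y ^ 2 * (g / u ^ 2) ≤ T := by
      rw [hT, show y ^ 2 / u - 5 * y ^ 2 * (g / u ^ 2) = y ^ 2 * (u - 5 * g) / u ^ 2 by field_simp,
        div_le_div_iff₀ (by positivity) (by positivity)]
      have : (u - 5 * g) * (u + 5 * g) ≤ u ^ 2 := by linarith [sq_nonneg g]
      calc y ^ 2 * (u - 5 * g) * (u + 5 * g) = y ^ 2 * ((u - 5 * g) * (u + 5 * g)) := by ring
        _ ≤ _ := by gcongr
    have h7 : μ * (y ^ 2 / u) - 10 * s * (y * (g / u ^ 2)) ≤ μ * T := by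
      have e1 := mul_le_mul_of_nonneg_left hT1 hμ0
      have e2 : μ * (5 * y ^ 2 * (g / u ^ 2)) ≤ 2 * s / y * (5 * y ^ 2 * (g / u ^ 2)) := by gcongr
      have e3 : 2 * s / y * (5 * y ^ 2 * (g / u ^ 2)) = 10 * s * (y * (g / u ^ 2)) := by field_simp; ring
      linarith
    have h8 : μ * (κ * y) ≤ 2 * s * κ * (y * (g / u ^ 2)) := by
      calc μ * (κ * y) ≤ 2 * s / y * (κ * y) := by gcongr
        _ = 2 * s * κ * 1 := by field_simp
        _ ≤ _ := by gcongr
    linarith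
  · have h7 : s * y / u ≤ μ * (T - κ * y) := by
      calc s * y / u = 2 * s / y * (y ^ 2 / (2 * u)) := by field_simp
        _ ≤ _ := by gcongr
    linarith

end Pf


namespace Pf
open Real

lemma rr_prim_prod (k : ℕ) (hk : k ∈ KKS) {ι : Type*} [DecidableEq ι] (A : Finset ι) (f e : ι → ℕ) :
    Set.InjOn f A → (∀ a ∈ A, Spl k (f a)) →
    rr k ((∏ a ∈ A, f a ^ e a : ℕ) : ℤ) = 2 * ∏ a ∈ A, (e a + 1) := by
  induction A using Finset.induction_on with
  | empty => intro _ _; simp [rr_one k (KKS_two k hk)]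
  | insert a A ha ih =>
    intro hinj hS
    have h1 := ih (hinj.mono (by simp)) (fun b hb => hS b (Finset.mem_insert_of_mem hb))
    have hSa := hS a (Finset.mem_insert_self _ _)
    rw [Finset.prod_insert ha, Finset.prod_insert ha]
    have hnd : ¬ (f a) ∣ ∏ b ∈ A, f b ^ e b := by
      intro hd
      obtain ⟨b, hb, hdb⟩ := (Prime.dvd_finset_prod_iff hSa.1.prime _).mp hd
      have h2 := hSa.1.dvd_of_dvd_pow hdb
      have h3 := (Nat.prime_dvd_prime_iff_eq hSa.1 (hS b (Finset.mem_insert_of_mem hb)).1).mp h2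
      have h4 := hinj (by simp) (by simp [hb]) h3
      exact ha (h4 ▸ hb)
    rw [Nat.cast_mul, Nat.cast_pow]
    rw [(rr_step k hk (f a) hSa.1 _ (fun h => hnd (by exact_mod_cast h)) (e a)).1 hSa, h1]
    ring

lemma fForm_prim_prod (k : ℕ) (hk : k ∈ KKS) {ι : Type*} [DecidableEq ι] (A : Finset ι) (f e : ι → ℕ)
    (hinj : Set.InjOn f A) (hS : ∀ a ∈ A, Spl k (f a)) :
    (∏ a ∈ A, f a ^ e a) ≠ 0 ∧ fForm k (∏ a ∈ A, f a ^ e a) = ∏ a ∈ A, (e a + 1) := by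
  have h0 : (∏ a ∈ A, f a ^ e a) ≠ 0 :=
    Finset.prod_ne_zero_iff.mpr fun a ha => pow_ne_zero _ (hS a ha).1.ne_zero
  refine ⟨h0, ?_⟩
  rw [fForm_eq k _ h0, rr_prim_prod k hk A f e hinj hS]
  omega

lemma sum_LL_le (n : ℕ) : ∀ D : Finset ℕ, D.card = n → ∑ l ∈ D, LL l ≤ ∑ l ∈ Finset.range n, LL l := by
  induction n with
  | zero => intro D hD; rw [Finset.card_eq_zero] at hD; simp [hD]
  | succ n ih =>
    intro D hD
    have hne : D.Nonempty := Finset.card_pos.mp (by omega)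
    set M := D.max' hne with hM
    have hMD : M ∈ D := Finset.max'_mem _ _
    have hle : n ≤ M := by
      have : D ⊆ Finset.range (M + 1) := fun x hx => by
        have := Finset.le_max' D x hx
        simp; omega
      have := Finset.card_le_card this
      simp at this; omega
    rw [← Finset.add_sum_erase D _ hMD, Finset.sum_range_succ]
    have h1 := ih (D.erase M) (by rw [Finset.card_erase_of_mem hMD]; omega)
    have h2 := LL_anti hle
    linarith

lemma construct (k : ℕ) (hk : k ∈ KKS) (A : Finset (ℕ × ℕ)) (hA : ∀ a ∈ A, Spl k a.2) (R : Finset ℕ)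
    (hR : ∀ p ∈ R, Spl k p) (hcard : A.card ≤ R.card) (V : ℝ) (hV : ∀ p ∈ R, log p ≤ V) :
    ∃ n : ℕ, n ≠ 0 ∧ log n ≤ V * ∑ a ∈ A, ((a.2:ℝ) - 1) ∧ ∑ a ∈ A, LL a.1 ≤ log (fForm k (fForm k n)) := by
  classical
  obtain ⟨e⟩ : Nonempty (A ↪ R) := Function.Embedding.nonempty_of_card_le (by simpa using hcard)
  set f : ℕ × ℕ → ℕ := fun a => if h : a ∈ A then (e ⟨a, h⟩ : ℕ) else 0 with hf
  have hfR : ∀ a ∈ A, f a ∈ R := by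
    intro a ha
    simp only [hf, ha, dif_pos]
    exact (e ⟨a, ha⟩).2
  have hinj : Set.InjOn f A := by
    intro a ha b hb hab
    have ha' : a ∈ A := ha
    have hb' : b ∈ A := hb
    simp only [hf, ha', hb', dif_pos] at hab
    have := e.injective (Subtype.ext hab)
    exact congrArg Subtype.val this
  obtain ⟨hn0, hn⟩ := fForm_prim_prod k hk A f (fun a => a.2 - 1) hinj (fun a ha => hR _ (hfR a ha))
  refine ⟨_, hn0, ?_, ?_⟩
  · push_cast
    rw [Real.log_prod (fun a ha => by
      have := (hR _ (hfR a ha)).1.pos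
      positivity), Finset.mul_sum]
    apply Finset.sum_le_sum
    intro a ha
    have h2 := (hA a ha).1.two_le
    rw [Real.log_pow, Nat.cast_sub (by omega), mul_comm]
    have h2' : (2:ℝ) ≤ a.2 := by exact_mod_cast h2
    push_cast
    apply mul_le_mul_of_nonneg_right (hV _ (hfR a ha)); linarith
  · rw [hn]
    have e1 : ∏ a ∈ A, (a.2 - 1 + 1) = ∏ q ∈ A.image Prod.snd, q ^ (A.filter (fun a => a.2 = q)).card := by
      rw [← Finset.prod_comp (fun q => q) Prod.snd]
      apply Finset.prod_congr rfl
      intro a ha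
      have h2 := (hA a ha).1.two_le
      omega
    rw [e1]
    have hS : ∀ q ∈ A.image Prod.snd, Spl k q := by
      intro q hq
      obtain ⟨a, ha, rfl⟩ := Finset.mem_image.mp hq
      exact hA a ha
    rw [(fForm_prim_prod k hk (A.image Prod.snd) (fun q => q) _ (Function.Injective.injOn Function.injective_id) hS).2]
    push_cast
    rw [Real.log_prod (fun _ _ => by positivity),
      ← Finset.sum_fiberwise_of_maps_to (fun a ha => Finset.mem_image_of_mem Prod.snd ha)]
    apply Finset.sum_le_sum
    intro q _
    rw [add_comm, ← sum_LL]
    set F := A.filter (fun a => a.2 = q) with hF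
    have hFi : Set.InjOn Prod.fst (F : Set (ℕ × ℕ)) := by
      intro a ha b hb hab
      have h1 := (Finset.mem_filter.mp ha).2
      have h2 := (Finset.mem_filter.mp hb).2
      exact Prod.ext hab (h1.trans h2.symm)
    have := sum_LL_le _ (F.image Prod.fst) (Finset.card_image_of_injOn hFi)
    rwa [Finset.sum_image hFi] at this

set_option maxHeartbeats 1000000 in
lemma lower_main (k : ℕ) (hk : k ∈ KKS) : ∃ C > 0, ∀ᶠ u : ℝ in Filter.atTop, ∃ n : ℕ, n ≠ 0 ∧
    log n ≤ exp u ^ 2 ∧ √SS * exp u / u - C * (exp u * (log u / u ^ 2)) ≤ log (fForm k (fForm k n)) := by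
  obtain ⟨C, hC, hlow⟩ := lower_val (Spl k) (Spl_two k) (phi_main k hk)
  obtain ⟨C', hC', hw⟩ := window (Spl k) (phi_main k hk)
  set s := √SS with hs
  have hs0 : 0 < s := Real.sqrt_pos.mpr SS_pos
  set κ := 8 / s + 1 with hκ
  have hκ0 : 0 < κ := by positivity
  refine ⟨C, hC, ?_⟩
  filter_upwards [hlow, hw, ev_facts (10 + 16 * κ + 8 * C')] with u ⟨A, hAP, hcost, hval⟩ hwu ⟨h1, h2, h3, h4⟩
  have hu : 10 ≤ u := by linarith
  have hu0 : 0 < u := by linarith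
  set g := log u with hg
  have hg1 : 1 ≤ g := by linarith
  have hgu : 8 * C' * g ≤ u := le_trans (mul_le_mul_of_nonneg_right (by linarith) (by linarith)) h3
  have hu2 : 10 * u ≤ u ^ 2 := by rw [pow_two]; exact mul_le_mul_of_nonneg_right hu hu0.le
  set y := exp u with hy
  have hy0 : 0 < y := exp_pos u
  set Z := y * u ^ 5 with hZ
  have hZ0 : 0 < Z := by positivity
  have hlZ : log Z = u + 5 * g := by
    rw [hZ, Real.log_mul hy0.ne' (by positivity), hy, Real.log_exp, Real.log_pow, ← hg]; norm_num
  have hmemR : ∀ p ∈ QQ (Spl k) Z, Spl k p ∧ (p:ℝ) ≤ Z := by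
    intro p hp
    simp only [QQ, Finset.mem_filter, Finset.mem_Icc] at hp
    exact ⟨hp.2, (Nat.le_floor_iff' (by omega)).mp hp.1.2⟩
  have hcardR : Z / (8 * u) ≤ (QQ (Spl k) Z).card := by
    have e1 : Phi (Spl k) Z ≤ (QQ (Spl k) Z).card * Z := by
      unfold Phi
      calc _ ≤ ∑ p ∈ QQ (Spl k) Z, Z := by
            apply Finset.sum_le_sum
            intro p _
            have : (0:ℝ) ≤ p := by positivity
            linarith
        _ = _ := by simp
    have e2 : Z ^ 2 / (8 * u) ≤ Phi (Spl k) Z := by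
      have h5 := (abs_le.mp (hwu Z (by
        calc y / u ^ 3 ≤ y := div_le_self hy0.le (one_le_pow₀ (by linarith))
          _ ≤ y * u ^ 5 := le_mul_of_one_le_right hy0.le (one_le_pow₀ (by linarith))) le_rfl)).1
      have h6 : C' * Z ^ 2 * (g / u ^ 2) ≤ Z ^ 2 / (8 * u) := by
        rw [mul_div_assoc', div_le_div_iff₀ (by positivity) (by positivity)]
        calc C' * Z ^ 2 * g * (8 * u) = Z ^ 2 * u * (8 * C' * g) := by ring
          _ ≤ Z ^ 2 * u * u := by gcongr
          _ = _ := by ring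
      have h7 : Z ^ 2 / (4 * u) = 2 * (Z ^ 2 / (8 * u)) := by field_simp; ring
      linarith
    have e3 : Z / (8 * u) * Z ≤ (QQ (Spl k) Z).card * Z := by
      calc _ = Z ^ 2 / (8 * u) := by ring
        _ ≤ _ := e2.trans e1
    exact le_of_mul_le_mul_right e3 hZ0
  have hcardA : (A.card : ℝ) ≤ Z / (8 * u) := by
    have e1 : A.card ≤ ⌈u ^ 2⌉₊ * ⌊κ * y⌋₊ := by
      refine (Finset.card_le_card hAP).trans ?_
      rw [PP, Finset.card_product, Finset.card_range]
      apply Nat.mul_le_mul_left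
      unfold QQ
      classical
      refine (Finset.card_le_card (Finset.filter_subset _ _)).trans ?_
      simp
    have e2 : (A.card : ℝ) ≤ (⌈u ^ 2⌉₊ : ℝ) * (⌊κ * y⌋₊ : ℝ) := by exact_mod_cast e1
    have e3 : (⌈u ^ 2⌉₊ : ℝ) ≤ 2 * u ^ 2 := by
      have := (Nat.ceil_lt_add_one (show 0 ≤ u ^ 2 by positivity)).le
      linarith
    have e4 : (⌊κ * y⌋₊ : ℝ) ≤ κ * y := Nat.floor_le (by positivity)
    calc (A.card : ℝ) ≤ 2 * u ^ 2 * (κ * y) := e2.trans (by gcongr)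
      _ = y * u ^ 2 / 8 * (16 * κ) := by ring
      _ ≤ y * u ^ 2 / 8 * (u * u) :=
        mul_le_mul_of_nonneg_left (by linarith) (by positivity)
      _ = Z / (8 * u) := by rw [hZ]; field_simp
  obtain ⟨n, hn0, hn, hv⟩ := construct k hk A (by
      intro a ha
      have := hAP ha
      simp only [PP, QQ, Finset.mem_product, Finset.mem_filter] at this
      exact this.2.2) (QQ (Spl k) Z) (fun p hp => (hmemR p hp).1)
    (by exact_mod_cast hcardA.trans hcardR) (u + 5 * g) (by
      intro p hp
      rw [← hlZ]
      obtain ⟨h5, h6⟩ := hmemR p hp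
      exact Real.log_le_log (by exact_mod_cast h5.1.pos) h6)
  refine ⟨n, hn0, hn.trans ?_, hval.trans hv⟩
  have hd : 0 < u + 5 * g := by linarith
  rw [le_div_iff₀ hd] at hcost
  linarith

end Pf


theorem maxOrder_iterated_form_classNumberOne (k : ℕ)
    (hk : k ∈ ({2, 3, 5, 11, 17, 41} : Set ℕ)) :
    ∃ C : ℝ, 0 < C ∧ ∀ᶠ x : ℕ in atTop,
      |(⨆ n ∈ Finset.Icc 1 x, Real.log (fForm k (fForm k n))) -
          Real.sqrt (Real.log x) / Real.log (Real.log x) * (cBEFS / Real.sqrt 2)| ≤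
        C * (Real.sqrt (Real.log x) / Real.log (Real.log x)) *
          (Real.log (Real.log (Real.log x)) / Real.log (Real.log x)) := by
  obtain ⟨C1, hC1, hup⟩ := Pf.upper_main k hk
  obtain ⟨C2, hC2, hlo⟩ := Pf.lower_main k hk
  have htend : Tendsto (fun x : ℕ => Real.log (Real.log (x : ℝ)) / 2) atTop atTop := by
    apply Tendsto.atTop_div_const (by norm_num)
    exact Real.tendsto_log_atTop.comp (Real.tendsto_log_atTop.comp tendsto_natCast_atTop_atTop)
  have hc : cBEFS / Real.sqrt 2 = 2 * Real.sqrt Pf.SS := by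
    have h8 : cBEFS = Real.sqrt (8 * Pf.SS) := rfl
    rw [h8, ← Real.sqrt_div (by have := Pf.SS_pos; positivity)]
    rw [show 8 * Pf.SS / 2 = 2 ^ 2 * Pf.SS by ring, Real.sqrt_mul (by norm_num),
      Real.sqrt_sq (by norm_num)]
  refine ⟨4 * (C1 + C2), by positivity, ?_⟩
  filter_upwards [htend.eventually hup, htend.eventually hlo,
    htend.eventually (Filter.eventually_ge_atTop 10), Filter.eventually_ge_atTop 3]
    with x hupx hlox hu10 hx3
  set u := Real.log (Real.log (x : ℝ)) / 2 with hu
  have hx1 : (1 : ℝ) < x := by exact_mod_cast (by omega : 1 < x)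
  have hL0 : 0 < Real.log (x : ℝ) := Real.log_pos hx1
  have hu2 : Real.log (Real.log (x : ℝ)) = 2 * u := by rw [hu]; ring
  have hy : Real.exp u ^ 2 = Real.log (x : ℝ) := by
    rw [← Real.exp_nat_mul, Nat.cast_two, ← hu2, Real.exp_log hL0]
  have hsq : Real.sqrt (Real.log (x : ℝ)) = Real.exp u := by
    rw [← hy, Real.sqrt_sq (Real.exp_pos _).le]
  rw [hc, hsq, hu2]
  rw [hy] at hupx hlox
  have hupper : ∀ n ∈ Finset.Icc 1 x, Real.log (fForm k (fForm k n)) ≤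
      Real.sqrt Pf.SS * Real.exp u / u + C1 * (Real.exp u * (Real.log u / u ^ 2)) := by
    intro n hn
    rw [Finset.mem_Icc] at hn
    refine hupx n (by omega) (Real.log_le_log (by exact_mod_cast hn.1) (by exact_mod_cast hn.2))
  have hlu : 0 ≤ Real.log u := Real.log_nonneg (by linarith)
  have hu0 : 0 < u := by linarith
  have hB0 : 0 ≤ Real.sqrt Pf.SS * Real.exp u / u + C1 * (Real.exp u * (Real.log u / u ^ 2)) := by
    positivity
  have hin : ∀ n : ℕ, (⨆ _ : n ∈ Finset.Icc 1 x, Real.log (fForm k (fForm k n))) ≤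
      Real.sqrt Pf.SS * Real.exp u / u + C1 * (Real.exp u * (Real.log u / u ^ 2)) :=
    fun n => Real.iSup_le (hupper n) hB0
  have hS1 : (⨆ n ∈ Finset.Icc 1 x, Real.log (fForm k (fForm k n))) ≤
      Real.sqrt Pf.SS * Real.exp u / u + C1 * (Real.exp u * (Real.log u / u ^ 2)) :=
    Real.iSup_le hin hB0
  have hS2 : Real.sqrt Pf.SS * Real.exp u / u - C2 * (Real.exp u * (Real.log u / u ^ 2)) ≤
      (⨆ n ∈ Finset.Icc 1 x, Real.log (fForm k (fForm k n))) := by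
    obtain ⟨n, hn0, hn, hv⟩ := hlox
    have hmem : n ∈ Finset.Icc 1 x := by
      rw [Finset.mem_Icc]
      refine ⟨by omega, ?_⟩
      have hn1 : (0 : ℝ) < n := by exact_mod_cast Nat.pos_of_ne_zero hn0
      have := (Real.log_le_log_iff hn1 (by linarith)).mp hn
      exact_mod_cast this
    refine le_ciSup_of_le ⟨_, by rintro _ ⟨m, rfl⟩; exact hin m⟩ n ?_
    rw [ciSup_pos hmem]
    exact hv
  have hlog2 : Real.log u ≤ Real.log (2 * u) := Real.log_le_log hu0 (by linarith)
  have hm : Real.exp u / (2 * u) * (2 * Real.sqrt Pf.SS) = Real.sqrt Pf.SS * Real.exp u / u := by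
    field_simp
  have he : (C1 + C2) * (Real.exp u * (Real.log u / u ^ 2)) ≤
      4 * (C1 + C2) * (Real.exp u / (2 * u)) * (Real.log (2 * u) / (2 * u)) := by
    calc _ ≤ (C1 + C2) * (Real.exp u * (Real.log (2 * u) / u ^ 2)) := by gcongr
      _ = _ := by field_simp; ring
  have hw : 0 ≤ Real.exp u * (Real.log u / u ^ 2) := by positivity
  rw [hm, abs_le]
  constructor <;> linarith [mul_nonneg hC1.le hw, mul_nonneg hC2.le hw]
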